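/- Let N ≥ 3, 2* = 2N/(N−2), q ∈ (1, 2*−1), β > 0, and let a, b satisfy (a₁), (b₁), (a₂); fix Ω'_Γ, ν₀ > 0, and f, g, G as above, and let S = inf{ ∫_{ℝ^N} K(|∇u|² + u²) dx : u smooth compactly supported, ∫_{ℝ^N} K|u|^{2*} dx = 1 }. Fix λ ≥ 1 and c ∈ (0, (1/2 − 1/(q+1)) S^{N/2}). Let {u_n} be a sequence of nonnegative continuously differentiable functions on ℝ^N with ‖u_n‖_{K,λ} < ∞ such that Φ_λ(u_n) → c and there exist ε_n → 0 with |⟨Φ'_λ(u_n), φ⟩| ≤ ε_n ‖φ‖_{K,λ} for every n and every continuously differentiable φ with ‖φ‖_{K,λ} < ∞. Then {u_n} has a subsequence that is Cauchy with respect to the norm ‖·‖_{K,λ} (i.e. the subsequence converges strongly in H^1_{K,λ}(ℝ^N)). -/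

import Mathlib

open MeasureTheory Real Filter Topology RealInnerProductSpace

noncomputable section

abbrev En (N : ℕ) := EuclideanSpace ℝ (Fin N)

/-- The weight `K(x) = exp(|x|²/4)`. -/
def Kw {N : ℕ} (x : En N) : ℝ := Real.exp (‖x‖ ^ 2 / 4)

/-- The Laplacian `Δu(x) = ∑ᵢ ∂²u/∂xᵢ²(x)`. -/
def lap {N : ℕ} (u : En N → ℝ) (x : En N) : ℝ :=
  ∑ i : Fin N, fderiv ℝ (fun y => fderiv ℝ u y (EuclideanSpace.single i (1:ℝ))) x
    (EuclideanSpace.single i (1:ℝ))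

/-- The critical Sobolev exponent `2* = 2N/(N−2)`. -/
def twoStar (N : ℕ) : ℝ := 2 * N / ((N : ℝ) - 2)

/-- `h(t) = βt^q + t^{p−1}` for `t ≥ 0`, `h(t) = 0` for `t ≤ 0` (with `p = 2*`). -/
def hfun (q p β : ℝ) (t : ℝ) : ℝ := if t ≤ 0 then 0 else β * t ^ q + t ^ (p - 1)

/-- The truncation `f` of `h`: `f = h` on `[0,ρ]`, `f(t) = ν₀t` for `t ≥ ρ`, `f = 0` on `(-∞,0]`. -/
def ffun (q p β ν₀ ρ : ℝ) (t : ℝ) : ℝ :=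
  if t ≤ 0 then 0 else if t ≤ ρ then β * t ^ q + t ^ (p - 1) else ν₀ * t

/-- `H(t) = ∫₀^t h`. -/
def Hfun (q p β : ℝ) (t : ℝ) : ℝ := ∫ τ in (0:ℝ)..t, hfun q p β τ

/-- `F(t) = ∫₀^t f`. -/
def Ffun (q p β ν₀ ρ : ℝ) (t : ℝ) : ℝ := ∫ τ in (0:ℝ)..t, ffun q p β ν₀ ρ τ

-- `g(x,t) = h(t)` for `x ∈ Ω'_Γ`, `g(x,t) = f(t)` otherwise.
open Classical in
def gfun {N : ℕ} (q p β ν₀ ρ : ℝ) (Ω' : Set (En N)) (x : En N) (t : ℝ) : ℝ :=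
  if x ∈ Ω' then hfun q p β t else ffun q p β ν₀ ρ t

-- `G(x,t) = H(t)` for `x ∈ Ω'_Γ`, `G(x,t) = F(t)` otherwise.
open Classical in
def Gfun {N : ℕ} (q p β ν₀ ρ : ℝ) (Ω' : Set (En N)) (x : En N) (t : ℝ) : ℝ :=
  if x ∈ Ω' then Hfun q p β t else Ffun q p β ν₀ ρ t

/-- The squared norm `‖u‖²_{K,λ} = ∫ K(|∇u|² + (λa+b)u²)`. -/
def nrmSq {N : ℕ} (lam : ℝ) (a b : En N → ℝ) (u : En N → ℝ) : ℝ :=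
  ∫ x, Kw x * (‖gradient u x‖ ^ 2 + (lam * a x + b x) * u x ^ 2)

/-- The modified functional
`Φ_λ(u) = (1/2)∫ K(|∇u|² + (λa+b)u²) − ∫ K G(x,u)`. -/
def Phi {N : ℕ} (q p β ν₀ ρ lam : ℝ) (a b : En N → ℝ) (Ω' : Set (En N)) (u : En N → ℝ) : ℝ :=
  (1/2) * nrmSq lam a b u - ∫ x, Kw x * Gfun q p β ν₀ ρ Ω' x (u x)

/-- The pairing `⟨Φ'_λ(u), φ⟩ = ∫ K(∇u·∇φ + (λa+b)uφ) − ∫ K g(x,u)φ`. -/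
def PhiD {N : ℕ} (q p β ν₀ ρ lam : ℝ) (a b : En N → ℝ) (Ω' : Set (En N)) (u φ : En N → ℝ) : ℝ :=
  (∫ x, Kw x * (⟪gradient u x, gradient φ x⟫ + (lam * a x + b x) * u x * φ x))
    - ∫ x, Kw x * gfun q p β ν₀ ρ Ω' x (u x) * φ x

/-- The best constant `S` of the embedding `H_K^1(ℝ^N) ↪ L_K^{2*}(ℝ^N)`. -/
def Sconst (N : ℕ) : ℝ :=
  sInf {y : ℝ | ∃ u : En N → ℝ, ContDiff ℝ (⊤ : ℕ∞) u ∧ HasCompactSupport u ∧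
    (∫ x, Kw x * |u x| ^ twoStar N) = 1 ∧
    y = ∫ x, Kw x * (‖gradient u x‖ ^ 2 + u x ^ 2)}

/-! The infimum defining `S` extends from test functions to the Sobolev inequality
`S (∫ K|v|^{2*})^{2/2*} ≤ ∫ K(|∇v|² + v²)` for every `C¹` function `v` of finite energy; here
`S > 0` because the range of `c` is nonempty. A weighted Hardy inequality controls `∫ K|x|²v²` by
the energy, so energy-bounded sequences are tight and have subsequences that are Cauchy in `L²(K)`.

*Boundedness.* The primitive `F` only satisfies the quadratic inequality `F ≤ f t / 2`, so the usual
Ambrosetti–Rabinowitz argument bounds nothing outside `Ω'_Γ`. If the energies were unbounded, the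
normalised `vₙ` would have vanishing `L²` mass on `Ω'_Γ`. As `g ≥ 0`, they are almost
supersolutions, and the logarithmic estimate for supersolutions spreads this smallness to every
compact set; by tightness `vₙ → 0` in `L²(K)`, and since `g ≤ ν₀ t` outside `Ω'_Γ` the equation then
contradicts `‖vₙ‖ = 1`.

*Compactness.* The bound on `c` gives `∫_{Ω'_Γ} K u^{2*} < S^{N/2}` in the limit. Below this level
the Sobolev inequality absorbs the critical term when the equation is tested with `u` times a
bounded increasing function of `u`, which makes `u^{2*}` uniformly integrable on `Ω'_Γ`. Testing the
difference of two equations with `uₘ - uₙ` then reduces energy convergence to `L²(K)` convergence.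
-/

section Gradient

variable {E : Type*} [NormedAddCommGroup E] [InnerProductSpace ℝ E] [CompleteSpace E]
  {u v : E → ℝ} {x : E}

lemma norm_gradient (u : E → ℝ) (x : E) : ‖gradient u x‖ = ‖fderiv ℝ u x‖ :=
  LinearIsometryEquiv.norm_map _ _

lemma continuous_gradient (hu : ContDiff ℝ 1 u) : Continuous (gradient u) :=
  (LinearIsometryEquiv.continuous _).comp (hu.continuous_fderiv one_ne_zero)

lemma gradient_scomp {ψ : ℝ → ℝ} {ψ' : ℝ} (hψ : HasDerivAt ψ ψ' (u x))
    (hu : DifferentiableAt ℝ u x) : gradient (fun y => ψ (u y)) x = ψ' • gradient u x := by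
  refine HasGradientAt.gradient (hasGradientAt_iff_hasFDerivAt.2 ?_)
  refine (hψ.comp_hasFDerivAt x hu.hasGradientAt.hasFDerivAt).congr_fderiv ?_
  simp

lemma gradient_mul (hu : DifferentiableAt ℝ u x) (hv : DifferentiableAt ℝ v x) :
    gradient (fun y => u y * v y) x = u x • gradient v x + v x • gradient u x := by
  refine HasGradientAt.gradient (hasGradientAt_iff_hasFDerivAt.2 ?_)
  refine (hu.hasGradientAt.hasFDerivAt.mul hv.hasGradientAt.hasFDerivAt).congr_fderiv ?_
  simp

lemma gradient_sub (hu : DifferentiableAt ℝ u x) (hv : DifferentiableAt ℝ v x) :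
    gradient (fun y => u y - v y) x = gradient u x - gradient v x := by
  refine HasGradientAt.gradient (hasGradientAt_iff_hasFDerivAt.2 ?_)
  refine (hu.hasGradientAt.hasFDerivAt.sub hv.hasGradientAt.hasFDerivAt).congr_fderiv ?_
  simp

lemma gradient_const_mul (c : ℝ) (hu : DifferentiableAt ℝ u x) :
    gradient (fun y => c * u y) x = c • gradient u x :=
  gradient_scomp (by simpa using (hasDerivAt_id (u x)).const_mul c) hu

lemma gradient_eq_zero_of_notMem_tsupport (hx : x ∉ tsupport u) : gradient u x = 0 := by
  rw [(notMem_tsupport_iff_eventuallyEq.1 hx).gradient_eq]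
  exact gradient_const x 0

lemma hasCompactSupport_gradient (hu : HasCompactSupport u) : HasCompactSupport (gradient u) :=
  HasCompactSupport.intro hu fun _ => gradient_eq_zero_of_notMem_tsupport

end Gradient

/-- The Dirichlet energy density `‖∇u‖² + V u²` with potential `V`. -/
def energyDensity {E : Type*} [NormedAddCommGroup E] [InnerProductSpace ℝ E] [CompleteSpace E]
    (V u : E → ℝ) (x : E) : ℝ :=
  ‖gradient u x‖ ^ 2 + V x * u x ^ 2

/-- The squared weighted norm `∫ (‖∇u‖² + V u²) dμ`; for `V = 1` it is the squared norm of
`H¹(μ)`. -/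
def energy {E : Type*} [NormedAddCommGroup E] [InnerProductSpace ℝ E] [CompleteSpace E]
    [MeasurableSpace E] (μ : Measure E) (V u : E → ℝ) : ℝ :=
  ∫ x, energyDensity V u x ∂μ

/-- The bilinear form `∫ (∇u · ∇φ + V u φ) dμ` polarizing `energy μ V`. -/
def energyForm {E : Type*} [NormedAddCommGroup E] [InnerProductSpace ℝ E] [CompleteSpace E]
    [MeasurableSpace E] (μ : Measure E) (V u φ : E → ℝ) : ℝ :=
  ∫ x, (⟪gradient u x, gradient φ x⟫ + V x * u x * φ x) ∂μ

/-- `MemH1 μ V u` says that `u` is a `C¹` function of finite energy: an element of the `C¹` core of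
the weighted Sobolev space with potential `V`. -/
structure MemH1 {E : Type*} [NormedAddCommGroup E] [InnerProductSpace ℝ E] [CompleteSpace E]
    [MeasurableSpace E] (μ : Measure E) (V u : E → ℝ) : Prop where
  contDiff : ContDiff ℝ 1 u
  integrable : Integrable (energyDensity V u) μ

section Energy

variable {E : Type*} [NormedAddCommGroup E] [InnerProductSpace ℝ E] [CompleteSpace E]
  {V u v : E → ℝ} {x : E}

lemma energyDensity_nonneg (hV : 0 ≤ V x) (u : E → ℝ) : 0 ≤ energyDensity V u x := by
  unfold energyDensity; positivity

lemma sq_le_energyDensity_one (u : E → ℝ) (x : E) : u x ^ 2 ≤ energyDensity 1 u x := by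
  simp [energyDensity]

lemma continuous_energyDensity (hV : Continuous V) (hu : ContDiff ℝ 1 u) :
    Continuous (energyDensity V u) :=
  ((continuous_gradient hu).norm.pow 2).add (hV.mul (hu.continuous.pow 2))

lemma energyDensity_const_mul (V : E → ℝ) (c : ℝ) (hu : DifferentiableAt ℝ u x) :
    energyDensity V (fun y => c * u y) x = c ^ 2 * energyDensity V u x := by
  simp only [energyDensity]
  rw [gradient_const_mul c hu, norm_smul, mul_pow, Real.norm_eq_abs, sq_abs]
  ring

lemma energyDensity_scomp_le (hV : 0 ≤ V x) {ψ : ℝ → ℝ} {ψ' C : ℝ}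
    (hu : DifferentiableAt ℝ u x) (hψ : HasDerivAt ψ ψ' (u x)) (hψ' : |ψ'| ≤ C)
    (hψC : |ψ (u x)| ≤ C * |u x|) :
    energyDensity V (fun y => ψ (u y)) x ≤ C ^ 2 * energyDensity V u x := by
  have hval : ψ (u x) ^ 2 ≤ C ^ 2 * u x ^ 2 := by
    rw [← sq_abs (ψ (u x)), ← sq_abs (u x), ← mul_pow]
    gcongr
  have hderiv : |ψ'| ^ 2 ≤ C ^ 2 := by gcongr
  simp only [energyDensity]
  rw [gradient_scomp hψ hu, norm_smul, mul_pow, Real.norm_eq_abs]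
  calc |ψ'| ^ 2 * ‖gradient u x‖ ^ 2 + V x * ψ (u x) ^ 2
      ≤ C ^ 2 * ‖gradient u x‖ ^ 2 + V x * (C ^ 2 * u x ^ 2) := by gcongr
    _ = C ^ 2 * (‖gradient u x‖ ^ 2 + V x * u x ^ 2) := by ring

lemma energyDensity_sub_le (hV : 0 ≤ V x) (hu : DifferentiableAt ℝ u x)
    (hv : DifferentiableAt ℝ v x) :
    energyDensity V (fun y => u y - v y) x ≤ 2 * energyDensity V u x + 2 * energyDensity V v x := by
  simp only [energyDensity]
  rw [gradient_sub hu hv]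
  have hpar := parallelogram_law_with_norm ℝ (gradient u x) (gradient v x)
  nlinarith [mul_nonneg hV (sq_nonneg (u x + v x)),
    mul_self_nonneg ‖gradient u x + gradient v x‖]

lemma energyDensity_one_le {m : ℝ} (hm : 0 < m) (hV : m ≤ V x) (u : E → ℝ) :
    energyDensity 1 u x ≤ (1 + m⁻¹) * energyDensity V u x := by
  have hsq : u x ^ 2 ≤ m⁻¹ * (V x * u x ^ 2) := by
    rw [le_inv_mul_iff₀ hm]
    gcongr
  have hV0 : 0 ≤ V x := hm.le.trans hV
  simp only [energyDensity, Pi.one_apply, one_mul]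
  have : 0 ≤ m⁻¹ * ‖gradient u x‖ ^ 2 + V x * u x ^ 2 := by positivity
  linarith

end Energy

section FiniteEnergy

variable {E : Type*} [NormedAddCommGroup E] [InnerProductSpace ℝ E] [CompleteSpace E]
  [MeasurableSpace E] {μ ν : Measure E} {V u v φ : E → ℝ}

lemma energy_nonneg (hV : 0 ≤ V) (u : E → ℝ) : 0 ≤ energy μ V u :=
  integral_nonneg fun x => energyDensity_nonneg (hV x) u

lemma MemH1.mono_measure (hν : ν ≤ μ) (hu : MemH1 μ V u) : MemH1 ν V u :=
  ⟨hu.contDiff, hu.integrable.mono_measure hν⟩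

lemma energy_mono_measure (hν : ν ≤ μ) (hV : 0 ≤ V) (hu : MemH1 μ V u) :
    energy ν V u ≤ energy μ V u :=
  integral_mono_measure hν (Eventually.of_forall fun x => energyDensity_nonneg (hV x) u)
    hu.integrable

lemma energyForm_self (μ : Measure E) (V u : E → ℝ) : energyForm μ V u u = energy μ V u := by
  refine integral_congr_ae (Eventually.of_forall fun x => ?_)
  simp only [energyDensity, real_inner_self_eq_norm_sq]
  ring

lemma MemH1.const_mul (hu : MemH1 μ V u) (c : ℝ) : MemH1 μ V (fun x => c * u x) where
  contDiff := contDiff_const.mul hu.contDiff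
  integrable := (hu.integrable.const_mul (c ^ 2)).congr <| Eventually.of_forall fun x =>
    (energyDensity_const_mul V c (hu.contDiff.differentiable one_ne_zero x)).symm

lemma energy_const_mul (μ : Measure E) (V : E → ℝ) (c : ℝ) (hu : ContDiff ℝ 1 u) :
    energy μ V (fun x => c * u x) = c ^ 2 * energy μ V u := by
  unfold energy
  rw [← integral_const_mul]
  exact integral_congr_ae <| Eventually.of_forall fun x =>
    energyDensity_const_mul V c (hu.differentiable one_ne_zero x)

variable [BorelSpace E]

lemma MemH1.of_energyDensity_le (hV : Continuous V) (hV0 : 0 ≤ V) (hv : ContDiff ℝ 1 v)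
    {F : E → ℝ} (hF : Integrable F μ) (hle : ∀ x, energyDensity V v x ≤ F x) : MemH1 μ V v where
  contDiff := hv
  integrable := hF.mono' (continuous_energyDensity hV hv).aestronglyMeasurable <|
    Eventually.of_forall fun x => by
      rw [Real.norm_of_nonneg (energyDensity_nonneg (hV0 x) v)]
      exact hle x

lemma MemH1.integrable_norm_gradient_sq (hV0 : 0 ≤ V) (hu : MemH1 μ V u) :
    Integrable (fun x => ‖gradient u x‖ ^ 2) μ :=
  hu.integrable.mono' ((continuous_gradient hu.contDiff).norm.pow 2).aestronglyMeasurable <|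
    Eventually.of_forall fun x => by
      rw [Real.norm_of_nonneg (by positivity)]
      exact le_add_of_nonneg_right (mul_nonneg (hV0 x) (sq_nonneg _))

lemma MemH1.integrable_sq (hu : MemH1 μ 1 u) : Integrable (fun x => u x ^ 2) μ :=
  hu.integrable.mono' (hu.contDiff.continuous.pow 2).aestronglyMeasurable <|
    Eventually.of_forall fun x => by
      rw [Real.norm_of_nonneg (by positivity)]
      exact sq_le_energyDensity_one u x

lemma MemH1.integral_sq_le (hu : MemH1 μ 1 u) : ∫ x, u x ^ 2 ∂μ ≤ energy μ 1 u :=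
  integral_mono hu.integrable_sq hu.integrable (sq_le_energyDensity_one u)

lemma MemH1.integrable_mul (hu : MemH1 μ 1 u) (hv : MemH1 μ 1 v) :
    Integrable (fun x => u x * v x) μ :=
  (hu.integrable_sq.add hv.integrable_sq).mono'
    (hu.contDiff.continuous.mul hv.contDiff.continuous).aestronglyMeasurable <|
    Eventually.of_forall fun x => by
      simp only [Pi.add_apply, Real.norm_eq_abs]
      exact abs_le.2 ⟨by nlinarith [sq_nonneg (u x + v x)], by nlinarith [sq_nonneg (u x - v x)]⟩

lemma MemH1.one {m : ℝ} (hm : 0 < m) (hV : ∀ x, m ≤ V x) (hu : MemH1 μ V u) : MemH1 μ 1 u :=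
  .of_energyDensity_le continuous_one zero_le_one hu.contDiff
    (hu.integrable.const_mul (1 + m⁻¹)) fun x => energyDensity_one_le hm (hV x) u

lemma energy_one_le {m : ℝ} (hm : 0 < m) (hV : ∀ x, m ≤ V x) (hu : MemH1 μ V u) :
    energy μ 1 u ≤ (1 + m⁻¹) * energy μ V u := by
  unfold energy
  rw [← integral_const_mul]
  exact integral_mono (hu.one hm hV).integrable (hu.integrable.const_mul _) fun x =>
    energyDensity_one_le hm (hV x) u

lemma MemH1.of_hasCompactSupport [IsFiniteMeasureOnCompacts μ] (hV : Continuous V)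
    (hu : ContDiff ℝ 1 u) (hs : HasCompactSupport u) : MemH1 μ V u where
  contDiff := hu
  integrable := (continuous_energyDensity hV hu).integrable_of_hasCompactSupport <|
    HasCompactSupport.intro hs fun x hx => by
      simp [energyDensity, gradient_eq_zero_of_notMem_tsupport hx,
        image_eq_zero_of_notMem_tsupport hx]

section Potential

variable (hV : Continuous V) (hV0 : 0 ≤ V)
include hV hV0

lemma MemH1.sub (hu : MemH1 μ V u) (hv : MemH1 μ V v) : MemH1 μ V (fun x => u x - v x) :=
  .of_energyDensity_le hV hV0 (hu.contDiff.sub hv.contDiff)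
    ((hu.integrable.const_mul 2).add (hv.integrable.const_mul 2)) fun x =>
      energyDensity_sub_le (hV0 x) (hu.contDiff.differentiable one_ne_zero x)
        (hv.contDiff.differentiable one_ne_zero x)

lemma energy_sub_le (hu : MemH1 μ V u) (hv : MemH1 μ V v) :
    energy μ V (fun x => u x - v x) ≤ 2 * energy μ V u + 2 * energy μ V v := by
  unfold energy
  rw [← integral_const_mul, ← integral_const_mul,
    ← integral_add (hu.integrable.const_mul 2) (hv.integrable.const_mul 2)]
  exact integral_mono (hu.sub hV hV0 hv).integrable
    ((hu.integrable.const_mul 2).add (hv.integrable.const_mul 2)) fun x =>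
      energyDensity_sub_le (hV0 x) (hu.contDiff.differentiable one_ne_zero x)
        (hv.contDiff.differentiable one_ne_zero x)

lemma MemH1.scomp {ψ ψ' : ℝ → ℝ} {C : ℝ} (hu : MemH1 μ V u)
    (hψu : ContDiff ℝ 1 (fun x => ψ (u x))) (hψ : ∀ x, HasDerivAt ψ (ψ' (u x)) (u x))
    (hψ' : ∀ x, |ψ' (u x)| ≤ C) (hψC : ∀ x, |ψ (u x)| ≤ C * |u x|) :
    MemH1 μ V (fun x => ψ (u x)) :=
  .of_energyDensity_le hV hV0 hψu (hu.integrable.const_mul (C ^ 2)) fun x =>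
    energyDensity_scomp_le (hV0 x) (hu.contDiff.differentiable one_ne_zero x) (hψ x) (hψ' x) (hψC x)

lemma energy_scomp_le {ψ ψ' : ℝ → ℝ} {C : ℝ} (hu : MemH1 μ V u)
    (hψu : ContDiff ℝ 1 (fun x => ψ (u x))) (hψ : ∀ x, HasDerivAt ψ (ψ' (u x)) (u x))
    (hψ' : ∀ x, |ψ' (u x)| ≤ C) (hψC : ∀ x, |ψ (u x)| ≤ C * |u x|) :
    energy μ V (fun x => ψ (u x)) ≤ C ^ 2 * energy μ V u := by
  unfold energy
  rw [← integral_const_mul]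
  exact integral_mono (hu.scomp hV hV0 hψu hψ hψ' hψC).integrable (hu.integrable.const_mul _)
    fun x => energyDensity_scomp_le (hV0 x) (hu.contDiff.differentiable one_ne_zero x) (hψ x)
      (hψ' x) (hψC x)

lemma MemH1.integrable_energyForm (hu : MemH1 μ V u) (hφ : MemH1 μ V φ) :
    Integrable (fun x => ⟪gradient u x, gradient φ x⟫ + V x * u x * φ x) μ := by
  have hmeas : Continuous fun x => ⟪gradient u x, gradient φ x⟫ + V x * u x * φ x :=
    ((continuous_gradient hu.contDiff).inner (continuous_gradient hφ.contDiff)).add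
      ((hV.mul hu.contDiff.continuous).mul hφ.contDiff.continuous)
  refine (hu.integrable.add hφ.integrable).mono' hmeas.aestronglyMeasurable
    (Eventually.of_forall fun x => ?_)
  have hinner := abs_le.1 (abs_real_inner_le_norm (gradient u x) (gradient φ x))
  simp only [Pi.add_apply, energyDensity, Real.norm_eq_abs]
  refine abs_le.2 ⟨?_, ?_⟩
  · nlinarith [sq_nonneg (‖gradient u x‖ - ‖gradient φ x‖), sq_nonneg ‖gradient u x‖,
      sq_nonneg ‖gradient φ x‖, mul_nonneg (hV0 x) (sq_nonneg (u x + φ x)),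
      mul_nonneg (hV0 x) (sq_nonneg (u x)), mul_nonneg (hV0 x) (sq_nonneg (φ x))]
  · nlinarith [sq_nonneg (‖gradient u x‖ - ‖gradient φ x‖), sq_nonneg ‖gradient u x‖,
      sq_nonneg ‖gradient φ x‖, mul_nonneg (hV0 x) (sq_nonneg (u x - φ x)),
      mul_nonneg (hV0 x) (sq_nonneg (u x)), mul_nonneg (hV0 x) (sq_nonneg (φ x))]

end Potential

end FiniteEnergy

lemma tendsto_integral_of_bounded_of_support_subset {X : Type*} [TopologicalSpace X] [T2Space X]
    [MeasurableSpace X] [OpensMeasurableSpace X] {μ : Measure X} [IsFiniteMeasureOnCompacts μ]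
    {f : ℕ → X → ℝ} {g : X → ℝ} {D : Set X} {B : ℝ} (hD : IsCompact D)
    (hf : ∀ k, Continuous (f k)) (hB : ∀ k x, |f k x| ≤ B) (hsupp : ∀ k, ∀ x ∉ D, f k x = 0)
    (hlim : ∀ x, Tendsto (fun k => f k x) atTop (𝓝 (g x))) :
    Tendsto (fun k => ∫ x, f k x ∂μ) atTop (𝓝 (∫ x, g x ∂μ)) := by
  refine tendsto_integral_of_dominated_convergence (D.indicator fun _ => B)
    (fun k => (hf k).aestronglyMeasurable)
    ((integrable_indicator_iff hD.measurableSet).2 (integrableOn_const hD.measure_lt_top.ne))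
    (fun k => Eventually.of_forall fun x => ?_) (Eventually.of_forall hlim)
  by_cases hx : x ∈ D
  · simpa [hx] using hB k x
  · simp [hx, hsupp k x hx]

section Approximation

variable {E : Type*} [NormedAddCommGroup E] [InnerProductSpace ℝ E] [FiniteDimensional ℝ E]

lemma norm_gradient_comp_smul (η : E → ℝ) {c : ℝ} (hc : 0 ≤ c) (x : E) :
    ‖gradient (fun y => η (c • y)) x‖ = c * ‖gradient η (c • x)‖ := by
  rw [norm_gradient, norm_gradient, fderiv_comp_smul, norm_smul, Real.norm_of_nonneg hc]

lemma exists_cutoff_seq (E : Type*) [NormedAddCommGroup E] [InnerProductSpace ℝ E]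
    [FiniteDimensional ℝ E] : ∃ C : ℝ, 0 ≤ C ∧ ∃ χ : ℕ → E → ℝ, ∀ n, ContDiff ℝ 1 (χ n) ∧
      HasCompactSupport (χ n) ∧ (∀ x, χ n x ∈ Set.Icc 0 1) ∧
      (∀ x, ‖x‖ ≤ n + 1 → χ n x = 1) ∧ ∀ x, ‖gradient (χ n) x‖ ≤ C / (n + 1) := by
  let η : ContDiffBump (0 : E) := ⟨1, 2, one_pos, one_lt_two⟩
  have hη : ContDiff ℝ 1 η := η.contDiff
  obtain ⟨C, hC⟩ := (continuous_gradient hη).bounded_above_of_compact_support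
    (hasCompactSupport_gradient η.hasCompactSupport)
  refine ⟨C, (norm_nonneg _).trans (hC 0), fun n x => η ((n + 1 : ℝ)⁻¹ • x), fun n => ?_⟩
  have hn : (0 : ℝ) < n + 1 := by positivity
  refine ⟨hη.comp (by fun_prop), η.hasCompactSupport.comp_smul (by positivity),
    fun x => ⟨η.nonneg, η.le_one⟩, fun x hx => ?_, fun x => ?_⟩
  · apply η.one_of_mem_closedBall
    rw [mem_closedBall_zero_iff, norm_smul, norm_inv, Real.norm_of_nonneg hn.le]
    change _ ≤ (1 : ℝ)
    rwa [inv_mul_le_iff₀ hn, mul_one]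
  · rw [norm_gradient_comp_smul η (by positivity), div_eq_inv_mul]
    gcongr
    exact hC _

lemma energyDensity_one_mul_le {u χ : E → ℝ} {C : ℝ} {x : E} (hχ : DifferentiableAt ℝ χ x)
    (hu : DifferentiableAt ℝ u x) (hχ01 : χ x ∈ Set.Icc 0 1) (hC : ‖gradient χ x‖ ≤ C) :
    energyDensity 1 (fun y => χ y * u y) x ≤
      2 * ‖gradient u x‖ ^ 2 + (2 * C ^ 2 + 1) * u x ^ 2 := by
  obtain ⟨h0, h1⟩ := hχ01
  have hgrad : ‖χ x • gradient u x + u x • gradient χ x‖ ≤ ‖gradient u x‖ + |u x| * C := by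
    refine (norm_add_le _ _).trans ?_
    rw [norm_smul, norm_smul, Real.norm_of_nonneg h0, Real.norm_eq_abs]
    gcongr
    exact mul_le_of_le_one_left (norm_nonneg _) h1
  have hgrad_sq : ‖χ x • gradient u x + u x • gradient χ x‖ ^ 2 ≤
      (‖gradient u x‖ + |u x| * C) ^ 2 := by gcongr
  have hval : (χ x * u x) ^ 2 ≤ u x ^ 2 := by
    rw [mul_pow]
    exact mul_le_of_le_one_left (sq_nonneg _) (pow_le_one₀ h0 h1)
  have habs : (|u x| * C) ^ 2 = C ^ 2 * u x ^ 2 := by rw [mul_pow, sq_abs, mul_comm]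
  simp only [energyDensity, gradient_mul hχ hu, Pi.one_apply, one_mul]
  nlinarith [sq_nonneg (‖gradient u x‖ - |u x| * C)]

variable [MeasurableSpace E] [BorelSpace E] {μ : Measure E} {u w : E → ℝ}

lemma normed_convolution_eq_zero_of_notMem_cthickening (φ : ContDiffBump (0 : E))
    (hφ : φ.rOut ≤ 1) (hw : Continuous w) {x : E}
    (hx : x ∉ Metric.cthickening 1 (tsupport w)) :
    convolution (φ.normed volume) w (ContinuousLinearMap.lsmul ℝ ℝ) volume x = 0 := by
  have hw0 : ∀ y ∈ Metric.ball x φ.rOut, w y = 0 := fun y hy => by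
    by_contra hne
    refine hx (Metric.mem_cthickening_of_dist_le x y 1 _ (subset_tsupport _ hne) ?_)
    rw [dist_comm]
    exact hy.le.trans hφ
  have hwx : w x = 0 := hw0 x (Metric.mem_ball_self φ.rOut_pos)
  have hdist := φ.dist_normed_convolution_le (μ := volume) (g := w) (x₀ := x) (ε := 0)
    hw.aestronglyMeasurable fun y hy => by rw [hw0 y hy, hwx, dist_self]
  rwa [hwx, dist_le_zero] at hdist

lemma exists_contDiff_top_approx (hw : ContDiff ℝ 1 w) (hs : HasCompactSupport w) {ε : ℝ}
    (hε : 0 < ε) : ∃ v : E → ℝ, ContDiff ℝ (⊤ : ℕ∞) v ∧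
      tsupport v ⊆ Metric.cthickening 1 (tsupport w) ∧
      (∀ x, |v x - w x| ≤ ε) ∧ ∀ x, ‖gradient v x - gradient w x‖ ≤ ε := by
  have hw' : Continuous (fderiv ℝ w) := hw.continuous_fderiv one_ne_zero
  obtain ⟨d₁, hd₁, hclose⟩ := Metric.uniformContinuous_iff.1
    (hs.uniformContinuous_of_continuous hw.continuous) ε hε
  obtain ⟨d₂, hd₂, hclose'⟩ := Metric.uniformContinuous_iff.1
    ((hs.fderiv ℝ).uniformContinuous_of_continuous hw') ε hε
  set d := min (min d₁ d₂) 1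
  have hd : 0 < d := by positivity
  have hdd₁ : d ≤ d₁ := (min_le_left _ _).trans (min_le_left _ _)
  have hdd₂ : d ≤ d₂ := (min_le_left _ _).trans (min_le_right _ _)
  let φ : ContDiffBump (0 : E) := ⟨d / 2, d, by positivity, by linarith⟩
  let v := convolution (φ.normed volume) w (ContinuousLinearMap.lsmul ℝ ℝ) volume
  have hfderiv (x : E) : fderiv ℝ v x =
      convolution (φ.normed volume) (fderiv ℝ w) (ContinuousLinearMap.lsmul ℝ ℝ) volume x :=
    (HasCompactSupport.hasFDerivAt_convolution_right (ContinuousLinearMap.lsmul ℝ ℝ) hs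
      φ.continuous_normed.locallyIntegrable hw x).fderiv
  refine ⟨v, ?_, ?_, fun x => ?_, fun x => ?_⟩
  · exact φ.hasCompactSupport_normed.contDiff_convolution_left _ φ.contDiff_normed
      hw.continuous.locallyIntegrable
  · exact closure_minimal (fun x hx => by_contra fun h => hx <|
      normed_convolution_eq_zero_of_notMem_cthickening φ (min_le_right _ _) hw.continuous h)
      Metric.isClosed_cthickening
  · rw [← Real.dist_eq]
    exact φ.dist_normed_convolution_le hw.continuous.aestronglyMeasurable fun y hy =>
      (hclose (hy.trans_le hdd₁)).le
  · have hgrad : gradient v x - gradient w x =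
        (InnerProductSpace.toDual ℝ E).symm (fderiv ℝ v x - fderiv ℝ w x) := (map_sub _ _ _).symm
    rw [hgrad, LinearIsometryEquiv.norm_map, hfderiv, ← dist_eq_norm]
    exact φ.dist_normed_convolution_le hw'.aestronglyMeasurable fun y hy =>
      (hclose' (hy.trans_le hdd₂)).le

lemma exists_contDiff_top_seq_approx (hw : ContDiff ℝ 1 w) (hs : HasCompactSupport w) :
    ∃ v : ℕ → E → ℝ, (∀ k, ContDiff ℝ (⊤ : ℕ∞) (v k) ∧
        tsupport (v k) ⊆ Metric.cthickening 1 (tsupport w)) ∧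
      (∃ B, ∀ k x, |v k x| ≤ B ∧ ‖gradient (v k) x‖ ≤ B) ∧
      ∀ x, Tendsto (fun k => v k x) atTop (𝓝 (w x)) ∧
        Tendsto (fun k => gradient (v k) x) atTop (𝓝 (gradient w x)) := by
  choose v hv hsupp hclose hclose' using
    fun k : ℕ => exists_contDiff_top_approx hw hs (one_div_pos.2 (Nat.cast_add_one_pos k))
  obtain ⟨C, hC⟩ := hw.continuous.bounded_above_of_compact_support hs
  obtain ⟨C', hC'⟩ := (continuous_gradient hw).bounded_above_of_compact_support
    (hasCompactSupport_gradient hs)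
  have hε (k : ℕ) : 1 / ((k : ℝ) + 1) ≤ 1 := by
    rw [div_le_one (by positivity)]
    exact le_add_of_nonneg_left k.cast_nonneg
  have hlim : Tendsto (fun k : ℕ => 1 / ((k : ℝ) + 1)) atTop (𝓝 0) :=
    tendsto_one_div_add_atTop_nhds_zero_nat
  refine ⟨v, fun k => ⟨hv k, hsupp k⟩, ⟨max (1 + C) (1 + C'), fun k x => ⟨?_, ?_⟩⟩,
    fun x => ⟨?_, ?_⟩⟩
  · exact (norm_le_norm_sub_add (v k x) (w x)).trans <|
      (add_le_add ((hclose k x).trans (hε k)) (hC x)).trans (le_max_left _ _)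
  · exact (norm_le_norm_sub_add (gradient (v k) x) (gradient w x)).trans <|
      (add_le_add ((hclose' k x).trans (hε k)) (hC' x)).trans (le_max_right _ _)
  · exact tendsto_iff_norm_sub_tendsto_zero.2
      (squeeze_zero (fun _ => norm_nonneg _) (fun k => hclose k x) hlim)
  · exact tendsto_iff_norm_sub_tendsto_zero.2
      (squeeze_zero (fun _ => norm_nonneg _) (fun k => hclose' k x) hlim)

lemma integral_rpow_le_energy_of_contDiff_one [IsFiniteMeasureOnCompacts μ] {p S : ℝ} (hp : 0 < p)
    (hsmooth : ∀ v : E → ℝ, ContDiff ℝ (⊤ : ℕ∞) v → HasCompactSupport v →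
      S * (∫ x, |v x| ^ p ∂μ) ^ (2 / p) ≤ energy μ 1 v)
    (hw : ContDiff ℝ 1 w) (hs : HasCompactSupport w) :
    S * (∫ x, |w x| ^ p ∂μ) ^ (2 / p) ≤ energy μ 1 w := by
  obtain ⟨v, hv, ⟨B, hB⟩, hlim⟩ := exists_contDiff_top_seq_approx hw hs
  have hD : IsCompact (Metric.cthickening 1 (tsupport w)) := hs.cthickening
  have hv1 (k : ℕ) : ContDiff ℝ 1 (v k) := (hv k).1.of_le (by exact_mod_cast le_top)
  have hnot (k : ℕ) {x : E} (hx : x ∉ Metric.cthickening 1 (tsupport w)) : x ∉ tsupport (v k) :=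
    fun h => hx ((hv k).2 h)
  have hpow : Tendsto (fun k => ∫ x, |v k x| ^ p ∂μ) atTop (𝓝 (∫ x, |w x| ^ p ∂μ)) := by
    refine tendsto_integral_of_bounded_of_support_subset hD (B := B ^ p)
      (fun k => (hv1 k).continuous.abs.rpow_const fun _ => Or.inr hp.le) (fun k x => ?_)
      (fun k x hx => ?_) fun x => (hlim x).1.abs.rpow_const (Or.inr hp.le)
    · rw [abs_of_nonneg (by positivity)]
      exact Real.rpow_le_rpow (abs_nonneg _) (hB k x).1 hp.le
    · rw [image_eq_zero_of_notMem_tsupport (hnot k hx), abs_zero, Real.zero_rpow hp.ne']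
  have henergy : Tendsto (fun k => energy μ 1 (v k)) atTop (𝓝 (energy μ 1 w)) := by
    refine tendsto_integral_of_bounded_of_support_subset hD (B := B ^ 2 + B ^ 2)
      (fun k => continuous_energyDensity continuous_one (hv1 k)) (fun k x => ?_)
      (fun k x hx => ?_) fun x => ((hlim x).2.norm.pow 2).add (((hlim x).1.pow 2).const_mul _)
    · rw [abs_of_nonneg (energyDensity_nonneg (V := 1) zero_le_one _), energyDensity, Pi.one_apply,
        one_mul, ← sq_abs (v k x)]
      obtain ⟨hval, hgrad⟩ := hB k x
      gcongr
    · simp [energyDensity, image_eq_zero_of_notMem_tsupport (hnot k hx),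
        gradient_eq_zero_of_notMem_tsupport (hnot k hx)]
  exact le_of_tendsto_of_tendsto' ((hpow.rpow_const (Or.inr (by positivity))).const_mul _) henergy
    fun k => hsmooth _ (hv k).1 (hD.of_isClosed_subset (isClosed_tsupport _) (hv k).2)

lemma MemH1.exists_hasCompactSupport_seq (hu : MemH1 μ 1 u) : ∃ w : ℕ → E → ℝ,
    (∀ n, ContDiff ℝ 1 (w n) ∧ HasCompactSupport (w n) ∧
      ∀ x ∈ Metric.closedBall (0 : E) n, w n x = u x) ∧
    Tendsto (fun n => energy μ 1 (w n)) atTop (𝓝 (energy μ 1 u)) := by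
  obtain ⟨C, hC, χ, hχ⟩ := exists_cutoff_seq E
  have hχu (n : ℕ) : ContDiff ℝ 1 fun x => χ n x * u x := (hχ n).1.mul hu.contDiff
  have hone (n : ℕ) {x : E} (hx : ‖x‖ ≤ n) : χ n x = 1 :=
    (hχ n).2.2.2.1 x (hx.trans (le_add_of_nonneg_right zero_le_one))
  refine ⟨fun n x => χ n x * u x, fun n => ⟨hχu n, (hχ n).2.1.mul_right, fun x hx => ?_⟩, ?_⟩
  · simp only [hone n (mem_closedBall_zero_iff.1 hx), one_mul]
  refine tendsto_integral_of_dominated_convergence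
    (fun x => 2 * ‖gradient u x‖ ^ 2 + (2 * C ^ 2 + 1) * u x ^ 2)
    (fun n => (continuous_energyDensity continuous_one (hχu n)).aestronglyMeasurable)
    (((hu.integrable_norm_gradient_sq zero_le_one).const_mul 2).add
      (hu.integrable_sq.const_mul _)) (fun n => Eventually.of_forall fun x => ?_)
    (Eventually.of_forall fun x => tendsto_const_nhds.congr' ?_)
  · rw [Real.norm_of_nonneg (energyDensity_nonneg (V := 1) zero_le_one _)]
    exact energyDensity_one_mul_le ((hχ n).1.differentiable one_ne_zero x)
      (hu.contDiff.differentiable one_ne_zero x) ((hχ n).2.2.1 x) <|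
      ((hχ n).2.2.2.2 x).trans (div_le_self hC (by simp))
  · obtain ⟨m, hm⟩ := exists_nat_gt ‖x‖
    filter_upwards [eventually_ge_atTop m] with n hn
    have hball : Metric.ball (0 : E) n ∈ 𝓝 x := Metric.isOpen_ball.mem_nhds <|
      mem_ball_zero_iff.2 (hm.trans_le (by exact_mod_cast hn))
    have heq : (fun y => χ n y * u y) =ᶠ[𝓝 x] u := by
      filter_upwards [hball] with y hy
      rw [hone n (mem_ball_zero_iff.1 hy).le, one_mul]
    rw [energyDensity, energyDensity, heq.gradient_eq, heq.eq_of_nhds]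

lemma integrable_and_integral_le_of_forall_closedBall [IsFiniteMeasureOnCompacts μ] {F : E → ℝ}
    (hF : Continuous F) (hF0 : 0 ≤ F) {B : ℕ → ℝ} {b : ℝ} (hB : Tendsto B atTop (𝓝 b))
    (hle : ∀ n : ℕ, ∫ x in Metric.closedBall (0 : E) n, F x ∂μ ≤ B n) :
    Integrable F μ ∧ ∫ x, F x ∂μ ≤ b := by
  have hcover : AECover μ atTop fun n : ℕ => Metric.closedBall (0 : E) n :=
    aecover_closedBall tendsto_natCast_atTop_atTop
  have hint : Integrable F μ := by
    refine hcover.integrable_of_integral_norm_bounded (b + 1)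
      (fun n => hF.continuousOn.integrableOn_compact (isCompact_closedBall _ _)) ?_
    filter_upwards [hB.eventually (gt_mem_nhds (lt_add_one b))] with n hn
    simp_rw [Real.norm_of_nonneg (hF0 _)]
    exact (hle n).trans hn.le
  exact ⟨hint, le_of_tendsto_of_tendsto'
    (hcover.integral_tendsto_of_countably_generated hint) hB hle⟩

lemma MemH1.integral_comp_le_of_hasCompactSupport [IsFiniteMeasureOnCompacts μ] {Ψ : E → ℝ → ℝ}
    (hΨ : Continuous Ψ.uncurry) (hΨ0 : ∀ x t, 0 ≤ Ψ x t) (hΨzero : ∀ x, Ψ x 0 = 0) {θ : ℝ → ℝ}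
    (hθ : Continuous θ) (hle : ∀ w : E → ℝ, ContDiff ℝ 1 w → HasCompactSupport w →
      ∫ x, Ψ x (w x) ∂μ ≤ θ (energy μ 1 w)) (hu : MemH1 μ 1 u) :
    Integrable (fun x => Ψ x (u x)) μ ∧ ∫ x, Ψ x (u x) ∂μ ≤ θ (energy μ 1 u) := by
  obtain ⟨w, hw, hlim⟩ := hu.exists_hasCompactSupport_seq
  have hcont {v : E → ℝ} (hv : Continuous v) : Continuous fun x => Ψ x (v x) :=
    hΨ.comp (continuous_id.prodMk hv)
  refine integrable_and_integral_le_of_forall_closedBall (hcont hu.contDiff.continuous)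
    (fun x => hΨ0 _ _) ((hθ.tendsto _).comp hlim) fun n => ?_
  have hint : Integrable (fun x => Ψ x (w n x)) μ :=
    (hcont (hw n).1.continuous).integrable_of_hasCompactSupport <|
      HasCompactSupport.intro (hw n).2.1 fun x hx => by
        rw [image_eq_zero_of_notMem_tsupport hx, hΨzero]
  calc ∫ x in Metric.closedBall (0 : E) n, Ψ x (u x) ∂μ
      = ∫ x in Metric.closedBall (0 : E) n, Ψ x (w n x) ∂μ :=
        setIntegral_congr_fun measurableSet_closedBall fun x hx => by simp only [(hw n).2.2 x hx]
    _ ≤ ∫ x, Ψ x (w n x) ∂μ :=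
        setIntegral_le_integral hint (Eventually.of_forall fun x => hΨ0 _ _)
    _ ≤ θ (energy μ 1 (w n)) := hle _ (hw n).1 (hw n).2.1

end Approximation

/-- The Sobolev inequality `S ‖u‖²_{Lᵖ(μ)} ≤ ‖u‖²_{H¹(μ)}` on the finite-energy `C¹` functions;
integrability of `|u|ᵖ` is part of the notion because the integral of a non-integrable function
is `0`. -/
structure SobolevInequality {E : Type*} [NormedAddCommGroup E] [InnerProductSpace ℝ E]
    [CompleteSpace E] [MeasurableSpace E] (μ : Measure E) (p S : ℝ) : Prop where
  integrable_rpow : ∀ {u : E → ℝ}, MemH1 μ 1 u → Integrable (fun x => |u x| ^ p) μ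
  mul_rpow_le : ∀ {u : E → ℝ}, MemH1 μ 1 u → S * (∫ x, |u x| ^ p ∂μ) ^ (2 / p) ≤ energy μ 1 u

lemma mul_rpow_two_div_le_iff {p S I Q : ℝ} (hp : 0 < p) (hS : 0 < S) (hI : 0 ≤ I) (hQ : 0 ≤ Q) :
    S * I ^ (2 / p) ≤ Q ↔ I ≤ (Q / S) ^ (p / 2) := by
  rw [← le_div_iff₀' hS, ← Real.le_rpow_inv_iff_of_pos hI (by positivity) (by positivity), inv_div]

lemma SobolevInequality.integral_rpow_le {E : Type*} [NormedAddCommGroup E]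
    [InnerProductSpace ℝ E] [CompleteSpace E] [MeasurableSpace E] {μ : Measure E} {p S : ℝ}
    {u : E → ℝ} (hsob : SobolevInequality μ p S) (hp : 0 < p) (hS : 0 < S)
    (hu : MemH1 μ 1 u) :
    ∫ x, |u x| ^ p ∂μ ≤ (energy μ 1 u / S) ^ (p / 2) :=
  (mul_rpow_two_div_le_iff hp hS (integral_nonneg fun x => by positivity)
    (energy_nonneg zero_le_one u)).1 (hsob.mul_rpow_le hu)

section Sobolev

variable {E : Type*} [NormedAddCommGroup E] [InnerProductSpace ℝ E] [FiniteDimensional ℝ E]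
  [MeasurableSpace E] [BorelSpace E] {μ : Measure E}

lemma SobolevInequality.of_contDiff_top [IsFiniteMeasureOnCompacts μ] {p S : ℝ} (hp : 0 < p)
    (hS : 0 < S) (hsmooth : ∀ v : E → ℝ, ContDiff ℝ (⊤ : ℕ∞) v → HasCompactSupport v →
      S * (∫ x, |v x| ^ p ∂μ) ^ (2 / p) ≤ energy μ 1 v) : SobolevInequality μ p S := by
  have hiff (u : E → ℝ) := mul_rpow_two_div_le_iff (I := ∫ x, |u x| ^ p ∂μ) hp hS
    (integral_nonneg fun x => by positivity) (energy_nonneg (μ := μ) zero_le_one u)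
  have hext {u : E → ℝ} (hu : MemH1 μ 1 u) := hu.integral_comp_le_of_hasCompactSupport
    (Ψ := fun _ t => |t| ^ p) (θ := fun Q => (Q / S) ^ (p / 2))
    (continuous_snd.abs.rpow_const fun _ => Or.inr hp.le) (fun _ _ => by positivity)
    (fun _ => by rw [abs_zero, Real.zero_rpow hp.ne'])
    ((continuous_id.div_const S).rpow_const fun _ => Or.inr (by positivity))
    fun w hw hs => (hiff w).1 (integral_rpow_le_energy_of_contDiff_one hp hsmooth hw hs)
  exact ⟨fun hu => (hext hu).1, fun {u} hu => (hiff u).2 (hext hu).2⟩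

end Sobolev

section Translation

variable {E : Type*} [NormedAddCommGroup E] [InnerProductSpace ℝ E] {w : E → ℝ}

lemma sq_integral_le_integral_sq {α : Type*} [MeasurableSpace α] {μ : Measure α}
    [IsProbabilityMeasure μ] {f : α → ℝ} (hf : Integrable f μ)
    (hf2 : Integrable (fun x => f x ^ 2) μ) : (∫ x, f x ∂μ) ^ 2 ≤ ∫ x, f x ^ 2 ∂μ :=
  even_two.convexOn_pow.map_integral_le (continuous_pow 2).continuousOn isClosed_univ
    (Eventually.of_forall fun _ => Set.mem_univ _) hf hf2

lemma sq_sub_le_setIntegral_norm_gradient_sq [CompleteSpace E] (hw : ContDiff ℝ 1 w) (x ξ : E) :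
    (w (x + ξ) - w x) ^ 2 ≤ ‖ξ‖ ^ 2 * ∫ t in Set.Icc (0 : ℝ) 1, ‖gradient w (x + t • ξ)‖ ^ 2 := by
  have hgrad := continuous_gradient hw
  have hcont : Continuous fun t : ℝ => ⟪gradient w (x + t • ξ), ξ⟫ := by fun_prop
  have hderiv (t : ℝ) : HasDerivAt (fun t : ℝ => w (x + t • ξ)) ⟪gradient w (x + t • ξ), ξ⟫ t := by
    have hline : HasDerivAt (fun t : ℝ => x + t • ξ) ξ t := by
      simpa using ((hasDerivAt_id t).smul_const ξ).const_add x
    rw [inner_gradient_left]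
    exact (hw.differentiable one_ne_zero (x + t • ξ)).hasFDerivAt.comp_hasDerivAt t hline
  have hftc := intervalIntegral.integral_eq_sub_of_hasDerivAt (fun t _ => hderiv t)
    (hcont.intervalIntegrable 0 1)
  simp only [one_smul, zero_smul, add_zero] at hftc
  rw [← hftc, intervalIntegral.integral_of_le zero_le_one, ← integral_Icc_eq_integral_Ioc]
  have : IsProbabilityMeasure (volume.restrict (Set.Icc (0 : ℝ) 1)) := ⟨by simp⟩
  have hint {F : ℝ → ℝ} (hF : Continuous F) : Integrable F (volume.restrict (Set.Icc (0 : ℝ) 1)) :=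
    hF.continuousOn.integrableOn_compact isCompact_Icc
  refine (sq_integral_le_integral_sq (hint hcont) (hint (by fun_prop))).trans ?_
  rw [← integral_const_mul]
  refine integral_mono (hint (by fun_prop)) (hint (by fun_prop)) fun t => ?_
  have hcs := abs_real_inner_le_norm (gradient w (x + t • ξ)) ξ
  rw [mul_comm] at hcs
  simp only
  rw [← sq_abs, ← mul_pow]
  gcongr

variable [FiniteDimensional ℝ E] [MeasurableSpace E] [BorelSpace E]

lemma setLIntegral_sq_sub_translate_le (hw : ContDiff ℝ 1 w) (ξ : E) {A D : Set E}
    (hA : MeasurableSet A) (hD : MeasurableSet D)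
    (hAD : ∀ x ∈ A, ∀ t ∈ Set.Icc (0 : ℝ) 1, x + t • ξ ∈ D) :
    ∫⁻ x in A, ENNReal.ofReal ((w (x + ξ) - w x) ^ 2) ≤
      ENNReal.ofReal (‖ξ‖ ^ 2) * ∫⁻ x in D, ENNReal.ofReal (‖gradient w x‖ ^ 2) := by
  have hgrad := continuous_gradient hw
  have hmeas : Measurable fun z : E × ℝ =>
      ENNReal.ofReal (‖gradient w (z.1 + z.2 • ξ)‖ ^ 2) :=
    Measurable.ennreal_ofReal (Continuous.measurable (by fun_prop))
  calc ∫⁻ x in A, ENNReal.ofReal ((w (x + ξ) - w x) ^ 2)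
      ≤ ∫⁻ x in A, ENNReal.ofReal (‖ξ‖ ^ 2) *
          ∫⁻ t in Set.Icc (0 : ℝ) 1, ENNReal.ofReal (‖gradient w (x + t • ξ)‖ ^ 2) := by
        refine lintegral_mono fun x => ?_
        have hcont : Continuous fun t : ℝ => ‖gradient w (x + t • ξ)‖ ^ 2 := by fun_prop
        rw [← ofReal_integral_eq_lintegral_ofReal
          (hcont.continuousOn.integrableOn_compact isCompact_Icc)
          (Eventually.of_forall fun t => by positivity), ← ENNReal.ofReal_mul (by positivity)]
        exact ENNReal.ofReal_le_ofReal (sq_sub_le_setIntegral_norm_gradient_sq hw x ξ)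
    _ = ENNReal.ofReal (‖ξ‖ ^ 2) * ∫⁻ t in Set.Icc (0 : ℝ) 1,
          ∫⁻ x in A, ENNReal.ofReal (‖gradient w (x + t • ξ)‖ ^ 2) := by
        rw [lintegral_const_mul _ hmeas.lintegral_prod_right',
          lintegral_lintegral_swap hmeas.aemeasurable]
    _ ≤ ENNReal.ofReal (‖ξ‖ ^ 2) * ∫⁻ _ in Set.Icc (0 : ℝ) 1,
          ∫⁻ x in D, ENNReal.ofReal (‖gradient w x‖ ^ 2) := by
        gcongr 1
        refine setLIntegral_mono measurable_const fun t ht => ?_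
        rw [← lintegral_indicator hA, ← lintegral_indicator hD, ← lintegral_add_right_eq_self
          (D.indicator fun x => ENNReal.ofReal (‖gradient w x‖ ^ 2)) (t • ξ)]
        refine lintegral_mono fun x => ?_
        by_cases hx : x ∈ A
        · simp [hx, hAD x hx t ht]
        · simp [hx]
    _ = ENNReal.ofReal (‖ξ‖ ^ 2) * ∫⁻ x in D, ENNReal.ofReal (‖gradient w x‖ ^ 2) := by simp

variable {ν : Measure E} {r : ℝ}

lemma integrable_of_continuous_of_ae_norm_le [IsFiniteMeasure ν] (hν : ∀ᵐ z ∂ν, ‖z‖ ≤ r)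
    {f : E → ℝ} (hf : Continuous f) : Integrable f ν := by
  have hint : IntegrableOn f (Metric.closedBall 0 r) ν :=
    hf.continuousOn.integrableOn_compact (isCompact_closedBall _ _)
  rwa [IntegrableOn, Measure.restrict_eq_self_of_ae_mem] at hint
  simpa using hν

lemma sq_le_sq_integral_add_lintegral [IsProbabilityMeasure ν] (hν : ∀ᵐ z ∂ν, ‖z‖ ≤ r)
    (hw : Continuous w) (x : E) :
    ENNReal.ofReal (w x ^ 2) ≤ 2 * ENNReal.ofReal ((∫ z, w (x + z) ∂ν) ^ 2) +
      2 * ∫⁻ z, ENNReal.ofReal ((w (x + z) - w x) ^ 2) ∂ν := by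
  have hint {f : E → ℝ} (hf : Continuous f) : Integrable f ν :=
    integrable_of_continuous_of_ae_norm_le hν hf
  have hjensen := sq_integral_le_integral_sq (μ := ν) (f := fun z => w (x + z) - w x)
    (hint (by fun_prop)) (hint (by fun_prop))
  rw [integral_sub (hint (by fun_prop)) (integrable_const _), integral_const, probReal_univ,
    one_smul] at hjensen
  rw [← ofReal_integral_eq_lintegral_ofReal (hint (by fun_prop))
    (Eventually.of_forall fun z => by positivity), ← ENNReal.ofReal_ofNat 2,
    ← ENNReal.ofReal_mul zero_le_two, ← ENNReal.ofReal_mul zero_le_two,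
    ← ENNReal.ofReal_add (by positivity) (by positivity)]
  refine ENNReal.ofReal_le_ofReal ?_
  nlinarith [sq_nonneg (2 * (∫ z, w (x + z) ∂ν) - w x)]

lemma stronglyMeasurable_integral_translate [SFinite ν] (hw : Continuous w) :
    StronglyMeasurable fun x => ∫ z, w (x + z) ∂ν :=
  StronglyMeasurable.integral_prod_right' (f := fun z : E × E => w (z.1 + z.2))
    (Continuous.stronglyMeasurable (by fun_prop))

lemma setLIntegral_sq_le_of_isProbabilityMeasure [IsProbabilityMeasure ν]
    (hν : ∀ᵐ z ∂ν, ‖z‖ ≤ r) (hw : ContDiff ℝ 1 w) {A : Set E} (hA : MeasurableSet A) :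
    ∫⁻ x in A, ENNReal.ofReal (w x ^ 2) ≤
      2 * (∫⁻ x in A, ENNReal.ofReal ((∫ z, w (x + z) ∂ν) ^ 2)) +
      2 * (ENNReal.ofReal (r ^ 2) * ∫⁻ x, ENNReal.ofReal (‖gradient w x‖ ^ 2)) := by
  have hcont := hw.continuous
  have hmeas : Measurable fun z : E × E => ENNReal.ofReal ((w (z.1 + z.2) - w z.1) ^ 2) :=
    Measurable.ennreal_ofReal (Continuous.measurable (by fun_prop))
  have havg : Measurable fun x => ENNReal.ofReal ((∫ z, w (x + z) ∂ν) ^ 2) :=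
    ((stronglyMeasurable_integral_translate hcont).measurable.pow_const 2).ennreal_ofReal
  calc ∫⁻ x in A, ENNReal.ofReal (w x ^ 2)
      ≤ ∫⁻ x in A, (2 * ENNReal.ofReal ((∫ z, w (x + z) ∂ν) ^ 2) +
          2 * ∫⁻ z, ENNReal.ofReal ((w (x + z) - w x) ^ 2) ∂ν) :=
        lintegral_mono fun x => sq_le_sq_integral_add_lintegral hν hcont x
    _ = 2 * (∫⁻ x in A, ENNReal.ofReal ((∫ z, w (x + z) ∂ν) ^ 2)) +
          2 * ∫⁻ z, (∫⁻ x in A, ENNReal.ofReal ((w (x + z) - w x) ^ 2)) ∂ν := by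
        rw [lintegral_add_left (havg.const_mul _), lintegral_const_mul _ havg,
          lintegral_const_mul _ hmeas.lintegral_prod_right',
          lintegral_lintegral_swap hmeas.aemeasurable]
    _ ≤ 2 * (∫⁻ x in A, ENNReal.ofReal ((∫ z, w (x + z) ∂ν) ^ 2)) +
          2 * ∫⁻ _, (ENNReal.ofReal (r ^ 2) * ∫⁻ x, ENNReal.ofReal (‖gradient w x‖ ^ 2)) ∂ν := by
        gcongr 2
        refine lintegral_mono_ae ?_
        filter_upwards [hν] with z hz
        refine (setLIntegral_sq_sub_translate_le hw z hA .univ fun _ _ _ _ => trivial).trans ?_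
        rw [Measure.restrict_univ]
        gcongr
    _ = _ := by simp

end Translation

section Rellich

variable {E : Type*} [NormedAddCommGroup E] [InnerProductSpace ℝ E]

lemma exists_subseq_tendsto_inner [CompleteSpace E] [TopologicalSpace.SeparableSpace E]
    {f : ℕ → E} {C : ℝ} (hC : ∀ n, ‖f n‖ ≤ C) :
    ∃ σ : ℕ → ℕ, StrictMono σ ∧ ∀ y, ∃ l, Tendsto (fun n => ⟪f (σ n), y⟫) atTop (𝓝 l) := by
  obtain ⟨z, -, σ, hσ, hz⟩ := WeakDual.isSeqCompact_closedBall ℝ E 0 C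
    (x := fun n => StrongDual.toWeakDual (InnerProductSpace.toDual ℝ E (f n)))
    fun n => by simpa using hC n
  exact ⟨σ, hσ, fun y => ⟨z y, ((WeakDual.eval_continuous y).tendsto z).comp hz⟩⟩

lemma exists_subseq_tendsto_setIntegral {α : Type*} [MeasurableSpace α]
    [MeasurableSpace.CountablyGenerated α] {μ : Measure α} [SFinite μ] {u : ℕ → α → ℝ} {C : ℝ}
    (hu : ∀ n, MemLp (u n) 2 μ) (hC : ∀ n, ∫ x, u n x ^ 2 ∂μ ≤ C) :
    ∃ σ : ℕ → ℕ, StrictMono σ ∧ ∀ s, MeasurableSet s → μ s ≠ ⊤ →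
      ∃ l, Tendsto (fun n => ∫ x in s, u (σ n) x ∂μ) atTop (𝓝 l) := by
  have : Fact ((2 : ENNReal) ≠ ⊤) := ⟨by simp⟩
  have hnorm (n : ℕ) : ‖(hu n).toLp‖ ≤ √C := by
    refine Real.le_sqrt_of_sq_le (le_trans (le_of_eq ?_) (hC n))
    rw [← real_inner_self_eq_norm_sq, L2.inner_def]
    refine integral_congr_ae ?_
    filter_upwards [(hu n).coeFn_toLp] with x hx
    simp [hx, sq]
  obtain ⟨σ, hσ, hlim⟩ := exists_subseq_tendsto_inner hnorm
  refine ⟨σ, hσ, fun s hs hμs => ?_⟩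
  obtain ⟨l, hl⟩ := hlim (indicatorConstLp 2 hs hμs (1 : ℝ))
  refine ⟨l, hl.congr fun n => ?_⟩
  rw [real_inner_comm, L2.inner_indicatorConstLp_one]
  refine setIntegral_congr_ae hs ?_
  filter_upwards [(hu (σ n)).coeFn_toLp] with x hx _
  exact hx

variable [FiniteDimensional ℝ E] [MeasurableSpace E] [BorelSpace E] {u w : E → ℝ} {r : ℝ}

/-- The uniform probability measure on the ball of radius `r` centred at the origin. -/
def uniformBall (E : Type*) [NormedAddCommGroup E] [InnerProductSpace ℝ E] [FiniteDimensional ℝ E]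
    [MeasurableSpace E] [BorelSpace E] (r : ℝ) : Measure E :=
  (volume (Metric.ball (0 : E) r))⁻¹ • volume.restrict (Metric.ball 0 r)

lemma isProbabilityMeasure_uniformBall (hr : 0 < r) : IsProbabilityMeasure (uniformBall E r) :=
  ⟨by simpa [uniformBall] using
    ENNReal.inv_mul_cancel (Metric.measure_ball_pos _ _ hr).ne' measure_ball_lt_top.ne⟩

lemma ae_norm_le_uniformBall : ∀ᵐ z ∂uniformBall E r, ‖z‖ ≤ r := by
  refine Measure.ae_smul_measure ?_ _
  filter_upwards [ae_restrict_mem Metric.isOpen_ball.measurableSet] with z hz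
  exact (mem_ball_zero_iff.1 hz).le

lemma integral_translate_uniformBall (f : E → ℝ) (x : E) :
    ∫ z, f (x + z) ∂uniformBall E r =
      (volume.real (Metric.ball (0 : E) r))⁻¹ * ∫ y in Metric.ball x r, f y := by
  simp only [uniformBall, integral_smul_measure, ENNReal.toReal_inv, smul_eq_mul, Measure.real]
  congr 1
  rw [← integral_indicator Metric.isOpen_ball.measurableSet,
    ← integral_indicator Metric.isOpen_ball.measurableSet,
    ← integral_add_left_eq_self ((Metric.ball x r).indicator f) x]
  congr 1 with z
  simp [Set.indicator]

lemma sq_integral_translate_uniformBall_le (hr : 0 < r) (hw : MemH1 volume 1 w) (x : E) :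
    (∫ z, w (x + z) ∂uniformBall E r) ^ 2 ≤
      (volume.real (Metric.ball (0 : E) r))⁻¹ * energy volume 1 w := by
  have := isProbabilityMeasure_uniformBall (E := E) hr
  have hcont := hw.contDiff.continuous
  refine (sq_integral_le_integral_sq
    (integrable_of_continuous_of_ae_norm_le ae_norm_le_uniformBall (by fun_prop))
    (integrable_of_continuous_of_ae_norm_le ae_norm_le_uniformBall (by fun_prop))).trans ?_
  rw [integral_translate_uniformBall fun y => w y ^ 2]
  gcongr
  exact (setIntegral_le_integral hw.integrable_sq
    (Eventually.of_forall fun x => sq_nonneg _)).trans hw.integral_sq_le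

lemma integrableOn_sq_integral_translate (hr : 0 < r) (hw : MemH1 volume 1 w) (R : ℝ) :
    IntegrableOn (fun x => (∫ z, w (x + z) ∂uniformBall E r) ^ 2) (Metric.closedBall 0 R) := by
  have := isProbabilityMeasure_uniformBall (E := E) hr
  refine Measure.integrableOn_of_bounded measure_closedBall_lt_top.ne
    ((stronglyMeasurable_integral_translate hw.contDiff.continuous).pow 2).aestronglyMeasurable
    (M := (volume.real (Metric.ball (0 : E) r))⁻¹ * energy volume 1 w)
    (Eventually.of_forall fun x => ?_)
  rw [Real.norm_of_nonneg (sq_nonneg _)]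
  exact sq_integral_translate_uniformBall_le hr hw x

lemma setIntegral_sq_le_uniformBall (hr : 0 < r) (hw : MemH1 volume 1 w) (R : ℝ) :
    ∫ x in Metric.closedBall 0 R, w x ^ 2 ≤
      2 * (∫ x in Metric.closedBall 0 R, (∫ z, w (x + z) ∂uniformBall E r) ^ 2) +
        2 * (r ^ 2 * energy volume 1 w) := by
  have := isProbabilityMeasure_uniformBall (E := E) hr
  have hgrad := hw.integrable_norm_gradient_sq zero_le_one
  have hgrad_le : ∫ x, ‖gradient w x‖ ^ 2 ≤ energy volume 1 w :=
    integral_mono hgrad hw.integrable fun x => by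
      simpa [energyDensity] using sq_nonneg (w x)
  have hle := setLIntegral_sq_le_of_isProbabilityMeasure (ae_norm_le_uniformBall (r := r))
    hw.contDiff (measurableSet_closedBall (x := (0 : E)) (ε := R))
  rw [← ofReal_integral_eq_lintegral_ofReal hw.integrable_sq.integrableOn
      (Eventually.of_forall fun x => by positivity),
    ← ofReal_integral_eq_lintegral_ofReal (integrableOn_sq_integral_translate hr hw R)
      (Eventually.of_forall fun x => by positivity),
    ← ofReal_integral_eq_lintegral_ofReal hgrad (Eventually.of_forall fun x => by positivity),
    ← ENNReal.ofReal_mul (by positivity), ← ENNReal.ofReal_ofNat 2,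
    ← ENNReal.ofReal_mul zero_le_two, ← ENNReal.ofReal_mul zero_le_two,
    ← ENNReal.ofReal_add (by positivity) (by positivity),
    ENNReal.ofReal_le_ofReal_iff (by positivity)] at hle
  refine hle.trans ?_
  gcongr

end Rellich

lemma tendsto_nhds_zero_of_forall_eventually_lt {ι : Type*} {l : Filter ι} {f : ι → ℝ}
    (hf : ∀ i, 0 ≤ f i) (h : ∀ ε > 0, ∀ᶠ i in l, f i < ε) : Tendsto f l (𝓝 0) :=
  Metric.tendsto_nhds.2 fun ε hε => (h ε hε).mono fun i hi => by
    rwa [Real.dist_0_eq_abs, abs_of_nonneg (hf i)]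

section Confinement

variable {E : Type*} [NormedAddCommGroup E] [InnerProductSpace ℝ E] [FiniteDimensional ℝ E]
  [MeasurableSpace E] [BorelSpace E] {μ : Measure E} {w : E → ℝ} {u : ℕ → E → ℝ} {C : ℝ}

lemma MemH1.sub_one (hw : MemH1 μ 1 w) {v : E → ℝ} (hv : MemH1 μ 1 v) :
    MemH1 μ 1 (fun x => w x - v x) :=
  hw.sub continuous_one zero_le_one hv

lemma energy_one_sub_le_four_mul (hu : ∀ n, MemH1 μ 1 (u n)) (hC : ∀ n, energy μ 1 (u n) ≤ C)
    (m n : ℕ) : energy μ 1 (fun x => u m x - u n x) ≤ 4 * C := by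
  linarith [energy_sub_le continuous_one zero_le_one (hu m) (hu n), hC m, hC n]

lemma tendsto_setIntegral_sq_uniformBall_sub (hu : ∀ n, MemH1 volume 1 (u n))
    (hC : ∀ n, energy volume 1 (u n) ≤ C)
    (hlim : ∀ s, MeasurableSet s → volume s ≠ ⊤ →
      ∃ l, Tendsto (fun n => ∫ x in s, u n x) atTop (𝓝 l)) {r : ℝ} (hr : 0 < r) (R : ℝ) :
    Tendsto (fun p : ℕ × ℕ => ∫ x in Metric.closedBall (0 : E) R,
      (∫ z, (u p.1 (x + z) - u p.2 (x + z)) ∂uniformBall E r) ^ 2) atTop (𝓝 0) := by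
  have := isProbabilityMeasure_uniformBall (E := E) hr
  have hcont (n : ℕ) := (hu n).contDiff.continuous
  have hfin : IsFiniteMeasure (volume.restrict (Metric.closedBall (0 : E) R)) :=
    ⟨by simpa using measure_closedBall_lt_top⟩
  have hpointwise (x : E) : Tendsto (fun p : ℕ × ℕ =>
      ∫ z, (u p.1 (x + z) - u p.2 (x + z)) ∂uniformBall E r) atTop (𝓝 0) := by
    obtain ⟨l, hl⟩ := hlim (Metric.ball x r) measurableSet_ball measure_ball_lt_top.ne
    have hl' : Tendsto (fun n => ∫ z, u n (x + z) ∂uniformBall E r) atTop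
        (𝓝 ((volume.real (Metric.ball (0 : E) r))⁻¹ * l)) := by
      simpa only [integral_translate_uniformBall] using hl.const_mul _
    have hsub := (hl'.comp tendsto_fst).sub (hl'.comp tendsto_snd)
    rw [prod_atTop_atTop_eq, sub_self] at hsub
    refine hsub.congr fun p => ?_
    have hint (n : ℕ) : Integrable (fun z => u n (x + z)) (uniformBall E r) :=
      integrable_of_continuous_of_ae_norm_le ae_norm_le_uniformBall (by fun_prop)
    exact (integral_sub (hint p.1) (hint p.2)).symm
  have hdct := tendsto_integral_filter_of_dominated_convergence
    (μ := volume.restrict (Metric.closedBall (0 : E) R)) (l := (atTop : Filter (ℕ × ℕ)))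
    (F := fun p x => (∫ z, (u p.1 (x + z) - u p.2 (x + z)) ∂uniformBall E r) ^ 2)
    (f := fun _ => (0 : ℝ)) (fun _ => (volume.real (Metric.ball (0 : E) r))⁻¹ * (4 * C))
    (Eventually.of_forall fun p => ((stronglyMeasurable_integral_translate
      (w := fun y => u p.1 y - u p.2 y) (by fun_prop)).pow 2).aestronglyMeasurable)
    (Eventually.of_forall fun p => Eventually.of_forall fun x => by
      rw [Real.norm_of_nonneg (sq_nonneg _)]
      refine (sq_integral_translate_uniformBall_le hr ((hu p.1).sub_one (hu p.2)) x).trans ?_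
      gcongr
      exact energy_one_sub_le_four_mul hu hC p.1 p.2)
    (integrable_const _) (Eventually.of_forall fun x => by simpa using (hpointwise x).pow 2)
  simpa using hdct

lemma tendsto_setIntegral_sq_sub (hu : ∀ n, MemH1 volume 1 (u n))
    (hC : ∀ n, energy volume 1 (u n) ≤ C)
    (hlim : ∀ s, MeasurableSet s → volume s ≠ ⊤ →
      ∃ l, Tendsto (fun n => ∫ x in s, u n x) atTop (𝓝 l)) (R : ℝ) :
    Tendsto (fun p : ℕ × ℕ => ∫ x in Metric.closedBall (0 : E) R, (u p.1 x - u p.2 x) ^ 2)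
      atTop (𝓝 0) := by
  refine tendsto_nhds_zero_of_forall_eventually_lt (fun p => by positivity) fun δ hδ => ?_
  obtain ⟨r, hrδ, hr⟩ : ∃ r : ℝ, 2 * (r ^ 2 * (4 * C)) < δ / 2 ∧ 0 < r := by
    have hcont : Continuous fun r : ℝ => 2 * (r ^ 2 * (4 * C)) := by fun_prop
    have hlim0 : Tendsto (fun r : ℝ => 2 * (r ^ 2 * (4 * C))) (𝓝[>] 0) (𝓝 0) := by
      simpa using (hcont.tendsto 0).mono_left nhdsWithin_le_nhds
    exact ((hlim0.eventually_lt_const (half_pos hδ)).and self_mem_nhdsWithin).exists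
  have havg := tendsto_setIntegral_sq_uniformBall_sub hu hC hlim hr R
  filter_upwards [havg.eventually_lt_const (show 0 < δ / 4 by positivity)] with p hp
  have hle := setIntegral_sq_le_uniformBall hr ((hu p.1).sub_one (hu p.2)) R
  have henergy : 2 * (r ^ 2 * energy volume 1 (fun x => u p.1 x - u p.2 x)) ≤
      2 * (r ^ 2 * (4 * C)) := by
    gcongr
    exact energy_one_sub_le_four_mul hu hC p.1 p.2
  linarith

/-- A measure that dominates Lebesgue measure, is locally dominated by it, and satisfies a Hardy
inequality `∫ ‖x‖² u² ≤ C ‖u‖²` in `H¹(μ)`; the last property confines the `L²` mass of bounded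
sequences, so that `H¹(μ)` embeds compactly into `L²(μ)`. -/
structure ConfiningMeasure (μ : Measure E) (C : ℝ) : Prop where
  volume_le : volume ≤ μ
  exists_restrict_le (R : ℝ) :
    ∃ A : NNReal, μ.restrict (Metric.closedBall 0 R) ≤ A • volume
  integrable_norm_sq_mul_sq {u : E → ℝ} (hu : MemH1 μ 1 u) :
    Integrable (fun x => ‖x‖ ^ 2 * u x ^ 2) μ
  integral_norm_sq_mul_sq_le {u : E → ℝ} (hu : MemH1 μ 1 u) :
    ∫ x, ‖x‖ ^ 2 * u x ^ 2 ∂μ ≤ C * energy μ 1 u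

namespace ConfiningMeasure

variable (hμ : ConfiningMeasure μ C)
include hμ

lemma integral_sq_le (hw : MemH1 μ 1 w) {R : ℝ} (hR : 0 < R) :
    ∫ x, w x ^ 2 ∂μ ≤
      ∫ x in Metric.closedBall 0 R, w x ^ 2 ∂μ + C * energy μ 1 w / R ^ 2 := by
  have htail : ∫ x in (Metric.closedBall 0 R)ᶜ, w x ^ 2 ∂μ ≤ C * energy μ 1 w / R ^ 2 := by
    rw [le_div_iff₀ (by positivity), mul_comm, ← integral_const_mul]
    calc ∫ x in (Metric.closedBall 0 R)ᶜ, R ^ 2 * w x ^ 2 ∂μ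
        ≤ ∫ x in (Metric.closedBall 0 R)ᶜ, ‖x‖ ^ 2 * w x ^ 2 ∂μ := by
          refine setIntegral_mono_on (hw.integrable_sq.const_mul _).integrableOn
            (hμ.integrable_norm_sq_mul_sq hw).integrableOn
            measurableSet_closedBall.compl fun x hx => ?_
          have hx : R < ‖x‖ := by simpa using hx
          gcongr
      _ ≤ ∫ x, ‖x‖ ^ 2 * w x ^ 2 ∂μ := setIntegral_le_integral
          (hμ.integrable_norm_sq_mul_sq hw) (Eventually.of_forall fun x => by positivity)
      _ ≤ C * energy μ 1 w := hμ.integral_norm_sq_mul_sq_le hw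
  rw [← integral_add_compl (measurableSet_closedBall (x := (0 : E)) (ε := R)) hw.integrable_sq]
  gcongr

lemma exists_setIntegral_closedBall_le (R : ℝ) : ∃ A : NNReal, ∀ f : E → ℝ, 0 ≤ f →
    Integrable f volume →
      ∫ x in Metric.closedBall 0 R, f x ∂μ ≤ A * ∫ x in Metric.closedBall 0 R, f x := by
  obtain ⟨A, hA⟩ := hμ.exists_restrict_le R
  refine ⟨A, fun f hf hint => ?_⟩
  have hA' : μ.restrict (Metric.closedBall 0 R) ≤ A • volume.restrict (Metric.closedBall 0 R) := by
    simpa [Measure.restrict_restrict measurableSet_closedBall] using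
      Measure.restrict_mono_measure hA (Metric.closedBall 0 R)
  refine (integral_mono_measure hA' (Eventually.of_forall hf)
    (hint.integrableOn.smul_measure_nnreal)).trans_eq ?_
  rw [integral_smul_nnreal_measure]
  rfl

lemma tendsto_integral_sq {ι : Type*} {l : Filter ι} {w : ι → E → ℝ} {D : ℝ}
    (hw : ∀ i, MemH1 μ 1 (w i)) (hD : ∀ i, energy μ 1 (w i) ≤ D)
    (hlim : ∀ R, Tendsto (fun i => ∫ x in Metric.closedBall 0 R, w i x ^ 2) l (𝓝 0)) :
    Tendsto (fun i => ∫ x, w i x ^ 2 ∂μ) l (𝓝 0) := by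
  refine tendsto_nhds_zero_of_forall_eventually_lt (fun i => by positivity) fun δ hδ => ?_
  obtain ⟨R, hRδ, hR⟩ : ∃ R : ℝ, |C| * D / R ^ 2 < δ / 2 ∧ 0 < R := by
    have hlim0 : Tendsto (fun R : ℝ => |C| * D / R ^ 2) atTop (𝓝 0) :=
      tendsto_const_nhds.div_atTop (tendsto_pow_atTop two_ne_zero)
    exact ((hlim0.eventually_lt_const (half_pos hδ)).and (eventually_gt_atTop 0)).exists
  obtain ⟨A, hA⟩ := hμ.exists_setIntegral_closedBall_le R
  have hball := (hlim R).const_mul (A : ℝ)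
  rw [mul_zero] at hball
  filter_upwards [hball.eventually_lt_const (half_pos hδ)] with i hi
  have hle := hA _ (fun x => sq_nonneg (w i x)) ((hw i).integrable_sq.mono_measure hμ.volume_le)
  have htail : C * energy μ 1 (w i) / R ^ 2 ≤ |C| * D / R ^ 2 := by
    have := energy_nonneg (μ := μ) (V := 1) zero_le_one (w i)
    gcongr
    · exact le_abs_self C
    · exact hD i
  linarith [hμ.integral_sq_le (hw i) hR]

theorem exists_subseq_tendsto_integral_sq_sub {D : ℝ} (hu : ∀ n, MemH1 μ 1 (u n))
    (hD : ∀ n, energy μ 1 (u n) ≤ D) :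
    ∃ σ : ℕ → ℕ, StrictMono σ ∧
      Tendsto (fun p : ℕ × ℕ => ∫ x, (u (σ p.1) x - u (σ p.2) x) ^ 2 ∂μ) atTop (𝓝 0) := by
  have huvol (n : ℕ) : MemH1 volume 1 (u n) := (hu n).mono_measure hμ.volume_le
  have hDvol (n : ℕ) : energy volume 1 (u n) ≤ D :=
    (energy_mono_measure hμ.volume_le zero_le_one (hu n)).trans (hD n)
  obtain ⟨σ, hσ, hlim⟩ := exists_subseq_tendsto_setIntegral (u := u) (C := D)
    (fun n => (memLp_two_iff_integrable_sq
      (huvol n).contDiff.continuous.aestronglyMeasurable).2 (huvol n).integrable_sq)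
    fun n => (huvol n).integral_sq_le.trans (hDvol n)
  exact ⟨σ, hσ, hμ.tendsto_integral_sq (fun p => (hu (σ p.1)).sub_one (hu (σ p.2)))
    (fun p => energy_one_sub_le_four_mul (fun n => hu (σ n)) (fun n => hD (σ n)) p.1 p.2)
    (tendsto_setIntegral_sq_sub (fun n => huvol (σ n)) (fun n => hDvol (σ n)) hlim)⟩

end ConfiningMeasure

end Confinement

section LogarithmicEstimate

variable {E : Type*} [NormedAddCommGroup E] [InnerProductSpace ℝ E] {W v η : E → ℝ} {ε : ℝ} {x : E}

lemma contDiff_log_one_add_div (hε : 0 < ε) (hv0 : 0 ≤ v) (hv : ContDiff ℝ 1 v) :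
    ContDiff ℝ 1 fun x => Real.log (1 + v x / ε) :=
  (contDiff_const.add (hv.div_const ε)).log fun x => by
    have := hv0 x
    simp only [Pi.zero_apply] at this
    positivity

lemma contDiff_sq_div_add (hε : 0 < ε) (hv0 : 0 ≤ v) (hv : ContDiff ℝ 1 v)
    (hη : ContDiff ℝ 1 η) : ContDiff ℝ 1 fun x => η x ^ 2 / (v x + ε) :=
  (hη.pow 2).div (hv.add contDiff_const) fun x => (add_pos_of_nonneg_of_pos (hv0 x) hε).ne'

variable [CompleteSpace E]

lemma gradient_log_one_add_div (hε : 0 < ε) (hv0 : 0 ≤ v x) (hv : DifferentiableAt ℝ v x) :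
    gradient (fun y => Real.log (1 + v y / ε)) x = (v x + ε)⁻¹ • gradient v x := by
  have hpos : 0 < 1 + v x / ε := by positivity
  refine gradient_scomp (((hasDerivAt_id (v x)).div_const ε |>.const_add 1).log hpos.ne'
    |>.congr_deriv ?_) hv
  simp only [id]
  field_simp
  ring

lemma gradient_sq_div_add (hε : 0 < ε) (hv0 : 0 ≤ v x) (hv : DifferentiableAt ℝ v x)
    (hη : DifferentiableAt ℝ η x) :
    gradient (fun y => η y ^ 2 / (v y + ε)) x = (η x / (v x + ε)) •
      ((2 : ℝ) • gradient η x - η x • gradient (fun y => Real.log (1 + v y / ε)) x) := by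
  have hpos : v x + ε ≠ 0 := by positivity
  have hinv : HasDerivAt (fun t => (t + ε)⁻¹) (-((v x + ε) ^ 2)⁻¹) (v x) :=
    (((hasDerivAt_id (v x)).add_const ε).inv hpos).congr_deriv (by simp [neg_div])
  have hsq : HasDerivAt (fun t : ℝ => t ^ 2) (2 * η x) (η x) := by
    simpa using hasDerivAt_pow 2 (η x)
  have hηsq : DifferentiableAt ℝ (fun y => η y ^ 2) x := hη.pow 2
  have hvinv : DifferentiableAt ℝ (fun y => (v y + ε)⁻¹) x := (hv.add_const ε).inv hpos
  simp only [div_eq_mul_inv _ (v _ + ε)]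
  rw [gradient_mul hηsq hvinv, gradient_scomp hinv hv,
    gradient_scomp hsq hη, gradient_log_one_add_div hε hv0 hv]
  simp only [← inv_pow]
  module

lemma inner_gradient_sq_div_add_le (hε : 0 < ε) (hv0 : 0 ≤ v x) (hW : 0 ≤ W x)
    (hv : DifferentiableAt ℝ v x) (hη : DifferentiableAt ℝ η x) :
    ⟪gradient v x, gradient (fun y => η y ^ 2 / (v y + ε)) x⟫ +
        W x * v x * (η x ^ 2 / (v x + ε)) ≤
      2 * energyDensity W η x -
        1 / 2 * (η x ^ 2 * ‖gradient (fun y => Real.log (1 + v y / ε)) x‖ ^ 2) := by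
  have hpos : 0 < v x + ε := by positivity
  have hgrad : gradient v x = (v x + ε) • gradient (fun y => Real.log (1 + v y / ε)) x := by
    rw [gradient_log_one_add_div hε hv0 hv, smul_smul, mul_inv_cancel₀ hpos.ne', one_smul]
  rw [gradient_sq_div_add hε hv0 hv hη, hgrad]
  set z := gradient (fun y => Real.log (1 + v y / ε)) x
  have hinner : ⟪(v x + ε) • z, (η x / (v x + ε)) • ((2 : ℝ) • gradient η x - η x • z)⟫ =
      2 * ⟪η x • z, gradient η x⟫ - ‖η x • z‖ ^ 2 := by
    rw [← real_inner_self_eq_norm_sq]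
    simp only [real_inner_smul_left, real_inner_smul_right, inner_sub_right]
    field_simp
  have hyoung := real_inner_le_norm (η x • z) (gradient η x)
  have hpot : W x * v x * (η x ^ 2 / (v x + ε)) ≤ W x * η x ^ 2 := by
    rw [mul_div_assoc', div_le_iff₀ hpos]
    nlinarith [mul_nonneg (mul_nonneg hW (sq_nonneg (η x))) hε.le]
  have hnorm : η x ^ 2 * ‖z‖ ^ 2 = ‖η x • z‖ ^ 2 := by
    rw [norm_smul, mul_pow, Real.norm_eq_abs, sq_abs]
  rw [hinner, hnorm, energyDensity]
  nlinarith [sq_nonneg (‖η x • z‖ - 2 * ‖gradient η x‖), mul_nonneg hW (sq_nonneg (η x))]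

lemma energyDensity_sq_div_add_le (hε : 0 < ε) (hv0 : 0 ≤ v x) (hW : 0 ≤ W x)
    (hη01 : η x ∈ Set.Icc 0 1) (hv : DifferentiableAt ℝ v x) (hη : DifferentiableAt ℝ η x) :
    energyDensity W (fun y => η y ^ 2 / (v y + ε)) x ≤ (ε⁻¹) ^ 2 * (8 * energyDensity W η x +
      2 * (η x ^ 2 * ‖gradient (fun y => Real.log (1 + v y / ε)) x‖ ^ 2)) := by
  rw [energyDensity, gradient_sq_div_add hε hv0 hv hη, energyDensity]
  set z := gradient (fun y => Real.log (1 + v y / ε)) x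
  have hη0 := hη01.1
  have hle : η x / (v x + ε) ≤ ε⁻¹ := by
    rw [← one_div]
    exact div_le_div₀ zero_le_one hη01.2 hε (by linarith)
  have hgrad : ‖(2 : ℝ) • gradient η x - η x • z‖ ^ 2 ≤
      8 * ‖gradient η x‖ ^ 2 + 2 * (η x ^ 2 * ‖z‖ ^ 2) := by
    have htri := norm_sub_le ((2 : ℝ) • gradient η x) (η x • z)
    simp only [norm_smul, Real.norm_of_nonneg hη0, Real.norm_of_nonneg zero_le_two] at htri
    nlinarith [norm_nonneg ((2 : ℝ) • gradient η x - η x • z),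
      sq_nonneg (2 * ‖gradient η x‖ - η x * ‖z‖)]
  have hfun : (η x ^ 2 / (v x + ε)) ^ 2 = (η x / (v x + ε)) ^ 2 * η x ^ 2 := by ring
  rw [norm_smul, mul_pow, Real.norm_of_nonneg (by positivity), hfun]
  calc (η x / (v x + ε)) ^ 2 * ‖(2 : ℝ) • gradient η x - η x • z‖ ^ 2 +
        W x * ((η x / (v x + ε)) ^ 2 * η x ^ 2)
      = (η x / (v x + ε)) ^ 2 *
          (‖(2 : ℝ) • gradient η x - η x • z‖ ^ 2 + W x * η x ^ 2) := by ring
    _ ≤ (ε⁻¹) ^ 2 * (8 * ‖gradient η x‖ ^ 2 + 2 * (η x ^ 2 * ‖z‖ ^ 2) + 8 * (W x * η x ^ 2)) := by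
        have hpot : W x * η x ^ 2 ≤ 8 * (W x * η x ^ 2) := by
          linarith [mul_nonneg hW (sq_nonneg (η x))]
        gcongr
    _ = _ := by ring

/-- `v` is a supersolution of `-Δ_μ v + W v ≥ 0` up to an error of size `e` in the dual of the
energy norm. -/
def IsAlmostSupersolution [MeasurableSpace E] (μ : Measure E) (W : E → ℝ) (e : ℝ) (v : E → ℝ) :
    Prop :=
  ∀ φ, MemH1 μ W φ → 0 ≤ φ → -(e * √(energy μ W φ)) ≤ energyForm μ W v φ

variable [MeasurableSpace E] [BorelSpace E] {μ : Measure E} [IsFiniteMeasureOnCompacts μ]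

lemma integrable_sq_mul_norm_gradient_log (hε : 0 < ε) (hv0 : 0 ≤ v) (hv : ContDiff ℝ 1 v)
    (hη : Continuous η) (hηs : HasCompactSupport η) :
    Integrable (fun x => η x ^ 2 * ‖gradient (fun y => Real.log (1 + v y / ε)) x‖ ^ 2) μ :=
  ((hη.pow 2).mul ((continuous_gradient (contDiff_log_one_add_div hε hv0 hv)).norm.pow
    2)).integrable_of_hasCompactSupport <| hηs.mono fun x => by simp +contextual

lemma memH1_sq_div_add (hW : Continuous W) (hε : 0 < ε) (hv0 : 0 ≤ v) (hv : ContDiff ℝ 1 v)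
    (hη : ContDiff ℝ 1 η) (hηs : HasCompactSupport η) :
    MemH1 μ W fun x => η x ^ 2 / (v x + ε) :=
  .of_hasCompactSupport hW (contDiff_sq_div_add hε hv0 hv hη) <| hηs.mono fun x => by
    simp +contextual

lemma energyForm_sq_div_add_le (hW : Continuous W) (hW0 : 0 ≤ W) (hv : MemH1 μ W v) (hv0 : 0 ≤ v)
    (hη : ContDiff ℝ 1 η) (hηs : HasCompactSupport η) (hε : 0 < ε) :
    energyForm μ W v (fun x => η x ^ 2 / (v x + ε)) ≤ 2 * energy μ W η -
      1 / 2 * ∫ x, η x ^ 2 * ‖gradient (fun y => Real.log (1 + v y / ε)) x‖ ^ 2 ∂μ := by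
  have hηH : MemH1 μ W η := .of_hasCompactSupport hW hη hηs
  have hφ : MemH1 μ W _ := memH1_sq_div_add hW hε hv0 hv.contDiff hη hηs
  have hint : Integrable _ μ :=
    integrable_sq_mul_norm_gradient_log hε hv0 hv.contDiff hη.continuous hηs
  simp only [energyForm, energy, ← integral_const_mul]
  rw [← integral_sub (hηH.integrable.const_mul _) (hint.const_mul _)]
  exact integral_mono (hv.integrable_energyForm hW hW0 hφ)
    ((hηH.integrable.const_mul _).sub (hint.const_mul _)) fun x =>
      inner_gradient_sq_div_add_le hε (hv0 x) (hW0 x) (hv.contDiff.differentiable one_ne_zero x)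
        (hη.differentiable one_ne_zero x)

lemma energy_sq_div_add_le (hW : Continuous W) (hW0 : 0 ≤ W) (hv : ContDiff ℝ 1 v) (hv0 : 0 ≤ v)
    (hη : ContDiff ℝ 1 η) (hηs : HasCompactSupport η) (hη01 : ∀ x, η x ∈ Set.Icc 0 1)
    (hε : 0 < ε) :
    energy μ W (fun x => η x ^ 2 / (v x + ε)) ≤ (ε⁻¹) ^ 2 * (8 * energy μ W η +
      2 * ∫ x, η x ^ 2 * ‖gradient (fun y => Real.log (1 + v y / ε)) x‖ ^ 2 ∂μ) := by
  have hηH : MemH1 μ W η := .of_hasCompactSupport hW hη hηs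
  have hint : Integrable _ μ := integrable_sq_mul_norm_gradient_log hε hv0 hv hη.continuous hηs
  simp only [energy, ← integral_const_mul]
  rw [← integral_add (hηH.integrable.const_mul _) (hint.const_mul _), ← integral_const_mul]
  exact integral_mono (memH1_sq_div_add hW hε hv0 hv hη hηs).integrable
    (((hηH.integrable.const_mul 8).add (hint.const_mul 2)).const_mul _) fun x =>
      energyDensity_sq_div_add_le hε (hv0 x) (hW0 x) (hη01 x) (hv.differentiable one_ne_zero x)
        (hη.differentiable one_ne_zero x)

-- Testing with `η² / (v + ε)` turns the almost supersolution property into a bound on `∇ log v`.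
lemma IsAlmostSupersolution.integral_sq_mul_norm_gradient_log_le {e : ℝ}
    (hsup : IsAlmostSupersolution μ W e v) (hW : Continuous W) (hW0 : 0 ≤ W) (hv : MemH1 μ W v)
    (hv0 : 0 ≤ v) (hη : ContDiff ℝ 1 η) (hηs : HasCompactSupport η)
    (hη01 : ∀ x, η x ∈ Set.Icc 0 1) (hε : 0 < ε) (he0 : 0 ≤ e) (he1 : e ≤ 1)
    (heε : e ≤ ε ^ 2 / 8) :
    ∫ x, η x ^ 2 * ‖gradient (fun y => Real.log (1 + v y / ε)) x‖ ^ 2 ∂μ ≤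
      12 * energy μ W η + 4 := by
  have hform := energyForm_sq_div_add_le hW hW0 hv hv0 hη hηs hε
  have henergy := energy_sq_div_add_le (μ := μ) hW hW0 hv.contDiff hv0 hη hηs hη01 hε
  have hφ0 : (0 : E → ℝ) ≤ fun x => η x ^ 2 / (v x + ε) := fun x =>
    div_nonneg (sq_nonneg _) (add_nonneg (hv0 x) hε.le)
  have htest := hsup _ (memH1_sq_div_add hW hε hv0 hv.contDiff hη hηs) hφ0
  have hZ : 0 ≤ ∫ x, η x ^ 2 * ‖gradient (fun y => Real.log (1 + v y / ε)) x‖ ^ 2 ∂μ :=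
    integral_nonneg fun x => by positivity
  have hφnn := energy_nonneg (μ := μ) hW0 fun x => η x ^ 2 / (v x + ε)
  have hηnn := energy_nonneg (μ := μ) hW0 η
  set Z := ∫ x, η x ^ 2 * ‖gradient (fun y => Real.log (1 + v y / ε)) x‖ ^ 2 ∂μ
  set Q := energy μ W fun x => η x ^ 2 / (v x + ε)
  have hsqrt : e * √Q ≤ 1 + 1 / 8 * (8 * energy μ W η + 2 * Z) := by
    have hmul : e * (ε⁻¹) ^ 2 ≤ 1 / 8 := by
      rw [inv_pow, ← div_eq_mul_inv, div_le_iff₀ (by positivity)]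
      linarith
    calc e * √Q ≤ e * (1 + Q) := by
          gcongr
          exact (Real.sqrt_le_left (by positivity)).2 (by nlinarith)
      _ ≤ 1 + e * (ε⁻¹) ^ 2 * (8 * energy μ W η + 2 * Z) := by
          linarith [mul_le_mul_of_nonneg_left henergy he0]
      _ ≤ 1 + 1 / 8 * (8 * energy μ W η + 2 * Z) := by gcongr
  linarith

end LogarithmicEstimate

section L2Vanishing

lemma sq_le_add_indicator_add_rpow {p δ Λ t : ℝ} (hp : 2 ≤ p) (hΛ : 0 < Λ) :
    t ^ 2 ≤ δ ^ 2 + Λ ^ 2 * Set.indicator {s : ℝ | δ < |s|} 1 t + Λ ^ (2 - p) * |t| ^ p := by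
  have hpow : 0 ≤ Λ ^ (2 - p) * |t| ^ p := by positivity
  rcases le_or_gt |t| δ with hδ | hδ
  · rw [Set.indicator_of_notMem (by simpa using hδ), ← sq_abs t]
    nlinarith [abs_nonneg t]
  rw [Set.indicator_of_mem (by simpa using hδ), Pi.one_apply, mul_one, ← sq_abs t]
  rcases le_or_gt |t| Λ with hle | hlt
  · nlinarith [abs_nonneg t, sq_nonneg δ]
  · have hsq : |t| ^ 2 ≤ Λ ^ (2 - p) * |t| ^ p := by
      have ht : 0 < |t| := hΛ.trans hlt
      calc |t| ^ 2 = |t| ^ (2 - p) * |t| ^ p := by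
            rw [← Real.rpow_add ht, sub_add_cancel, Real.rpow_two]
        _ ≤ Λ ^ (2 - p) * |t| ^ p :=
            mul_le_mul_of_nonneg_right (Real.rpow_le_rpow_of_nonpos hΛ hlt.le (by linarith))
              (by positivity)
    nlinarith [sq_nonneg δ, sq_nonneg Λ]

lemma integral_sq_le_of_integrable_rpow {α : Type*} [MeasurableSpace α] {μ : Measure α}
    [IsFiniteMeasure μ] {p δ Λ : ℝ} {v : α → ℝ} (hp : 2 ≤ p) (hΛ : 0 < Λ) (hv : Measurable v)
    (hvp : Integrable (fun x => |v x| ^ p) μ) :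
    ∫ x, v x ^ 2 ∂μ ≤ δ ^ 2 * μ.real Set.univ + Λ ^ 2 * μ.real {x | δ < |v x|} +
      Λ ^ (2 - p) * ∫ x, |v x| ^ p ∂μ := by
  have hmeas : MeasurableSet {x | δ < |v x|} := measurableSet_lt measurable_const hv.abs
  have hind : Integrable (Set.indicator {x | δ < |v x|} (1 : α → ℝ)) μ :=
    (integrable_const 1).indicator hmeas
  have hint := (integrable_const (μ := μ) (δ ^ 2)).add (hind.const_mul (Λ ^ 2))
  refine (integral_mono_of_nonneg (Eventually.of_forall fun x => sq_nonneg (v x))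
    (hint.add (hvp.const_mul _)) (Eventually.of_forall fun x =>
      sq_le_add_indicator_add_rpow hp hΛ)).trans_eq ?_
  rw [integral_add' hint (hvp.const_mul _),
    integral_add' (integrable_const _) (hind.const_mul _), integral_const, integral_const_mul,
    integral_const_mul, integral_indicator_one hmeas, smul_eq_mul, mul_comm (μ.real Set.univ)]

lemma tendsto_integral_sq_of_tendsto_measureReal {α ι : Type*} [MeasurableSpace α] {μ : Measure α}
    [IsFiniteMeasure μ] {l : Filter ι} {p P : ℝ} {v : ι → α → ℝ} (hp : 2 < p)
    (hv : ∀ i, Measurable (v i)) (hvp : ∀ i, Integrable (fun x => |v i x| ^ p) μ)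
    (hP : ∀ i, ∫ x, |v i x| ^ p ∂μ ≤ P)
    (hlim : ∀ δ > 0, Tendsto (fun i => μ.real {x | δ < |v i x|}) l (𝓝 0)) :
    Tendsto (fun i => ∫ x, v i x ^ 2 ∂μ) l (𝓝 0) := by
  refine tendsto_nhds_zero_of_forall_eventually_lt (fun i => by positivity) fun t ht => ?_
  obtain ⟨δ, hδt, hδ⟩ : ∃ δ : ℝ, δ ^ 2 * μ.real Set.univ < t / 3 ∧ 0 < δ := by
    have hcont : Continuous fun δ : ℝ => δ ^ 2 * μ.real Set.univ := by fun_prop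
    have hzero : Tendsto (fun δ : ℝ => δ ^ 2 * μ.real Set.univ) (𝓝[>] 0) (𝓝 0) := by
      simpa using (hcont.tendsto 0).mono_left nhdsWithin_le_nhds
    exact ((hzero.eventually_lt_const (by positivity)).and self_mem_nhdsWithin).exists
  obtain ⟨Λ, hΛt, hΛ⟩ : ∃ Λ : ℝ, Λ ^ (2 - p) * P < t / 3 ∧ 0 < Λ := by
    have hzero := (tendsto_rpow_neg_atTop (sub_pos.2 hp)).mul_const P
    rw [zero_mul, neg_sub] at hzero
    exact ((hzero.eventually_lt_const (by positivity)).and (eventually_gt_atTop 0)).exists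
  have hlevel := (hlim δ hδ).const_mul (Λ ^ 2)
  rw [mul_zero] at hlevel
  filter_upwards [hlevel.eventually_lt_const (show 0 < t / 3 by positivity)] with i hi
  have hle := integral_sq_le_of_integrable_rpow (δ := δ) hp.le hΛ (hv i) (hvp i)
  have hPi := mul_le_mul_of_nonneg_left (hP i) (Real.rpow_nonneg hΛ.le (2 - p))
  linarith

variable {E : Type*} [NormedAddCommGroup E] [InnerProductSpace ℝ E] [FiniteDimensional ℝ E]
  [MeasurableSpace E] [BorelSpace E]

lemma integrableOn_ball {f : E → ℝ} (hf : Continuous f) (x : E) (r : ℝ) :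
    IntegrableOn f (Metric.ball x r) :=
  (hf.continuousOn.integrableOn_compact (isCompact_closedBall x r)).mono_set
    Metric.ball_subset_closedBall

lemma setIntegral_ball_sq_sub_translate_le {w : E → ℝ} (hw : ContDiff ℝ 1 w) (y ξ : E) (r : ℝ) :
    ∫ x in Metric.ball y r, (w (x + ξ) - w x) ^ 2 ≤
      ‖ξ‖ ^ 2 * ∫ x in Metric.closedBall 0 (‖y‖ + r + ‖ξ‖), ‖gradient w x‖ ^ 2 := by
  have hwc := hw.continuous
  have hgrad : Continuous fun x => ‖gradient w x‖ ^ 2 := (continuous_gradient hw).norm.pow 2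
  have hseg : ∀ x ∈ Metric.ball y r, ∀ t ∈ Set.Icc (0 : ℝ) 1,
      x + t • ξ ∈ Metric.closedBall (0 : E) (‖y‖ + r + ‖ξ‖) := fun x hx t ht => by
    rw [mem_closedBall_zero_iff]
    have hx : ‖x - y‖ < r := mem_ball_iff_norm.1 hx
    have htξ : ‖t • ξ‖ ≤ ‖ξ‖ := by
      rw [norm_smul, Real.norm_of_nonneg ht.1]
      exact mul_le_of_le_one_left (norm_nonneg _) ht.2
    linarith [norm_add_le x (t • ξ), norm_sub_norm_le x y]
  have hle := setLIntegral_sq_sub_translate_le hw ξ Metric.isOpen_ball.measurableSet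
    measurableSet_closedBall hseg
  rw [← ofReal_integral_eq_lintegral_ofReal (integrableOn_ball (by fun_prop) y r)
      (Eventually.of_forall fun x => sq_nonneg _),
    ← ofReal_integral_eq_lintegral_ofReal
      (hgrad.continuousOn.integrableOn_compact (isCompact_closedBall _ _))
      (Eventually.of_forall fun x => sq_nonneg _), ← ENNReal.ofReal_mul (sq_nonneg _)] at hle
  exact (ENNReal.ofReal_le_ofReal_iff (by positivity)).1 hle

lemma setIntegral_ball_sq_le {w : E → ℝ} (hw : ContDiff ℝ 1 w) (y₀ y : E) (r : ℝ) :
    ∫ x in Metric.ball y r, w x ^ 2 ≤ 2 * (∫ x in Metric.ball y₀ r, w x ^ 2) + 2 * (‖y - y₀‖ ^ 2 *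
      ∫ x in Metric.closedBall 0 (‖y₀‖ + r + ‖y - y₀‖), ‖gradient w x‖ ^ 2) := by
  have hwc := hw.continuous
  have hshift : ∫ x in Metric.ball y r, w x ^ 2 =
      ∫ x in Metric.ball y₀ r, w (x + (y - y₀)) ^ 2 := by
    have hpre : (· + (y - y₀)) ⁻¹' Metric.ball y r = Metric.ball y₀ r := by
      ext x
      simp only [Set.mem_preimage, mem_ball_iff_norm]
      congr! 2
      abel
    rw [← hpre]
    exact ((measurePreserving_add_right volume (y - y₀)).setIntegral_preimage_emb
      (measurableEmbedding_addRight _) (fun x => w x ^ 2) _).symm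
  have hdiff := setIntegral_ball_sq_sub_translate_le hw y₀ (y - y₀) r
  have hw2 := (integrableOn_ball (f := fun x => w x ^ 2) (by fun_prop) y₀ r).const_mul 2
  have hd2 := (integrableOn_ball (f := fun x => (w (x + (y - y₀)) - w x) ^ 2) (by fun_prop)
    y₀ r).const_mul 2
  calc ∫ x in Metric.ball y r, w x ^ 2
      = ∫ x in Metric.ball y₀ r, w (x + (y - y₀)) ^ 2 := hshift
    _ ≤ ∫ x in Metric.ball y₀ r, (2 * w x ^ 2 + 2 * (w (x + (y - y₀)) - w x) ^ 2) :=
        integral_mono (integrableOn_ball (by fun_prop) y₀ r) (hw2.add hd2) fun x => by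
          nlinarith [sq_nonneg (w (x + (y - y₀)) - 2 * w x)]
    _ ≤ _ := by
        rw [integral_add hw2 hd2, integral_const_mul, integral_const_mul]
        linarith

variable {μ : Measure E} [IsFiniteMeasureOnCompacts μ] {W v η : E → ℝ}

lemma log_one_add_sq_mul_measureReal_le {f : E → ℝ} {ε δ : ℝ} (hf : Continuous f) (hf0 : 0 ≤ f)
    (hε : 0 < ε) (hδ : 0 < δ) (y : E) (r : ℝ) :
    Real.log (1 + δ / ε) ^ 2 * volume.real (Metric.ball y r ∩ {x | δ < f x}) ≤
      ∫ x in Metric.ball y r, Real.log (1 + f x / ε) ^ 2 := by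
  have hpos : ∀ x, 0 < 1 + f x / ε := fun x =>
    add_pos_of_pos_of_nonneg one_pos (div_nonneg (hf0 x) hε.le)
  have hcont : Continuous fun x => Real.log (1 + f x / ε) ^ 2 :=
    ((continuous_const.add (hf.div_const ε)).log fun x => (hpos x).ne').pow 2
  have hcheb := mul_meas_ge_le_integral_of_nonneg (Eventually.of_forall fun x => sq_nonneg _)
    (integrableOn_ball hcont y r) (Real.log (1 + δ / ε) ^ 2)
  refine le_trans (mul_le_mul_of_nonneg_left ?_ (sq_nonneg _)) hcheb
  rw [measureReal_restrict_apply' Metric.isOpen_ball.measurableSet, Set.inter_comm]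
  refine measureReal_mono (Set.inter_subset_inter_left _ fun x hx => ?_)
    (measure_ne_top_of_subset Set.inter_subset_right measure_ball_lt_top.ne)
  have hlog0 : 0 ≤ Real.log (1 + δ / ε) := Real.log_nonneg <|
    le_add_of_nonneg_right (by positivity)
  have hx : δ < f x := hx
  rw [Set.mem_ofPred_eq]
  gcongr

lemma IsAlmostSupersolution.log_sq_mul_measureReal_le {e ε δ : ℝ}
    (hsup : IsAlmostSupersolution μ W e v) (hμ : volume ≤ μ) (hW : Continuous W) (hW0 : 0 ≤ W)
    (hv : MemH1 μ W v) (hv0 : 0 ≤ v) (hη : ContDiff ℝ 1 η) (hηs : HasCompactSupport η)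
    (hη01 : ∀ x, η x ∈ Set.Icc 0 1) (hε : 0 < ε) (he0 : 0 ≤ e) (he1 : e ≤ 1)
    (heε : e ≤ ε ^ 2 / 8) (hδ : 0 < δ) {y₀ y : E} {r : ℝ}
    (hη1 : ∀ x, ‖x‖ ≤ ‖y₀‖ + r + ‖y - y₀‖ → η x = 1) :
    Real.log (1 + δ / ε) ^ 2 * volume.real (Metric.ball y r ∩ {x | δ < v x}) ≤
      2 * ((ε⁻¹) ^ 2 * ∫ x in Metric.ball y₀ r, v x ^ 2) +
        2 * (‖y - y₀‖ ^ 2 * (12 * energy μ W η + 4)) := by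
  set w := fun x => Real.log (1 + v x / ε)
  have hw : ContDiff ℝ 1 w := contDiff_log_one_add_div hε hv0 hv.contDiff
  have hvc := hv.contDiff.continuous
  have hwint : Integrable _ μ :=
    integrable_sq_mul_norm_gradient_log hε hv0 hv.contDiff hη.continuous hηs
  have hgrad : ∫ x in Metric.closedBall 0 (‖y₀‖ + r + ‖y - y₀‖), ‖gradient w x‖ ^ 2 ≤
      12 * energy μ W η + 4 := by
    refine le_trans ?_
      (hsup.integral_sq_mul_norm_gradient_log_le hW hW0 hv hv0 hη hηs hη01 hε he0 he1 heε)
    calc ∫ x in Metric.closedBall 0 (‖y₀‖ + r + ‖y - y₀‖), ‖gradient w x‖ ^ 2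
        = ∫ x in Metric.closedBall 0 (‖y₀‖ + r + ‖y - y₀‖), η x ^ 2 * ‖gradient w x‖ ^ 2 :=
          setIntegral_congr_fun measurableSet_closedBall fun x hx => by
            simp [hη1 x (mem_closedBall_zero_iff.1 hx)]
      _ ≤ ∫ x, η x ^ 2 * ‖gradient w x‖ ^ 2 ∂μ :=
          integral_mono_measure (Measure.restrict_le_self.trans hμ)
            (Eventually.of_forall fun x => by positivity) hwint
  have hsmall : ∫ x in Metric.ball y₀ r, w x ^ 2 ≤
      (ε⁻¹) ^ 2 * ∫ x in Metric.ball y₀ r, v x ^ 2 := by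
    rw [← integral_const_mul]
    refine integral_mono (integrableOn_ball (hw.continuous.pow 2) y₀ r)
      (integrableOn_ball (by fun_prop) y₀ r) fun x => ?_
    have hvx : 0 ≤ v x / ε := div_nonneg (hv0 x) hε.le
    have hlog : w x ≤ ε⁻¹ * v x := by
      have := Real.log_le_sub_one_of_pos (show 0 < 1 + v x / ε by positivity)
      rw [inv_mul_eq_div]
      linarith
    have hlog0 : 0 ≤ w x := Real.log_nonneg (by linarith)
    rw [← mul_pow]
    gcongr
  refine (log_one_add_sq_mul_measureReal_le hvc hv0 hε hδ y r).trans <|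
    (setIntegral_ball_sq_le hw y₀ y r).trans ?_
  gcongr

lemma exists_lt_mul_log_one_add_div_sq (K : ℝ) {t δ : ℝ} (ht : 0 < t) (hδ : 0 < δ) :
    ∃ ε > 0, K < t * Real.log (1 + δ / ε) ^ 2 := by
  have hlim : Tendsto (fun ε => t * Real.log (1 + δ / ε) ^ 2) (𝓝[>] 0) atTop :=
    ((tendsto_pow_atTop two_ne_zero).comp <| Real.tendsto_log_atTop.comp <|
      tendsto_atTop_add_const_left _ 1 <| tendsto_inv_nhdsGT_zero.const_mul_atTop
        hδ).const_mul_atTop ht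
  exact ((eventually_mem_nhdsWithin).and (hlim.eventually_gt_atTop K)).exists

variable {ι : Type*} {l : Filter ι} {e : ι → ℝ} {v : ι → E → ℝ}

lemma tendsto_measureReal_ball_inter (hμ : volume ≤ μ) (hW : Continuous W) (hW0 : 0 ≤ W)
    (hv : ∀ i, MemH1 μ W (v i)) (hv0 : ∀ i, 0 ≤ v i)
    (hsup : ∀ i, IsAlmostSupersolution μ W (e i) (v i)) (he0 : ∀ i, 0 ≤ e i)
    (he : Tendsto e l (𝓝 0)) {y₀ : E} {r : ℝ}
    (hlim : Tendsto (fun i => ∫ x in Metric.ball y₀ r, v i x ^ 2) l (𝓝 0)) (y : E) {δ : ℝ}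
    (hδ : 0 < δ) :
    Tendsto (fun i => volume.real (Metric.ball y r ∩ {x | δ < v i x})) l (𝓝 0) := by
  refine tendsto_nhds_zero_of_forall_eventually_lt (fun i => measureReal_nonneg) fun t ht => ?_
  obtain ⟨C, -, χ, hχ⟩ := exists_cutoff_seq E
  obtain ⟨j, hj⟩ := exists_nat_ge (‖y₀‖ + r + ‖y - y₀‖)
  obtain ⟨hχd, hχs, hχ01, hχ1, -⟩ := hχ j
  obtain ⟨ε, hε, hlog⟩ := exists_lt_mul_log_one_add_div_sq
    (1 + 2 * (‖y - y₀‖ ^ 2 * (12 * energy μ W (χ j) + 4))) ht hδ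
  have hlim' := (hlim.const_mul ((ε⁻¹) ^ 2)).const_mul 2
  rw [mul_zero, mul_zero] at hlim'
  filter_upwards [he.eventually_le_const one_pos,
    he.eventually_le_const (show 0 < ε ^ 2 / 8 by positivity),
    hlim'.eventually_le_const one_pos] with i he1 heε hsmall
  have hle := (hsup i).log_sq_mul_measureReal_le (y₀ := y₀) (y := y) (r := r) hμ hW hW0 (hv i)
    (hv0 i) hχd hχs hχ01 hε (he0 i) he1 heε hδ fun x hx => hχ1 x (by linarith)
  by_contra! hge
  nlinarith [mul_le_mul_of_nonneg_left hge (sq_nonneg (Real.log (1 + δ / ε)))]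

lemma tendsto_measureReal_closedBall_inter {r : ℝ} (hr : 0 < r) {s : ι → Set E}
    (h : ∀ y, Tendsto (fun i => volume.real (Metric.ball y r ∩ s i)) l (𝓝 0)) (R : ℝ) :
    Tendsto (fun i => volume.real (Metric.closedBall 0 R ∩ s i)) l (𝓝 0) := by
  have hfin (A : Set E) (hA : volume A ≠ ⊤) (i : ι) : volume (A ∩ s i) ≠ ⊤ :=
    measure_ne_top_of_subset Set.inter_subset_left hA
  refine (ENNReal.tendsto_toReal_zero_iff (hfin _ measure_closedBall_lt_top.ne)).2 ?_
  refine (isCompact_closedBall (0 : E) R).induction_on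
    (p := fun A => Tendsto (fun i => volume (A ∩ s i)) l (𝓝 0))
    (by simpa using tendsto_const_nhds) ?_ ?_ fun y _ => ?_
  · exact fun A B hAB hB => tendsto_of_tendsto_of_tendsto_of_le_of_le tendsto_const_nhds hB
      (fun i => zero_le) fun i => measure_mono (Set.inter_subset_inter_left _ hAB)
  · refine fun A B hA hB => tendsto_of_tendsto_of_tendsto_of_le_of_le tendsto_const_nhds
      (by simpa using hA.add hB) (fun i => zero_le) fun i => ?_
    rw [Set.union_inter_distrib_right]
    exact measure_union_le _ _
  · exact ⟨Metric.ball y r, mem_nhdsWithin_of_mem_nhds (Metric.ball_mem_nhds y hr),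
      (ENNReal.tendsto_toReal_zero_iff (hfin _ measure_ball_lt_top.ne)).1 (h y)⟩

theorem ConfiningMeasure.tendsto_integral_sq_of_isAlmostSupersolution {C p S m D : ℝ}
    (hμ : ConfiningMeasure μ C) (hsob : SobolevInequality μ p S) (hp : 2 < p) (hS : 0 < S)
    (hW : Continuous W) (hm : 0 < m) (hWm : ∀ x, m ≤ W x) (hv : ∀ i, MemH1 μ W (v i))
    (hD : ∀ i, energy μ W (v i) ≤ D) (hv0 : ∀ i, 0 ≤ v i)
    (hsup : ∀ i, IsAlmostSupersolution μ W (e i) (v i)) (he0 : ∀ i, 0 ≤ e i)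
    (he : Tendsto e l (𝓝 0)) {y₀ : E} {r : ℝ} (hr : 0 < r)
    (hlim : Tendsto (fun i => ∫ x in Metric.ball y₀ r, v i x ^ 2) l (𝓝 0)) :
    Tendsto (fun i => ∫ x, v i x ^ 2 ∂μ) l (𝓝 0) := by
  have hW0 : 0 ≤ W := fun x => hm.le.trans (hWm x)
  have hv1 (i : ι) : MemH1 μ 1 (v i) := (hv i).one hm hWm
  have hD1 (i : ι) : energy μ 1 (v i) ≤ (1 + m⁻¹) * D :=
    (energy_one_le hm hWm (hv i)).trans (mul_le_mul_of_nonneg_left (hD i) (by positivity))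
  refine hμ.tendsto_integral_sq hv1 hD1 fun R => ?_
  have hvp (i : ι) : Integrable (fun x => |v i x| ^ p) volume :=
    (hsob.integrable_rpow (hv1 i)).mono_measure hμ.volume_le
  have hP (i : ι) : ∫ x in Metric.closedBall 0 R, |v i x| ^ p ≤
      ((1 + m⁻¹) * D / S) ^ (p / 2) := by
    refine (integral_mono_measure (Measure.restrict_le_self.trans hμ.volume_le)
      (Eventually.of_forall fun x => by positivity) (hsob.integrable_rpow (hv1 i))).trans ?_
    refine (hsob.integral_rpow_le (by linarith) hS (hv1 i)).trans ?_
    have := energy_nonneg (μ := μ) (V := 1) zero_le_one (v i)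
    have := hD1 i
    gcongr
  have : IsFiniteMeasure (volume.restrict (Metric.closedBall (0 : E) R)) :=
    isFiniteMeasure_restrict.2 measure_closedBall_lt_top.ne
  refine tendsto_integral_sq_of_tendsto_measureReal hp
    (fun i => (hv i).contDiff.continuous.measurable) (fun i => (hvp i).integrableOn) hP
    fun δ hδ => ?_
  refine (tendsto_measureReal_closedBall_inter hr (fun y => tendsto_measureReal_ball_inter
    hμ.volume_le hW hW0 hv hv0 hsup he0 he hlim y hδ) R).congr fun i => ?_
  simp only [abs_of_nonneg (hv0 i _)]
  rw [measureReal_restrict_apply' measurableSet_closedBall, Set.inter_comm]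

end L2Vanishing

section Nonlinearity

/-- Growth of a critical nonlinearity penalized outside the region `O`: inside `O` it is the
critical power `t ^ (p - 1)` plus a nonnegative term of lower order at infinity, outside it is at
most `ν * t`. -/
structure CriticalPenalization {E : Type*} [TopologicalSpace E] [MeasurableSpace E]
    (μ : Measure E) (O : Set E) (p ν : ℝ) (g : E → ℝ → ℝ) : Prop where
  nonneg {x : E} {t : ℝ} (ht : 0 ≤ t) : 0 ≤ g x t
  le_mul {x : E} {t : ℝ} (hx : x ∉ O) (ht : 0 ≤ t) : g x t ≤ ν * t
  rpow_le {x : E} {t : ℝ} (hx : x ∈ O) (ht : 0 ≤ t) : t ^ (p - 1) ≤ g x t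
  exists_le_add {η : ℝ} (hη : 0 < η) :
    ∃ C, 0 ≤ C ∧ ∀ x ∈ O, ∀ t, 0 ≤ t → g x t ≤ (1 + η) * t ^ (p - 1) + C * t
  aestronglyMeasurable {u : E → ℝ} (hu : Continuous u) :
    AEStronglyMeasurable (fun x => g x (u x)) μ

/-- The Ambrosetti–Rabinowitz condition with exponent `θ` on `O` and exponent `2` elsewhere, for a
nonlinearity `g` and its primitive `G`. -/
structure AmbrosettiRabinowitz {E : Type*} [TopologicalSpace E] [MeasurableSpace E]
    (μ : Measure E) (O : Set E) (θ : ℝ) (g G : E → ℝ → ℝ) : Prop where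
  primitive_nonneg {x : E} {t : ℝ} (ht : 0 ≤ t) : 0 ≤ G x t
  primitive_le {x : E} {t : ℝ} (ht : 0 ≤ t) : G x t ≤ 1 / 2 * (g x t * t)
  primitive_le_of_mem {x : E} {t : ℝ} (hx : x ∈ O) (ht : 0 ≤ t) : G x t ≤ 1 / θ * (g x t * t)
  aestronglyMeasurable_primitive {u : E → ℝ} (hu : Continuous u) :
    AEStronglyMeasurable (fun x => G x (u x)) μ

/-- The functional `½ ∫ (‖∇u‖² + W u²) dμ - ∫ G(x, u) dμ`. -/
def action {E : Type*} [NormedAddCommGroup E] [InnerProductSpace ℝ E] [CompleteSpace E]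
    [MeasurableSpace E] (μ : Measure E) (W : E → ℝ) (G : E → ℝ → ℝ) (u : E → ℝ) : ℝ :=
  1 / 2 * energy μ W u - ∫ x, G x (u x) ∂μ

/-- The derivative at `u` in the direction `φ` of the action whose nonlinearity is `g`. -/
def actionDeriv {E : Type*} [NormedAddCommGroup E] [InnerProductSpace ℝ E] [CompleteSpace E]
    [MeasurableSpace E] (μ : Measure E) (W : E → ℝ) (g : E → ℝ → ℝ) (u φ : E → ℝ) : ℝ :=
  energyForm μ W u φ - ∫ x, g x (u x) * φ x ∂μ

/-- `u` is `e`-almost critical if the derivative of the action at `u` has dual norm at most `e`. -/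
def IsAlmostCritical {E : Type*} [NormedAddCommGroup E] [InnerProductSpace ℝ E] [CompleteSpace E]
    [MeasurableSpace E] (μ : Measure E) (W : E → ℝ) (g : E → ℝ → ℝ) (e : ℝ) (u : E → ℝ) : Prop :=
  ∀ φ, MemH1 μ W φ → |actionDeriv μ W g u φ| ≤ e * √(energy μ W φ)

/-- A family of nonnegative `C¹` functions which, along the filter `l`, is a Palais–Smale family of
the action at the level `c`. -/
structure IsNonnegPalaisSmale {E ι : Type*} [NormedAddCommGroup E] [InnerProductSpace ℝ E]
    [CompleteSpace E] [MeasurableSpace E] (μ : Measure E) (W : E → ℝ) (g G : E → ℝ → ℝ) (c : ℝ)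
    (l : Filter ι) (u : ι → E → ℝ) : Prop where
  memH1 (i : ι) : MemH1 μ W (u i)
  nonneg (i : ι) : 0 ≤ u i
  tendsto_action : Tendsto (fun i => action μ W G (u i)) l (𝓝 c)
  exists_isAlmostCritical : ∃ e : ι → ℝ, (∀ i, 0 ≤ e i) ∧ Tendsto e l (𝓝 0) ∧
    ∀ i, IsAlmostCritical μ W g (e i) (u i)

lemma rpow_sub_one_mul_self {p t : ℝ} (hp : p ≠ 0) (ht : 0 ≤ t) : t ^ (p - 1) * t = t ^ p := by
  rw [← Real.rpow_add_one' ht (by simpa using hp), sub_add_cancel]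

lemma rpow_sub_one_mul_le {p s t : ℝ} (hp : 1 ≤ p) (hs : 0 ≤ s) (ht : 0 ≤ t) :
    s ^ (p - 1) * t ≤ s ^ p + t ^ p := by
  have hp0 : p ≠ 0 := by positivity
  have : 0 ≤ p - 1 := by linarith
  rcases le_total s t with h | h
  · calc s ^ (p - 1) * t ≤ t ^ (p - 1) * t := by gcongr
      _ ≤ s ^ p + t ^ p := by
        rw [rpow_sub_one_mul_self hp0 ht]
        exact le_add_of_nonneg_left (by positivity)
  · calc s ^ (p - 1) * t ≤ s ^ (p - 1) * s := by gcongr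
      _ ≤ s ^ p + t ^ p := by
        rw [rpow_sub_one_mul_self hp0 hs]
        exact le_add_of_nonneg_right (by positivity)

namespace CriticalPenalization

variable {E : Type*} [NormedAddCommGroup E] [MeasurableSpace E] {μ : Measure E} {O : Set E}
  {p ν S : ℝ} {g : E → ℝ → ℝ} {u φ : E → ℝ}

lemma exists_le (hg : CriticalPenalization μ O p ν g) (hν : 0 ≤ ν) :
    ∃ C, 0 ≤ C ∧ ∀ x t, 0 ≤ t → g x t ≤ C * (t + t ^ (p - 1)) := by
  obtain ⟨C, hC, hgC⟩ := hg.exists_le_add one_pos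
  refine ⟨ν + C + 2, by positivity, fun x t ht => ?_⟩
  have hpow : 0 ≤ t ^ (p - 1) := by positivity
  by_cases hx : x ∈ O
  · nlinarith [hgC x hx t ht]
  · nlinarith [hg.le_mul hx ht]

lemma rpow_le_mul {x : E} {t : ℝ} (hg : CriticalPenalization μ O p ν g) (hp : p ≠ 0) (hx : x ∈ O)
    (ht : 0 ≤ t) : t ^ p ≤ g x t * t := by
  rw [← rpow_sub_one_mul_self hp ht]
  exact mul_le_mul_of_nonneg_right (hg.rpow_le hx ht) ht

variable [InnerProductSpace ℝ E] [CompleteSpace E] [BorelSpace E]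

lemma integrable_mul (hg : CriticalPenalization μ O p ν g)
    (hsob : SobolevInequality μ p S) (hp : 1 ≤ p) (hν : 0 ≤ ν) (hu : MemH1 μ 1 u) (hu0 : 0 ≤ u)
    (hφ : MemH1 μ 1 φ) : Integrable (fun x => g x (u x) * φ x) μ := by
  obtain ⟨C, hC, hgC⟩ := hg.exists_le hν
  have hint := ((hu.integrable_sq.add hφ.integrable_sq).add
    ((hsob.integrable_rpow hu).add (hsob.integrable_rpow hφ))).const_mul C
  refine hint.mono' ((hg.aestronglyMeasurable hu.contDiff.continuous).mul
    hφ.contDiff.continuous.aestronglyMeasurable) (Eventually.of_forall fun x => ?_)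
  have hux : 0 ≤ u x := hu0 x
  rw [norm_mul, Real.norm_of_nonneg (hg.nonneg hux), Real.norm_eq_abs]
  simp only [Pi.add_apply, abs_of_nonneg hux]
  calc g x (u x) * |φ x| ≤ C * (u x + u x ^ (p - 1)) * |φ x| := by gcongr; exact hgC x _ hux
    _ = C * (u x * |φ x| + u x ^ (p - 1) * |φ x|) := by ring
    _ ≤ C * (u x ^ 2 + φ x ^ 2 + (u x ^ p + |φ x| ^ p)) := by
      gcongr
      · rw [← sq_abs (φ x)]
        nlinarith [sq_nonneg (u x - |φ x|), sq_nonneg (u x + |φ x|)]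
      · exact rpow_sub_one_mul_le hp hux (abs_nonneg _)

lemma integral_mul_le (hg : CriticalPenalization μ O p ν g)
    (hsob : SobolevInequality μ p S) (hp : 1 ≤ p) (hν : 0 ≤ ν) (hO : MeasurableSet O)
    (hu : MemH1 μ 1 u) (hu0 : 0 ≤ u) :
    ∫ x, g x (u x) * u x ∂μ ≤ (∫ x in O, g x (u x) * u x ∂μ) + ν * ∫ x, u x ^ 2 ∂μ := by
  have hint := hg.integrable_mul hsob hp hν hu hu0 hu
  have hsq := hu.integrable_sq.const_mul ν
  rw [← integral_add_compl hO hint, ← integral_const_mul]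
  gcongr
  refine (setIntegral_mono_on hint.integrableOn hsq.integrableOn hO.compl fun x hx => ?_).trans
    (setIntegral_le_integral hsq (Eventually.of_forall fun _ => by positivity))
  calc g x (u x) * u x ≤ ν * u x * u x :=
        mul_le_mul_of_nonneg_right (hg.le_mul hx (hu0 x)) (hu0 x)
    _ = ν * u x ^ 2 := by ring

lemma setIntegral_sq_le (hg : CriticalPenalization μ O p ν g)
    (hsob : SobolevInequality μ p S) (hp : 2 ≤ p) (hν : 0 ≤ ν) (hO : MeasurableSet O)
    (hOμ : μ O ≠ ⊤) (hu : MemH1 μ 1 u) (hu0 : 0 ≤ u) :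
    ∫ x in O, u x ^ 2 ∂μ ≤ μ.real O + ∫ x in O, g x (u x) * u x ∂μ := by
  have hone : IntegrableOn (fun _ => (1 : ℝ)) O μ := integrableOn_const hOμ
  have hint := (hg.integrable_mul hsob (by linarith) hν hu hu0 hu).integrableOn (s := O)
  have hμO : μ.real O = ∫ _ in O, (1 : ℝ) ∂μ := by simp
  rw [hμO, ← integral_add hone hint]
  refine setIntegral_mono_on hu.integrable_sq.integrableOn (hone.add hint) hO fun x hx => ?_
  have hux : 0 ≤ u x := hu0 x
  rcases le_total (u x) 1 with h | h
  · have := mul_nonneg (hg.nonneg hux (x := x)) hux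
    nlinarith
  · calc u x ^ 2 = u x ^ (2 : ℝ) := (Real.rpow_two _).symm
      _ ≤ u x ^ p := Real.rpow_le_rpow_of_exponent_le h hp
      _ ≤ g x (u x) * u x := hg.rpow_le_mul (by positivity) hx hux
      _ ≤ 1 + g x (u x) * u x := by linarith

end CriticalPenalization

namespace IsAlmostCritical

variable {E : Type*} [NormedAddCommGroup E] [InnerProductSpace ℝ E] [CompleteSpace E]
  [MeasurableSpace E] {μ : Measure E} {O : Set E} {p ν S m θ e : ℝ} {g G : E → ℝ → ℝ}
  {W u : E → ℝ}

lemma isAlmostSupersolution_const_mul {c : ℝ} (hcrit : IsAlmostCritical μ W g e u)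
    (hg : CriticalPenalization μ O p ν g) (hu : ContDiff ℝ 1 u) (hu0 : 0 ≤ u) (hc : 0 ≤ c) :
    IsAlmostSupersolution μ W (c * e) fun x => c * u x := by
  intro φ hφ hφ0
  have hform : energyForm μ W (fun x => c * u x) φ = c * energyForm μ W u φ := by
    simp only [energyForm, ← integral_const_mul]
    congr 1 with x
    rw [gradient_const_mul c (hu.differentiable one_ne_zero x), real_inner_smul_left]
    ring
  have hpos : 0 ≤ ∫ x, g x (u x) * φ x ∂μ :=
    integral_nonneg fun x => mul_nonneg (hg.nonneg (hu0 x)) (hφ0 x)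
  have hlow := (abs_le.1 (hcrit φ hφ)).1
  unfold actionDeriv at hlow
  rw [hform, mul_assoc, ← mul_neg]
  exact mul_le_mul_of_nonneg_left (by linarith) hc

lemma energy_le [BorelSpace E] (hcrit : IsAlmostCritical μ W g e u)
    (hg : CriticalPenalization μ O p ν g) (hsob : SobolevInequality μ p S) (hp : 1 ≤ p)
    (hν : 0 ≤ ν) (hO : MeasurableSet O) (hm : 0 < m) (hWm : ∀ x, m ≤ W x) (hu : MemH1 μ W u)
    (hu0 : 0 ≤ u) : energy μ W u ≤
      e * √(energy μ W u) + (∫ x in O, g x (u x) * u x ∂μ) + ν * ∫ x, u x ^ 2 ∂μ := by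
  have hself := (abs_le.1 (hcrit u hu)).2
  rw [actionDeriv, energyForm_self] at hself
  linarith [hg.integral_mul_le hsob hp hν hO (hu.one hm hWm) hu0]

lemma mul_setIntegral_le [BorelSpace E] (hcrit : IsAlmostCritical μ W g e u)
    (hg : CriticalPenalization μ O p ν g) (hG : AmbrosettiRabinowitz μ O θ g G)
    (hsob : SobolevInequality μ p S) (hp : 1 ≤ p) (hν : 0 ≤ ν) (hO : MeasurableSet O)
    (hm : 0 < m) (hWm : ∀ x, m ≤ W x) (hu : MemH1 μ W u) (hu0 : 0 ≤ u) :
    (1 / 2 - 1 / θ) * ∫ x in O, g x (u x) * u x ∂μ ≤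
      action μ W G u + e / 2 * √(energy μ W u) := by
  have hu1 := hu.one hm hWm
  have hint := hg.integrable_mul hsob hp hν hu1 hu0 hu1
  have hintG : Integrable (fun x => G x (u x)) μ := by
    refine (hint.const_mul (1 / 2)).mono' (hG.aestronglyMeasurable_primitive
      hu.contDiff.continuous) (Eventually.of_forall fun x => ?_)
    rw [Real.norm_of_nonneg (hG.primitive_nonneg (hu0 x))]
    exact hG.primitive_le (hu0 x)
  have hdiff := (hint.const_mul (1 / 2)).sub hintG
  have hself := (abs_le.1 (hcrit u hu)).1
  rw [actionDeriv, energyForm_self] at hself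
  calc (1 / 2 - 1 / θ) * ∫ x in O, g x (u x) * u x ∂μ
      = ∫ x in O, (1 / 2 - 1 / θ) * (g x (u x) * u x) ∂μ := (integral_const_mul _ _).symm
    _ ≤ ∫ x in O, (1 / 2 * (g x (u x) * u x) - G x (u x)) ∂μ :=
      setIntegral_mono_on (hint.const_mul _).integrableOn hdiff.integrableOn hO fun x hx => by
        linarith [hG.primitive_le_of_mem hx (hu0 x)]
    _ ≤ ∫ x, (1 / 2 * (g x (u x) * u x) - G x (u x)) ∂μ :=
      setIntegral_le_integral hdiff (Eventually.of_forall fun x =>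
        sub_nonneg.2 (hG.primitive_le (hu0 x)))
    _ = action μ W G u - 1 / 2 * (energy μ W u - ∫ x, g x (u x) * u x ∂μ) := by
      rw [integral_sub (hint.const_mul _) hintG, integral_const_mul, action]
      ring
    _ ≤ action μ W G u + e / 2 * √(energy μ W u) := by linarith

end IsAlmostCritical

lemma IsNonnegPalaisSmale.comp {E ι κ : Type*} [NormedAddCommGroup E] [InnerProductSpace ℝ E]
    [CompleteSpace E] [MeasurableSpace E] {μ : Measure E} {W : E → ℝ} {g G : E → ℝ → ℝ} {c : ℝ}
    {l : Filter ι} {l' : Filter κ} {u : ι → E → ℝ} {σ : κ → ι}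
    (hps : IsNonnegPalaisSmale μ W g G c l u) (hσ : Tendsto σ l' l) :
    IsNonnegPalaisSmale μ W g G c l' (u ∘ σ) := by
  obtain ⟨e, he0, he, hcrit⟩ := hps.exists_isAlmostCritical
  exact ⟨fun i => hps.memH1 (σ i), fun i => hps.nonneg (σ i), hps.tendsto_action.comp hσ, e ∘ σ,
    fun i => he0 (σ i), he.comp hσ, fun i => hcrit (σ i)⟩

end Nonlinearity

section Boundedness

lemma exists_strictMono_tendsto_atTop_of_not_bddAbove {t : ℕ → ℝ}
    (ht : ¬BddAbove (Set.range t)) : ∃ σ : ℕ → ℕ, StrictMono σ ∧ Tendsto (t ∘ σ) atTop atTop := by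
  have hfreq (n : ℕ) : ∃ᶠ k in atTop, (n : ℝ) ≤ t k := fun hlt =>
    ht (IsBoundedUnder.bddAbove_range ⟨n, hlt.mono fun k hk => (not_le.1 hk).le⟩)
  obtain ⟨σ, hσ, hσt⟩ := extraction_forall_of_frequently hfreq
  exact ⟨σ, hσ, tendsto_atTop_mono hσt tendsto_natCast_atTop_atTop⟩

variable {E ι : Type*} [NormedAddCommGroup E] [InnerProductSpace ℝ E] [FiniteDimensional ℝ E]
  [MeasurableSpace E] [BorelSpace E] {μ : Measure E} {O : Set E} {p ν S m θ c C : ℝ}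
  {g G : E → ℝ → ℝ} {W : E → ℝ} {l : Filter ι} {u : ι → E → ℝ}
  (hg : CriticalPenalization μ O p ν g) (hG : AmbrosettiRabinowitz μ O θ g G)
  (hsob : SobolevInequality μ p S) (hp : 2 < p) (hν : 0 ≤ ν) (hθ : 2 < θ) (hm : 0 < m)
  (hWm : ∀ x, m ≤ W x)
include hg hG hsob hp hν hθ hm hWm

lemma IsNonnegPalaisSmale.tendsto_inv_energy_mul_setIntegral
    (hps : IsNonnegPalaisSmale μ W g G c l u) (hO : MeasurableSet O)
    (hlim : Tendsto (fun i => energy μ W (u i)) l atTop) :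
    Tendsto (fun i => (energy μ W (u i))⁻¹ * ∫ x in O, g x (u i x) * u i x ∂μ) l (𝓝 0) := by
  obtain ⟨e, -, he, hcrit⟩ := hps.exists_isAlmostCritical
  have hW0 : 0 ≤ W := fun x => hm.le.trans (hWm x)
  have hQ0 (i : ι) := energy_nonneg (μ := μ) hW0 (u i)
  have hθ' : 0 < 1 / 2 - 1 / θ := sub_pos.2 (one_div_lt_one_div_of_lt two_pos hθ)
  have hinv := tendsto_inv_atTop_zero.comp hlim
  have hinvsqrt := tendsto_inv_atTop_zero.comp (Real.tendsto_sqrt_atTop.comp hlim)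
  have hbound : Tendsto (fun i => (1 / 2 - 1 / θ)⁻¹ *
      ((energy μ W (u i))⁻¹ * action μ W G (u i) + e i / 2 * (√(energy μ W (u i)))⁻¹)) l
      (𝓝 0) := by
    simpa using ((hinv.mul hps.tendsto_action).add ((he.div_const 2).mul hinvsqrt)).const_mul _
  refine squeeze_zero (fun i => mul_nonneg (inv_nonneg.2 (hQ0 i)) (integral_nonneg fun x =>
    mul_nonneg (hg.nonneg (hps.nonneg i x)) (hps.nonneg i x))) (fun i => ?_) hbound
  rw [← Real.sqrt_div_self, div_eq_inv_mul √(energy μ W (u i)), mul_left_comm (e i / 2),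
    ← mul_add, mul_left_comm]
  refine mul_le_mul_of_nonneg_left ?_ (inv_nonneg.2 (hQ0 i))
  rw [le_inv_mul_iff₀ hθ']
  exact (hcrit i).mul_setIntegral_le hg hG hsob (by linarith) hν hO hm hWm (hps.memH1 i)
    (hps.nonneg i)

lemma IsNonnegPalaisSmale.tendsto_setIntegral_inv_sqrt_energy_mul_sq
    (hps : IsNonnegPalaisSmale μ W g G c l u) (hO : MeasurableSet O) (hOμ : μ O ≠ ⊤)
    (hlim : Tendsto (fun i => energy μ W (u i)) l atTop) :
    Tendsto (fun i => ∫ x in O, ((√(energy μ W (u i)))⁻¹ * u i x) ^ 2 ∂μ) l (𝓝 0) := by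
  have hW0 : 0 ≤ W := fun x => hm.le.trans (hWm x)
  have hQ0 (i : ι) := energy_nonneg (μ := μ) hW0 (u i)
  have hbound : Tendsto (fun i => (energy μ W (u i))⁻¹ * μ.real O +
      (energy μ W (u i))⁻¹ * ∫ x in O, g x (u i x) * u i x ∂μ) l (𝓝 0) := by
    simpa using ((tendsto_inv_atTop_zero.comp hlim).mul_const (μ.real O)).add
      (hps.tendsto_inv_energy_mul_setIntegral hg hG hsob hp hν hθ hm hWm hO hlim)
  refine squeeze_zero (fun i => integral_nonneg fun x => sq_nonneg _) (fun i => ?_) hbound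
  simp only [mul_pow, inv_pow, Real.sq_sqrt (hQ0 i)]
  rw [integral_const_mul, ← mul_add]
  exact mul_le_mul_of_nonneg_left (hg.setIntegral_sq_le hsob hp.le hν hO hOμ
    ((hps.memH1 i).one hm hWm) (hps.nonneg i)) (inv_nonneg.2 (hQ0 i))

variable [IsFiniteMeasureOnCompacts μ] (hμ : ConfiningMeasure μ C) (hS : 0 < S)
  (hW : Continuous W) (hO : IsOpen O) (hOn : O.Nonempty) (hOμ : μ O ≠ ⊤)
include hμ hS hW hO hOn hOμ

lemma IsNonnegPalaisSmale.tendsto_integral_inv_sqrt_energy_mul_sq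
    (hps : IsNonnegPalaisSmale μ W g G c l u)
    (hlim : Tendsto (fun i => energy μ W (u i)) l atTop) :
    Tendsto (fun i => ∫ x, ((√(energy μ W (u i)))⁻¹ * u i x) ^ 2 ∂μ) l (𝓝 0) := by
  obtain ⟨e, he0, he, hcrit⟩ := hps.exists_isAlmostCritical
  have hW0 : 0 ≤ W := fun x => hm.le.trans (hWm x)
  have hQ0 (i : ι) := energy_nonneg (μ := μ) hW0 (u i)
  have hinv0 (i : ι) : 0 ≤ (√(energy μ W (u i)))⁻¹ := by positivity
  have hinv : Tendsto (fun i => (√(energy μ W (u i)))⁻¹) l (𝓝 0) :=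
    tendsto_inv_atTop_zero.comp (Real.tendsto_sqrt_atTop.comp hlim)
  have hv (i : ι) := (hps.memH1 i).const_mul (√(energy μ W (u i)))⁻¹
  have hv1 (i : ι) : energy μ W (fun x => (√(energy μ W (u i)))⁻¹ * u i x) ≤ 1 := by
    rw [energy_const_mul μ W _ (hps.memH1 i).contDiff, inv_pow, Real.sq_sqrt (hQ0 i)]
    exact inv_mul_le_one
  obtain ⟨y₀, hy₀⟩ := hOn
  obtain ⟨r, hr, hball⟩ := Metric.isOpen_iff.1 hO y₀ hy₀
  refine hμ.tendsto_integral_sq_of_isAlmostSupersolution (y₀ := y₀) hsob hp hS hW hm hWm hv hv1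
    (fun i x => mul_nonneg (hinv0 i) (hps.nonneg i x))
    (fun i => (hcrit i).isAlmostSupersolution_const_mul hg (hps.memH1 i).contDiff (hps.nonneg i)
      (hinv0 i))
    (fun i => mul_nonneg (hinv0 i) (he0 i)) (by simpa using hinv.mul he) hr
    (squeeze_zero (fun i => integral_nonneg fun x => sq_nonneg _) (fun i => ?_)
      (hps.tendsto_setIntegral_inv_sqrt_energy_mul_sq hg hG hsob hp hν hθ hm hWm
        hO.measurableSet hOμ hlim))
  exact integral_mono_measure (Measure.restrict_mono hball hμ.volume_le)
    (Eventually.of_forall fun x => sq_nonneg _) ((hv i).one hm hWm).integrable_sq.integrableOn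

-- Dividing `energy ≤ e √energy + ∫_O g u + ν ∫ u²` by the energy would give `1 ≤ o(1)`.
lemma IsNonnegPalaisSmale.not_tendsto_energy_atTop [l.NeBot]
    (hps : IsNonnegPalaisSmale μ W g G c l u) :
    ¬Tendsto (fun i => energy μ W (u i)) l atTop := by
  intro hlim
  obtain ⟨e, -, he, hcrit⟩ := hps.exists_isAlmostCritical
  have hsq := hps.tendsto_integral_inv_sqrt_energy_mul_sq hg hG hsob hp hν hθ hm hWm hμ hS hW hO
    hOn hOμ hlim
  have hOlim := hps.tendsto_inv_energy_mul_setIntegral hg hG hsob hp hν hθ hm hWm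
    hO.measurableSet hlim
  have hbound := ((he.mul (tendsto_inv_atTop_zero.comp (Real.tendsto_sqrt_atTop.comp hlim))).add
    hOlim).add (hsq.const_mul ν)
  simp only [mul_zero, add_zero] at hbound
  refine one_pos.not_ge (ge_of_tendsto hbound ?_)
  filter_upwards [hlim.eventually_gt_atTop 0] with i hQ
  have hle := (hcrit i).energy_le hg hsob (by linarith) hν hO.measurableSet hm hWm (hps.memH1 i)
    (hps.nonneg i)
  simp only [mul_pow, inv_pow, Real.sq_sqrt hQ.le, Function.comp_apply]
  rw [integral_const_mul, ← Real.sqrt_div_self, ← mul_le_mul_iff_of_pos_left hQ]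
  calc energy μ W (u i) * 1 ≤ _ := (mul_one _).trans_le hle
    _ = _ := by field_simp

theorem IsNonnegPalaisSmale.bddAbove_energy {u : ℕ → E → ℝ}
    (hps : IsNonnegPalaisSmale μ W g G c atTop u) :
    BddAbove (Set.range fun n => energy μ W (u n)) := by
  by_contra hunb
  obtain ⟨σ, hσ, hlim⟩ := exists_strictMono_tendsto_atTop_of_not_bddAbove hunb
  exact (hps.comp hσ.tendsto_atTop).not_tendsto_energy_atTop hg hG hsob hp hν hθ hm hWm hμ hS hW
    hO hOn hOμ hlim

end Boundedness

section UniformIntegrability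

section Holder

variable {α : Type*} [MeasurableSpace α] {μ : Measure α} {p : ℝ} {f h : α → ℝ}

lemma rpow_sub_two_mul_sq {t : ℝ} (hp : p ≠ 0) (ht : 0 ≤ t) : t ^ (p - 2) * t ^ 2 = t ^ p := by
  rw [← Real.rpow_two, ← Real.rpow_add' ht (by simpa using hp), sub_add_cancel]

lemma rpow_sub_two_mul_sq_le {s t : ℝ} (hp : 2 ≤ p) (hs : 0 ≤ s) (ht : 0 ≤ t) :
    s ^ (p - 2) * t ^ 2 ≤ s ^ p + t ^ p := by
  have hp0 : p ≠ 0 := by positivity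
  have : 0 ≤ p - 2 := by linarith
  rcases le_total s t with h | h
  · calc s ^ (p - 2) * t ^ 2 ≤ t ^ (p - 2) * t ^ 2 := by gcongr
      _ = t ^ p := rpow_sub_two_mul_sq hp0 ht
      _ ≤ s ^ p + t ^ p := le_add_of_nonneg_left (by positivity)
  · calc s ^ (p - 2) * t ^ 2 ≤ s ^ (p - 2) * s ^ 2 := by gcongr
      _ = s ^ p := rpow_sub_two_mul_sq hp0 hs
      _ ≤ s ^ p + t ^ p := le_add_of_nonneg_right (by positivity)

lemma integrable_rpow_sub_two_mul_sq (hp : 2 ≤ p) (hf0 : 0 ≤ f) (hh0 : 0 ≤ h)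
    (hf : AEStronglyMeasurable f μ) (hh : AEStronglyMeasurable h μ)
    (hfp : Integrable (fun x => f x ^ p) μ) (hhp : Integrable (fun x => h x ^ p) μ) :
    Integrable (fun x => f x ^ (p - 2) * h x ^ 2) μ := by
  refine (hfp.add hhp).mono' ((hf.aemeasurable.pow_const _).aestronglyMeasurable.mul (hh.pow 2))
    (Eventually.of_forall fun x => ?_)
  rw [Real.norm_of_nonneg (mul_nonneg (Real.rpow_nonneg (hf0 x) _) (sq_nonneg _))]
  exact rpow_sub_two_mul_sq_le hp (hf0 x) (hh0 x)

lemma memLp_ofReal_of_integrable_rpow {s : ℝ} (hs : 0 < s) (hf0 : 0 ≤ f)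
    (hf : AEStronglyMeasurable f μ) (hfs : Integrable (fun x => f x ^ s) μ) :
    MemLp f (ENNReal.ofReal s) μ := by
  rw [← integrable_norm_rpow_iff hf (by simpa using hs) ENNReal.ofReal_ne_top,
    ENNReal.toReal_ofReal hs.le]
  exact hfs.congr (Eventually.of_forall fun x => by simp only [Real.norm_of_nonneg (hf0 x)])

lemma integral_rpow_sub_two_mul_sq_le (hp : 2 < p) (hf0 : 0 ≤ f) (hh0 : 0 ≤ h)
    (hf : AEStronglyMeasurable f μ) (hh : AEStronglyMeasurable h μ)
    (hfp : Integrable (fun x => f x ^ p) μ) (hhp : Integrable (fun x => h x ^ p) μ) :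
    ∫ x, f x ^ (p - 2) * h x ^ 2 ∂μ ≤
      (∫ x, f x ^ p ∂μ) ^ ((p - 2) / p) * (∫ x, h x ^ p ∂μ) ^ (2 / p) := by
  have hp2 : 0 < p - 2 := by linarith
  have hconj : (p / (p - 2)).HolderConjugate (p / 2) := by
    rw [Real.holderConjugate_iff]
    exact ⟨(one_lt_div hp2).2 (by linarith), by field_simp; ring⟩
  have hfpow (x : α) : (f x ^ (p - 2)) ^ (p / (p - 2)) = f x ^ p := by
    rw [← Real.rpow_mul (hf0 x), mul_div_cancel₀ _ hp2.ne']
  have hhpow (x : α) : (h x ^ 2) ^ (p / 2) = h x ^ p := by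
    rw [← Real.rpow_two, ← Real.rpow_mul (hh0 x), mul_div_cancel₀ _ two_ne_zero]
  have hf' (x : α) : 0 ≤ f x ^ (p - 2) := Real.rpow_nonneg (hf0 x) _
  have hh' (x : α) : 0 ≤ h x ^ 2 := sq_nonneg _
  have hfLp := memLp_ofReal_of_integrable_rpow hconj.pos hf'
    (hf.aemeasurable.pow_const _).aestronglyMeasurable (by simpa only [hfpow] using hfp)
  have hhLp := memLp_ofReal_of_integrable_rpow hconj.symm.pos hh' (hh.pow 2)
    (by simpa only [hhpow] using hhp)
  simpa only [hfpow, hhpow, one_div_div] using integral_mul_le_Lp_mul_Lq_of_nonneg hconj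
    (Eventually.of_forall hf') (Eventually.of_forall hh') hfLp hhLp

end Holder

/-- The bounded weight `m(t) = (L (1 + t) / (L + t)) ^ r`, a smooth substitute for
`min (1 + t) L ^ r` in Moser's test function `u m(u)²`. -/
def moserWeight (L r t : ℝ) : ℝ := (L * (1 + t) / (L + t)) ^ r

/-- The elasticity `t m'(t) / m(t)` of `moserWeight`. -/
def moserElasticity (L r t : ℝ) : ℝ := r * (t * (L - 1) / ((L + t) * (1 + t)))

section MoserWeight

variable {L r t : ℝ}

lemma one_le_mul_one_add_div_add (hL : 1 ≤ L) (ht : 0 ≤ t) : 1 ≤ L * (1 + t) / (L + t) := by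
  rw [one_le_div (by linarith)]
  nlinarith

lemma one_le_moserWeight (hL : 1 ≤ L) (hr : 0 ≤ r) (ht : 0 ≤ t) : 1 ≤ moserWeight L r t :=
  Real.one_le_rpow (one_le_mul_one_add_div_add hL ht) hr

lemma moserWeight_le (hL : 1 ≤ L) (hr : 0 ≤ r) (ht : 0 ≤ t) : moserWeight L r t ≤ L ^ r := by
  refine Real.rpow_le_rpow (by positivity) ((div_le_iff₀ (by linarith)).2 ?_) hr
  nlinarith

lemma moserWeight_sq_le (hL : 1 ≤ L) (hr : 0 ≤ r) (ht : 0 ≤ t) :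
    moserWeight L r t ^ 2 ≤ (1 + t) ^ (2 * r) := by
  have hle : moserWeight L r t ≤ (1 + t) ^ r := by
    refine Real.rpow_le_rpow (by positivity) ((div_le_iff₀ (by linarith)).2 ?_) hr
    nlinarith
  calc moserWeight L r t ^ 2 ≤ ((1 + t) ^ r) ^ 2 :=
        pow_le_pow_left₀ (zero_le_one.trans (one_le_moserWeight hL hr ht)) hle 2
    _ = (1 + t) ^ (2 * r) := by rw [mul_comm, Real.rpow_mul (by positivity), Real.rpow_two]

lemma rpow_le_moserWeight (hL : 1 ≤ L) (hr : 0 ≤ r) (ht : L ≤ t) :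
    ((1 + L) / 2) ^ r ≤ moserWeight L r t := by
  refine Real.rpow_le_rpow (by positivity) ((le_div_iff₀ (by linarith)).2 ?_) hr
  nlinarith

lemma moserElasticity_nonneg (hL : 1 ≤ L) (hr : 0 ≤ r) (ht : 0 ≤ t) :
    0 ≤ moserElasticity L r t := by
  have : 0 ≤ L - 1 := by linarith
  unfold moserElasticity
  positivity

lemma moserElasticity_le (hL : 1 ≤ L) (hr : 0 ≤ r) (ht : 0 ≤ t) : moserElasticity L r t ≤ r := by
  refine mul_le_of_le_one_right hr ((div_le_one (by positivity)).2 ?_)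
  nlinarith

lemma hasDerivAt_moserWeight (hL : 1 ≤ L) (ht : 0 ≤ t) :
    HasDerivAt (moserWeight L r)
      (moserWeight L r t * (r * ((L - 1) / ((L + t) * (1 + t))))) t := by
  have hLt : L + t ≠ 0 := by positivity
  have hbase : HasDerivAt (fun t => L * (1 + t) / (L + t)) (L * (L - 1) / (L + t) ^ 2) t :=
    (((hasDerivAt_id t).const_add 1).const_mul L).div ((hasDerivAt_id t).const_add L) hLt
      |>.congr_deriv (by simp only [id]; ring)
  have hpos := zero_lt_one.trans_le (one_le_mul_one_add_div_add hL ht)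
  refine (hbase.rpow_const (p := r) (Or.inl hpos.ne')).congr_deriv ?_
  rw [Real.rpow_sub_one hpos.ne', moserWeight]
  field_simp

lemma hasDerivAt_mul_moserWeight (hL : 1 ≤ L) (ht : 0 ≤ t) :
    HasDerivAt (fun t => t * moserWeight L r t)
      (moserWeight L r t * (1 + moserElasticity L r t)) t := by
  refine ((hasDerivAt_id t).mul (hasDerivAt_moserWeight hL ht)).congr_deriv ?_
  simp only [moserElasticity, id]
  ring

lemma hasDerivAt_mul_moserWeight_sq (hL : 1 ≤ L) (ht : 0 ≤ t) :
    HasDerivAt (fun t => t * moserWeight L r t ^ 2)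
      (moserWeight L r t ^ 2 * (1 + 2 * moserElasticity L r t)) t := by
  refine ((hasDerivAt_id t).mul ((hasDerivAt_moserWeight hL ht).pow 2)).congr_deriv ?_
  simp only [moserElasticity, id, Pi.pow_apply]
  ring

lemma abs_deriv_mul_moserWeight_sq_le (hL : 1 ≤ L) (hr : 0 ≤ r) (ht : 0 ≤ t) :
    |moserWeight L r t ^ 2 * (1 + 2 * moserElasticity L r t)| ≤ (L ^ r) ^ 2 * (1 + 2 * r) := by
  have hm0 := zero_le_one.trans (one_le_moserWeight hL hr ht)
  have hs0 := moserElasticity_nonneg hL hr ht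
  rw [abs_of_nonneg (by positivity)]
  gcongr
  · exact moserWeight_le hL hr ht
  · exact moserElasticity_le hL hr ht

lemma abs_mul_moserWeight_sq_le (hL : 1 ≤ L) (hr : 0 ≤ r) (ht : 0 ≤ t) :
    |t * moserWeight L r t ^ 2| ≤ (L ^ r) ^ 2 * (1 + 2 * r) * |t| := by
  have hm0 := zero_le_one.trans (one_le_moserWeight hL hr ht)
  rw [abs_mul, abs_of_nonneg (pow_nonneg hm0 2), mul_comm]
  gcongr
  calc moserWeight L r t ^ 2 ≤ (L ^ r) ^ 2 := by gcongr; exact moserWeight_le hL hr ht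
    _ ≤ (L ^ r) ^ 2 * (1 + 2 * r) := le_mul_of_one_le_right (by positivity) (by linarith)

lemma sq_mul_one_add_rpow_le {p : ℝ} (hp : 2 ≤ p) (ht : 0 ≤ t) :
    t ^ 2 * (1 + t) ^ (p - 2) ≤ 2 ^ (p - 2) * (t ^ 2 + t ^ p) := by
  have : 0 ≤ p - 2 := by linarith
  rw [mul_add]
  rcases le_total t 1 with h | h
  · calc t ^ 2 * (1 + t) ^ (p - 2) ≤ t ^ 2 * 2 ^ (p - 2) := by gcongr; linarith
      _ ≤ 2 ^ (p - 2) * t ^ 2 + 2 ^ (p - 2) * t ^ p := by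
        rw [mul_comm]
        exact le_add_of_nonneg_right (by positivity)
  · calc t ^ 2 * (1 + t) ^ (p - 2) ≤ t ^ 2 * (2 * t) ^ (p - 2) := by gcongr; linarith
      _ = 2 ^ (p - 2) * t ^ p := by
        rw [Real.mul_rpow zero_le_two ht, ← rpow_sub_two_mul_sq (p := p) (by positivity) ht]
        ring
      _ ≤ 2 ^ (p - 2) * t ^ 2 + 2 ^ (p - 2) * t ^ p := le_add_of_nonneg_left (by positivity)

end MoserWeight

section MoserTestFunction

variable {E : Type*} [NormedAddCommGroup E] [InnerProductSpace ℝ E] {L r : ℝ} {u : E → ℝ}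

lemma contDiff_moserWeight_comp (hL : 1 ≤ L) (hu : ContDiff ℝ 1 u) (hu0 : 0 ≤ u) :
    ContDiff ℝ 1 fun x => moserWeight L r (u x) := by
  have hden (x : E) : L + u x ≠ 0 := (add_pos_of_pos_of_nonneg (by linarith) (hu0 x)).ne'
  exact ((contDiff_const.mul (contDiff_const.add hu)).div (contDiff_const.add hu) hden
    ).rpow_const_of_ne fun x =>
      (zero_lt_one.trans_le (one_le_mul_one_add_div_add hL (hu0 x))).ne'

variable [CompleteSpace E]

lemma norm_gradient_mul_moserWeight_sq_le {V : E → ℝ} {x : E} (hL : 1 ≤ L) (hr : 0 ≤ r)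
    (hV : 0 ≤ V x) (hu0 : 0 ≤ u x) (hu : DifferentiableAt ℝ u x) :
    ‖gradient (fun y => u y * moserWeight L r (u y)) x‖ ^ 2 ≤
      (1 + r) ^ 2 * (⟪gradient u x, gradient (fun y => u y * moserWeight L r (u y) ^ 2) x⟫ +
        V x * u x * (u x * moserWeight L r (u x) ^ 2)) := by
  rw [gradient_scomp (hasDerivAt_mul_moserWeight hL hu0) hu,
    gradient_scomp (hasDerivAt_mul_moserWeight_sq hL hu0) hu, norm_smul, mul_pow,
    Real.norm_eq_abs, sq_abs, real_inner_smul_right, real_inner_self_eq_norm_sq]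
  have hs0 := moserElasticity_nonneg hL hr hu0
  have hsr := moserElasticity_le hL hr hu0
  set s := moserElasticity L r (u x)
  set m := moserWeight L r (u x)
  calc (m * (1 + s)) ^ 2 * ‖gradient u x‖ ^ 2
      ≤ (m ^ 2 * ((1 + r) ^ 2 * (1 + 2 * s))) * ‖gradient u x‖ ^ 2 := by
        rw [mul_pow]
        gcongr
        calc (1 + s) ^ 2 ≤ (1 + r) ^ 2 * 1 := by rw [mul_one]; gcongr
          _ ≤ (1 + r) ^ 2 * (1 + 2 * s) := by gcongr; linarith
    _ = (1 + r) ^ 2 * (m ^ 2 * (1 + 2 * s) * ‖gradient u x‖ ^ 2) := by ring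
    _ ≤ (1 + r) ^ 2 * (m ^ 2 * (1 + 2 * s) * ‖gradient u x‖ ^ 2 + V x * u x * (u x * m ^ 2)) := by
        gcongr
        exact le_add_of_nonneg_right (by positivity)

variable [MeasurableSpace E] [BorelSpace E] {μ : Measure E} {V : E → ℝ}

lemma MemH1.mul_moserWeight (hu : MemH1 μ V u) (hV : Continuous V) (hV0 : 0 ≤ V) (hL : 1 ≤ L)
    (hr : 0 ≤ r) (hu0 : 0 ≤ u) : MemH1 μ V fun x => u x * moserWeight L r (u x) := by
  have hm0 (x : E) := zero_le_one.trans (one_le_moserWeight hL hr (hu0 x))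
  have hs0 (x : E) := moserElasticity_nonneg hL hr (hu0 x)
  have hm (x : E) := moserWeight_le hL hr (hu0 x)
  refine hu.scomp hV hV0 (C := L ^ r * (1 + r)) (ψ := fun t => t * moserWeight L r t)
    (ψ' := fun t => moserWeight L r t * (1 + moserElasticity L r t))
    (hu.contDiff.mul (contDiff_moserWeight_comp hL hu.contDiff hu0))
    (fun x => hasDerivAt_mul_moserWeight hL (hu0 x)) (fun x => ?_) fun x => ?_
  · rw [abs_of_nonneg (mul_nonneg (hm0 x) (by linarith [hs0 x]))]
    gcongr
    · linarith [hs0 x]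
    · exact hm x
    · exact moserElasticity_le hL hr (hu0 x)
  · rw [abs_mul, abs_of_nonneg (hm0 x), mul_comm]
    gcongr
    exact (hm x).trans (le_mul_of_one_le_right (by positivity) (by linarith))

lemma MemH1.mul_moserWeight_sq (hu : MemH1 μ V u) (hV : Continuous V) (hV0 : 0 ≤ V) (hL : 1 ≤ L)
    (hr : 0 ≤ r) (hu0 : 0 ≤ u) : MemH1 μ V fun x => u x * moserWeight L r (u x) ^ 2 :=
  hu.scomp hV hV0 (ψ := fun t => t * moserWeight L r t ^ 2)
    (ψ' := fun t => moserWeight L r t ^ 2 * (1 + 2 * moserElasticity L r t))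
    (hu.contDiff.mul ((contDiff_moserWeight_comp hL hu.contDiff hu0).pow 2))
    (fun x => hasDerivAt_mul_moserWeight_sq hL (hu0 x))
    (fun x => abs_deriv_mul_moserWeight_sq_le hL hr (hu0 x))
    fun x => abs_mul_moserWeight_sq_le hL hr (hu0 x)

lemma energy_mul_moserWeight_sq_le (hu : MemH1 μ V u) (hV : Continuous V) (hV0 : 0 ≤ V)
    (hL : 1 ≤ L) (hr : 0 ≤ r) (hu0 : 0 ≤ u) :
    energy μ V (fun x => u x * moserWeight L r (u x) ^ 2) ≤
      ((L ^ r) ^ 2 * (1 + 2 * r)) ^ 2 * energy μ V u :=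
  energy_scomp_le hV hV0 hu (ψ := fun t => t * moserWeight L r t ^ 2)
    (ψ' := fun t => moserWeight L r t ^ 2 * (1 + 2 * moserElasticity L r t))
    (hu.contDiff.mul ((contDiff_moserWeight_comp hL hu.contDiff hu0).pow 2))
    (fun x => hasDerivAt_mul_moserWeight_sq hL (hu0 x))
    (fun x => abs_deriv_mul_moserWeight_sq_le hL hr (hu0 x))
    fun x => abs_mul_moserWeight_sq_le hL hr (hu0 x)

lemma integral_mul_moserWeight_sq_le {p : ℝ} (hL : 1 ≤ L) (hr : 0 ≤ r) (hrp : 2 * r ≤ p - 2)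
    (hu : MemH1 μ 1 u) (hu0 : 0 ≤ u) (hup : Integrable (fun x => u x ^ p) μ) :
    ∫ x, (u x * moserWeight L r (u x)) ^ 2 ∂μ ≤
      2 ^ (p - 2) * ((∫ x, u x ^ 2 ∂μ) + ∫ x, u x ^ p ∂μ) := by
  rw [← integral_add hu.integrable_sq hup, ← integral_const_mul]
  refine integral_mono (hu.mul_moserWeight continuous_const zero_le_one hL hr hu0).integrable_sq
    ((hu.integrable_sq.add hup).const_mul _) fun x => ?_
  have hux : 0 ≤ u x := hu0 x
  calc (u x * moserWeight L r (u x)) ^ 2 = u x ^ 2 * moserWeight L r (u x) ^ 2 := mul_pow _ _ 2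
    _ ≤ u x ^ 2 * (1 + u x) ^ (2 * r) := by gcongr; exact moserWeight_sq_le hL hr hux
    _ ≤ u x ^ 2 * (1 + u x) ^ (p - 2) := by
      gcongr
      linarith
    _ ≤ 2 ^ (p - 2) * (u x ^ 2 + u x ^ p) := sq_mul_one_add_rpow_le (by linarith) hux

end MoserTestFunction

section MoserEstimate

lemma CriticalPenalization.mul_mul_sq_le_indicator {E : Type*} [TopologicalSpace E]
    [MeasurableSpace E] {μ : Measure E} {O : Set E} {p ν C η t : ℝ} {g : E → ℝ → ℝ}
    (hg : CriticalPenalization μ O p ν g) (hp : p ≠ 0) (hν : 0 ≤ ν) (hC : 0 ≤ C)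
    (hgC : ∀ x ∈ O, ∀ t, 0 ≤ t → g x t ≤ (1 + η) * t ^ (p - 1) + C * t) (ht : 0 ≤ t) (w : ℝ)
    (x : E) : g x t * (t * w ^ 2) ≤
      (1 + η) * O.indicator (fun _ => t ^ (p - 2) * (t * w) ^ 2) x + (C + ν) * (t * w) ^ 2 := by
  by_cases hx : x ∈ O
  · rw [Set.indicator_of_mem hx]
    calc g x t * (t * w ^ 2) ≤ ((1 + η) * t ^ (p - 1) + C * t) * (t * w ^ 2) :=
          mul_le_mul_of_nonneg_right (hgC x hx t ht) (by positivity)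
      _ = (1 + η) * (t ^ (p - 1) * t * w ^ 2) + C * (t * w) ^ 2 := by ring
      _ = (1 + η) * (t ^ (p - 2) * (t * w) ^ 2) + C * (t * w) ^ 2 := by
        rw [rpow_sub_one_mul_self hp ht, mul_pow, ← mul_assoc (t ^ (p - 2)),
          rpow_sub_two_mul_sq hp ht]
      _ ≤ (1 + η) * (t ^ (p - 2) * (t * w) ^ 2) + (C + ν) * (t * w) ^ 2 := by
        gcongr
        linarith
  · rw [Set.indicator_of_notMem hx, mul_zero, zero_add]
    calc g x t * (t * w ^ 2) ≤ ν * t * (t * w ^ 2) :=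
          mul_le_mul_of_nonneg_right (hg.le_mul hx ht) (by positivity)
      _ = ν * (t * w) ^ 2 := by ring
      _ ≤ (C + ν) * (t * w) ^ 2 := by
        gcongr
        linarith

variable {E : Type*} [NormedAddCommGroup E] [InnerProductSpace ℝ E] [CompleteSpace E]
  [MeasurableSpace E] {μ : Measure E} {O : Set E} {p ν S C m η e L r : ℝ} {g : E → ℝ → ℝ}
  {u v w W : E → ℝ}

lemma SobolevInequality.integrable_rpow_of_nonneg (hsob : SobolevInequality μ p S)
    (hu : MemH1 μ 1 u) (hu0 : 0 ≤ u) : Integrable (fun x => u x ^ p) μ := by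
  have habs (x : E) : |u x| = u x := abs_of_nonneg (hu0 x)
  simpa only [habs] using hsob.integrable_rpow hu

lemma SobolevInequality.integral_rpow_le_of_nonneg (hsob : SobolevInequality μ p S) (hp : 0 < p)
    (hS : 0 < S) (hu : MemH1 μ 1 u) (hu0 : 0 ≤ u) :
    ∫ x, u x ^ p ∂μ ≤ (energy μ 1 u / S) ^ (p / 2) := by
  have habs (x : E) : |u x| = u x := abs_of_nonneg (hu0 x)
  simpa only [habs] using hsob.integral_rpow_le hp hS hu

lemma energy_one_eq [BorelSpace E] (hu : MemH1 μ 1 u) :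
    energy μ 1 u = (∫ x, ‖gradient u x‖ ^ 2 ∂μ) + ∫ x, u x ^ 2 ∂μ := by
  rw [← integral_add (hu.integrable_norm_gradient_sq zero_le_one) hu.integrable_sq]
  simp only [energy, energyDensity, Pi.one_apply, one_mul]

lemma SobolevInequality.setIntegral_rpow_sub_two_mul_sq_le [BorelSpace E]
    (hsob : SobolevInequality μ p S) (hp : 2 < p) (hS : 0 < S) (hu : MemH1 μ 1 u) (hu0 : 0 ≤ u)
    (hv : MemH1 μ 1 v) (hv0 : 0 ≤ v) :
    ∫ x in O, u x ^ (p - 2) * v x ^ 2 ∂μ ≤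
      (∫ x in O, u x ^ p ∂μ) ^ ((p - 2) / p) / S * energy μ 1 v := by
  have hup := hsob.integrable_rpow_of_nonneg hu hu0
  have hvp := hsob.integrable_rpow_of_nonneg hv hv0
  have hup0 : 0 ≤ ∫ x in O, u x ^ p ∂μ := integral_nonneg fun x => Real.rpow_nonneg (hu0 x) _
  have hvp0 : 0 ≤ ∫ x in O, v x ^ p ∂μ := integral_nonneg fun x => Real.rpow_nonneg (hv0 x) _
  have hvle : ∫ x in O, v x ^ p ∂μ ≤ (energy μ 1 v / S) ^ (p / 2) :=
    (setIntegral_le_integral hvp (Eventually.of_forall fun x => Real.rpow_nonneg (hv0 x) _)).trans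
      (hsob.integral_rpow_le_of_nonneg (by linarith) hS hv hv0)
  have hQ := energy_nonneg (μ := μ) zero_le_one v
  rw [div_mul_eq_mul_div, mul_div_assoc]
  refine (integral_rpow_sub_two_mul_sq_le hp hu0 hv0 hu.contDiff.continuous.aestronglyMeasurable
    hv.contDiff.continuous.aestronglyMeasurable hup.integrableOn hvp.integrableOn).trans ?_
  gcongr
  rw [le_div_iff₀' hS]
  exact (mul_rpow_two_div_le_iff (by linarith) hS hvp0 hQ).2 hvle

lemma CriticalPenalization.integral_mul_mul_sq_le [BorelSpace E]
    (hg : CriticalPenalization μ O p ν g) (hsob : SobolevInequality μ p S) (hp : 2 < p)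
    (hS : 0 < S) (hν : 0 ≤ ν) (hO : MeasurableSet O) (hC : 0 ≤ C) (hη : 0 ≤ η)
    (hgC : ∀ x ∈ O, ∀ t, 0 ≤ t → g x t ≤ (1 + η) * t ^ (p - 1) + C * t) (hu : MemH1 μ 1 u)
    (hu0 : 0 ≤ u) (hw0 : 0 ≤ w) (huw : MemH1 μ 1 fun x => u x * w x)
    (huw2 : MemH1 μ 1 fun x => u x * w x ^ 2) :
    ∫ x, g x (u x) * (u x * w x ^ 2) ∂μ ≤
      (1 + η) * ((∫ x in O, u x ^ p ∂μ) ^ ((p - 2) / p) / S * energy μ 1 fun x => u x * w x) +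
        (C + ν) * ∫ x, (u x * w x) ^ 2 ∂μ := by
  have hv0 : 0 ≤ fun x => u x * w x := fun x => mul_nonneg (hu0 x) (hw0 x)
  have hmix := (integrable_rpow_sub_two_mul_sq hp.le hu0 hv0
    hu.contDiff.continuous.aestronglyMeasurable huw.contDiff.continuous.aestronglyMeasurable
    (hsob.integrable_rpow_of_nonneg hu hu0) (hsob.integrable_rpow_of_nonneg huw hv0)).indicator hO
  calc ∫ x, g x (u x) * (u x * w x ^ 2) ∂μ
      ≤ ∫ x, (1 + η) * O.indicator (fun x => u x ^ (p - 2) * (u x * w x) ^ 2) x +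
          (C + ν) * (u x * w x) ^ 2 ∂μ :=
        integral_mono (hg.integrable_mul hsob (by linarith) hν hu hu0 huw2)
          ((hmix.const_mul _).add (huw.integrable_sq.const_mul _)) fun x =>
            hg.mul_mul_sq_le_indicator (by linarith) hν hC hgC (hu0 x) (w x) x
    _ = (1 + η) * (∫ x in O, u x ^ (p - 2) * (u x * w x) ^ 2 ∂μ) +
          (C + ν) * ∫ x, (u x * w x) ^ 2 ∂μ := by
        rw [integral_add (hmix.const_mul _) (huw.integrable_sq.const_mul _), integral_const_mul,
          integral_const_mul, integral_indicator hO]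
    _ ≤ _ := by
        gcongr
        exact hsob.setIntegral_rpow_sub_two_mul_sq_le hp hS hu hu0 huw hv0

lemma IsAlmostCritical.integral_norm_gradient_mul_moserWeight_sq_le [BorelSpace E]
    (hcrit : IsAlmostCritical μ W g e u) (he : 0 ≤ e) (hW : Continuous W) (hW0 : 0 ≤ W)
    (hu : MemH1 μ W u) (hu0 : 0 ≤ u) (hL : 1 ≤ L) (hr : 0 ≤ r) :
    ∫ x, ‖gradient (fun y => u y * moserWeight L r (u y)) x‖ ^ 2 ∂μ ≤
      (1 + r) ^ 2 * ((∫ x, g x (u x) * (u x * moserWeight L r (u x) ^ 2) ∂μ) +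
        e * ((L ^ r) ^ 2 * (1 + 2 * r) * √(energy μ W u))) := by
  have hφ := hu.mul_moserWeight_sq hW hW0 hL hr hu0
  set φ : E → ℝ := fun y => u y * moserWeight L r (u y) ^ 2
  have hsqrt : √(energy μ W φ) ≤ (L ^ r) ^ 2 * (1 + 2 * r) * √(energy μ W u) := by
    rw [Real.sqrt_le_left (by positivity), mul_pow, Real.sq_sqrt (energy_nonneg hW0 u)]
    exact energy_mul_moserWeight_sq_le hu hW hW0 hL hr hu0
  calc ∫ x, ‖gradient (fun y => u y * moserWeight L r (u y)) x‖ ^ 2 ∂μ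
      ≤ (1 + r) ^ 2 * energyForm μ W u φ := by
        rw [energyForm, ← integral_const_mul]
        exact integral_mono
          ((hu.mul_moserWeight hW hW0 hL hr hu0).integrable_norm_gradient_sq hW0)
          ((hu.integrable_energyForm hW hW0 hφ).const_mul _) fun x =>
            norm_gradient_mul_moserWeight_sq_le hL hr (hW0 x) (hu0 x)
              (hu.contDiff.differentiable one_ne_zero x)
    _ ≤ (1 + r) ^ 2 * ((∫ x, g x (u x) * φ x ∂μ) + e * √(energy μ W φ)) := by
        gcongr
        linarith [(le_abs_self _).trans (hcrit φ hφ), show actionDeriv μ W g u φ =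
          energyForm μ W u φ - ∫ x, g x (u x) * φ x ∂μ from rfl]
    _ ≤ _ := by gcongr

lemma IsAlmostCritical.mul_energy_mul_moserWeight_le [BorelSpace E]
    (hcrit : IsAlmostCritical μ W g e u) (he : 0 ≤ e) (hg : CriticalPenalization μ O p ν g)
    (hsob : SobolevInequality μ p S) (hp : 2 < p) (hS : 0 < S) (hν : 0 ≤ ν)
    (hO : MeasurableSet O) (hm : 0 < m) (hWm : ∀ x, m ≤ W x) (hW : Continuous W) (hC : 0 ≤ C)
    (hη : 0 ≤ η) (hgC : ∀ x ∈ O, ∀ t, 0 ≤ t → g x t ≤ (1 + η) * t ^ (p - 1) + C * t)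
    (hu : MemH1 μ W u) (hu0 : 0 ≤ u) (hL : 1 ≤ L) (hr : 0 ≤ r) (hrp : 2 * r ≤ p - 2) :
    (1 - (1 + r) ^ 2 * (1 + η) * ((∫ x in O, u x ^ p ∂μ) ^ ((p - 2) / p) / S)) *
        energy μ 1 (fun x => u x * moserWeight L r (u x)) ≤
      ((1 + r) ^ 2 * (C + ν) + 1) *
          (2 ^ (p - 2) * ((∫ x, u x ^ 2 ∂μ) + ∫ x, u x ^ p ∂μ)) +
        (1 + r) ^ 2 * (e * ((L ^ r) ^ 2 * (1 + 2 * r) * √(energy μ W u))) := by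
  have hu1 := hu.one hm hWm
  have hv := hu1.mul_moserWeight continuous_one zero_le_one hL hr hu0
  have hw0 : 0 ≤ fun x => moserWeight L r (u x) := fun x =>
    zero_le_one.trans (one_le_moserWeight hL hr (hu0 x))
  have hgrad := hcrit.integral_norm_gradient_mul_moserWeight_sq_le he hW
    (fun x => hm.le.trans (hWm x)) hu hu0 hL hr
  have hnonlin := mul_le_mul_of_nonneg_left (hg.integral_mul_mul_sq_le hsob hp hS hν hO hC hη hgC
    hu1 hu0 hw0 hv (hu1.mul_moserWeight_sq continuous_one zero_le_one hL hr hu0))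
    (sq_nonneg (1 + r))
  have hsq := mul_le_mul_of_nonneg_left (integral_mul_moserWeight_sq_le hL hr hrp hu1 hu0
    (hsob.integrable_rpow_of_nonneg hu1 hu0))
    (show 0 ≤ (1 + r) ^ 2 * (C + ν) + 1 by positivity)
  have henergy := energy_one_eq hv
  linarith

end MoserEstimate

section Tail

variable {E : Type*} [NormedAddCommGroup E] [InnerProductSpace ℝ E] [CompleteSpace E]
  [MeasurableSpace E] [BorelSpace E] {μ : Measure E} {O : Set E}
  {p ν θ S m c T L r : ℝ} {g G : E → ℝ → ℝ} {u W : E → ℝ}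

lemma SobolevInequality.mul_setIntegral_rpow_le (hsob : SobolevInequality μ p S) (hp : 0 < p)
    (hS : 0 < S) (hu : MemH1 μ 1 u) (hu0 : 0 ≤ u) (hL : 1 ≤ L) (hr : 0 ≤ r) :
    ((1 + L) / 2) ^ (r * p) * ∫ x in {x | L < u x}, u x ^ p ∂μ ≤
      (energy μ 1 (fun x => u x * moserWeight L r (u x)) / S) ^ (p / 2) := by
  have hv := hu.mul_moserWeight continuous_one zero_le_one hL hr hu0
  have hw0 (x : E) : 0 ≤ moserWeight L r (u x) :=
    zero_le_one.trans (one_le_moserWeight hL hr (hu0 x))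
  have hv0 : 0 ≤ fun x => u x * moserWeight L r (u x) := fun x => mul_nonneg (hu0 x) (hw0 x)
  have hup := hsob.integrable_rpow_of_nonneg hu hu0
  have hvp := hsob.integrable_rpow_of_nonneg hv hv0
  calc ((1 + L) / 2) ^ (r * p) * ∫ x in {x | L < u x}, u x ^ p ∂μ
      = ∫ x in {x | L < u x}, ((1 + L) / 2) ^ (r * p) * u x ^ p ∂μ :=
        (integral_const_mul _ _).symm
    _ ≤ ∫ x in {x | L < u x}, (u x * moserWeight L r (u x)) ^ p ∂μ := by
        refine setIntegral_mono_on (hup.const_mul _).integrableOn hvp.integrableOn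
          (isOpen_lt continuous_const hu.contDiff.continuous).measurableSet fun x hx => ?_
        rw [Real.mul_rpow (hu0 x) (hw0 x), mul_comm, Real.rpow_mul (by linarith)]
        exact mul_le_mul_of_nonneg_left (Real.rpow_le_rpow (by positivity)
          (rpow_le_moserWeight hL hr (le_of_lt hx)) hp.le) (Real.rpow_nonneg (hu0 x) _)
    _ ≤ ∫ x, (u x * moserWeight L r (u x)) ^ p ∂μ :=
        setIntegral_le_integral hvp (Eventually.of_forall fun x => Real.rpow_nonneg (hv0 x) _)
    _ ≤ _ := hsob.integral_rpow_le_of_nonneg hp hS hv hv0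

lemma exists_pos_one_add_pow_mul_lt_one {A : ℝ} (hp : 2 < p) (hA : A < 1) :
    ∃ r, 0 < r ∧ 2 * r ≤ p - 2 ∧ (1 + r) ^ 2 * (1 + r) * A < 1 := by
  have hlim : Tendsto (fun r : ℝ => (1 + r) ^ 2 * (1 + r) * A) (𝓝[>] 0)
      (𝓝 ((1 + 0) ^ 2 * (1 + 0) * A)) :=
    (Continuous.tendsto (by fun_prop) 0).mono_left nhdsWithin_le_nhds
  have hsmall : ∀ᶠ r : ℝ in 𝓝[>] 0, r < (p - 2) / 2 :=
    (eventually_lt_nhds (by linarith)).filter_mono nhdsWithin_le_nhds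
  obtain ⟨r, hr0, hr, hrA⟩ := (eventually_mem_nhdsWithin.and (hsmall.and
    (hlim.eventually_lt_const (show (1 + 0) ^ 2 * (1 + 0) * A < 1 by linarith)))).exists
  exact ⟨r, hr0, by linarith, hrA⟩

lemma SobolevInequality.integral_sq_add_integral_rpow_le (hsob : SobolevInequality μ p S)
    (hp : 0 < p) (hS : 0 < S) (hm : 0 < m) (hWm : ∀ x, m ≤ W x) (hu : MemH1 μ W u) (hu0 : 0 ≤ u)
    (hT : energy μ W u ≤ T) :
    (∫ x, u x ^ 2 ∂μ) + ∫ x, u x ^ p ∂μ ≤ (1 + m⁻¹) * T + ((1 + m⁻¹) * T / S) ^ (p / 2) := by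
  have hu1 := hu.one hm hWm
  have hle : energy μ 1 u ≤ (1 + m⁻¹) * T := (energy_one_le hm hWm hu).trans (by gcongr)
  have hQ := energy_nonneg (μ := μ) zero_le_one u
  refine add_le_add (hu1.integral_sq_le.trans hle)
    ((hsob.integral_rpow_le_of_nonneg hp hS hu1 hu0).trans ?_)
  gcongr

variable {ι : Type*} {l : Filter ι} {u : ι → E → ℝ}
  (hps : IsNonnegPalaisSmale μ W g G c l u) (hg : CriticalPenalization μ O p ν g)
  (hG : AmbrosettiRabinowitz μ O θ g G) (hsob : SobolevInequality μ p S) (hp : 2 < p)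
  (hν : 0 ≤ ν) (hθ : 2 < θ) (hO : MeasurableSet O) (hm : 0 < m) (hWm : ∀ x, m ≤ W x)
  (hT : ∀ i, energy μ W (u i) ≤ T)

include hps hg hG hsob hp hν hθ hO hm hWm hT

lemma IsNonnegPalaisSmale.eventually_setIntegral_rpow_lt {τ : ℝ}
    (hτ : c < (1 / 2 - 1 / θ) * τ) : ∀ᶠ i in l, ∫ x in O, u i x ^ p ∂μ < τ := by
  obtain ⟨e, he0, he, hcrit⟩ := hps.exists_isAlmostCritical
  have hθ' : 0 < 1 / 2 - 1 / θ := sub_pos.2 (one_div_lt_one_div_of_lt two_pos hθ)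
  have hlim : Tendsto (fun i => action μ W G (u i) + e i / 2 * √T) l (𝓝 c) := by
    simpa using hps.tendsto_action.add ((he.div_const 2).mul_const (√T))
  filter_upwards [hlim.eventually_lt_const hτ] with i hi
  have hu1 := (hps.memH1 i).one hm hWm
  have hpow : ∫ x in O, u i x ^ p ∂μ ≤ ∫ x in O, g x (u i x) * u i x ∂μ :=
    setIntegral_mono_on (hsob.integrable_rpow_of_nonneg hu1 (hps.nonneg i)).integrableOn
      (hg.integrable_mul hsob (by linarith) hν hu1 (hps.nonneg i) hu1).integrableOn hO
      fun x hx => hg.rpow_le_mul (by linarith) hx (hps.nonneg i x)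
  have hsqrt : e i / 2 * √(energy μ W (u i)) ≤ e i / 2 * √T :=
    mul_le_mul_of_nonneg_left (Real.sqrt_le_sqrt (hT i)) (div_nonneg (he0 i) two_pos.le)
  have hle := (hcrit i).mul_setIntegral_le hg hG hsob (by linarith) hν hO hm hWm (hps.memH1 i)
    (hps.nonneg i)
  refine hpow.trans_lt (lt_of_mul_lt_mul_left ?_ hθ'.le)
  linarith

variable (hS : 0 < S) (hc : c < (1 / 2 - 1 / θ) * S ^ (p / (p - 2)))

include hS hc

lemma IsNonnegPalaisSmale.exists_lt_one_eventually_rpow_setIntegral_div_le :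
    ∃ A < 1, ∀ᶠ i in l, (∫ x in O, u i x ^ p ∂μ) ^ ((p - 2) / p) / S ≤ A := by
  have hθ' : 0 < 1 / 2 - 1 / θ := sub_pos.2 (one_div_lt_one_div_of_lt two_pos hθ)
  have hS' : 0 < S ^ (p / (p - 2)) := by positivity
  have hratio : 0 < (p - 2) / p := div_pos (by linarith) (by linarith)
  obtain ⟨τ, hcτ, hτS⟩ := exists_between (max_lt ((div_lt_iff₀' hθ').2 hc) hS')
  obtain ⟨hcτ, hτ0⟩ := max_lt_iff.1 hcτ
  refine ⟨τ ^ ((p - 2) / p) / S, ?_, ?_⟩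
  · rw [div_lt_one hS]
    refine (Real.rpow_lt_rpow hτ0.le hτS hratio).trans_eq ?_
    rw [← Real.rpow_mul hS.le, div_mul_div_cancel₀ (by linarith), div_self (by linarith),
      Real.rpow_one]
  · filter_upwards [hps.eventually_setIntegral_rpow_lt hg hG hsob hp hν hθ hO hm hWm hT
      ((div_lt_iff₀' hθ').1 hcτ)] with i hi
    have : 0 ≤ ∫ x in O, u i x ^ p ∂μ :=
      integral_nonneg fun x => Real.rpow_nonneg (hps.nonneg i x) _
    gcongr

variable (hW : Continuous W)

include hW

lemma IsNonnegPalaisSmale.exists_eventually_energy_mul_moserWeight_le :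
    ∃ r D, 0 < r ∧ ∀ L, 1 ≤ L →
      ∀ᶠ i in l, energy μ 1 (fun x => u i x * moserWeight L r (u i x)) ≤ D := by
  obtain ⟨e, he0, he, hcrit⟩ := hps.exists_isAlmostCritical
  obtain ⟨A, hA1, hA⟩ := hps.exists_lt_one_eventually_rpow_setIntegral_div_le hg hG hsob hp hν
    hθ hO hm hWm hT hS hc
  obtain ⟨r, hr0, hrp, hrA⟩ := exists_pos_one_add_pow_mul_lt_one hp hA1
  obtain ⟨C, hC, hgC⟩ := hg.exists_le_add hr0
  obtain ⟨B, hB⟩ : ∃ B, ∀ i, (∫ x, u i x ^ 2 ∂μ) + ∫ x, u i x ^ p ∂μ ≤ B :=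
    ⟨_, fun i => hsob.integral_sq_add_integral_rpow_le (by linarith) hS hm hWm (hps.memH1 i)
      (hps.nonneg i) (hT i)⟩
  refine ⟨r, (((1 + r) ^ 2 * (C + ν) + 1) * (2 ^ (p - 2) * B) + (1 + r) ^ 2 * 1) /
    (1 - (1 + r) ^ 2 * (1 + r) * A), hr0, fun L hL => ?_⟩
  have herror : Tendsto (fun i => e i * ((L ^ r) ^ 2 * (1 + 2 * r) * √T)) l (𝓝 0) := by
    simpa using he.mul_const ((L ^ r) ^ 2 * (1 + 2 * r) * √T)
  filter_upwards [hA, herror.eventually_le_const one_pos] with i hAi hei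
  rw [le_div_iff₀' (sub_pos.2 hrA)]
  have hQ := energy_nonneg (μ := μ) zero_le_one fun x => u i x * moserWeight L r (u i x)
  have hei' : e i * ((L ^ r) ^ 2 * (1 + 2 * r) * √(energy μ W (u i))) ≤ 1 := by
    refine le_trans ?_ hei
    have := hT i
    have := he0 i
    gcongr
  refine le_trans ?_ (((hcrit i).mul_energy_mul_moserWeight_le (he0 i) hg hsob hp hS hν hO hm hWm
    hW hC hr0.le hgC (hps.memH1 i) (hps.nonneg i) hL hr0.le hrp).trans ?_)
  · gcongr
  · have := hB i
    gcongr

lemma IsNonnegPalaisSmale.eventually_setIntegral_rpow_le {δ : ℝ} (hδ : 0 < δ) :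
    ∀ᶠ L in atTop, ∀ᶠ i in l, ∫ x in {x | L < u i x}, u i x ^ p ∂μ ≤ δ := by
  obtain ⟨r, D, hr, hD⟩ := hps.exists_eventually_energy_mul_moserWeight_le hg hG hsob hp hν hθ hO
    hm hWm hT hS hc hW
  have hlim : Tendsto (fun L : ℝ => ((1 + L) / 2) ^ (r * p) * δ) atTop atTop :=
    ((tendsto_rpow_atTop (by positivity)).comp
      ((tendsto_atTop_add_const_left _ 1 tendsto_id).atTop_div_const two_pos)).atTop_mul_const hδ
  filter_upwards [eventually_ge_atTop 1, hlim.eventually_ge_atTop ((D / S) ^ (p / 2))] with L hL hLδ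
  refine (hD L hL).mono fun i hi => ?_
  refine le_of_mul_le_mul_left ?_ (show 0 < ((1 + L) / 2) ^ (r * p) by positivity)
  refine le_trans ?_ hLδ
  refine (hsob.mul_setIntegral_rpow_le (by linarith) hS ((hps.memH1 i).one hm hWm) (hps.nonneg i)
    hL hr.le).trans ?_
  have := energy_nonneg (μ := μ) zero_le_one fun x => u i x * moserWeight L r (u i x)
  gcongr

end Tail

end UniformIntegrability

section Compactness

section Truncation

variable {p L s t : ℝ}

lemma rpow_sub_one_le_mul (hp : 2 ≤ p) (ht : 0 ≤ t) (htL : t ≤ L) :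
    t ^ (p - 1) ≤ L ^ (p - 2) * t := by
  have : 0 ≤ p - 2 := by linarith
  calc t ^ (p - 1) = t ^ (p - 2) * t := by
        rw [← Real.rpow_add_one' ht (by linarith)]
        ring_nf
    _ ≤ L ^ (p - 2) * t := by gcongr

lemma rpow_add_rpow_mul_sub_le (hp : 2 ≤ p) (hL : 0 ≤ L) (hs : 0 ≤ s) (hst : s ≤ t) :
    (s ^ (p - 1) + t ^ (p - 1)) * (t - s) ≤
      L ^ (p - 2) * ((s + t) * (t - s)) + 2 * (if L < t then t ^ p else 0) := by
  have ht : 0 ≤ t := hs.trans hst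
  have : 0 ≤ p - 1 := by linarith
  have : 0 ≤ t - s := sub_nonneg.2 hst
  split_ifs with hLt
  · calc (s ^ (p - 1) + t ^ (p - 1)) * (t - s) ≤ (t ^ (p - 1) + t ^ (p - 1)) * t := by
          gcongr
          linarith
      _ = 2 * t ^ p := by rw [← two_mul, mul_assoc, rpow_sub_one_mul_self (by linarith) ht]
      _ ≤ _ := le_add_of_nonneg_left (by positivity)
  · have htL := not_lt.1 hLt
    calc (s ^ (p - 1) + t ^ (p - 1)) * (t - s) ≤ (L ^ (p - 2) * s + L ^ (p - 2) * t) * (t - s) := by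
          gcongr
          exacts [rpow_sub_one_le_mul hp hs (hst.trans htL), rpow_sub_one_le_mul hp ht htL]
      _ = _ := by ring

lemma rpow_add_rpow_mul_abs_sub_le (hp : 2 ≤ p) (hL : 0 ≤ L) (hs : 0 ≤ s) (ht : 0 ≤ t) :
    (s ^ (p - 1) + t ^ (p - 1)) * |s - t| ≤ L ^ (p - 2) * ((s + t) * |s - t|) +
      2 * ((if L < s then s ^ p else 0) + if L < t then t ^ p else 0) := by
  have hs0 : 0 ≤ if L < s then s ^ p else 0 := by split_ifs <;> positivity
  have ht0 : 0 ≤ if L < t then t ^ p else 0 := by split_ifs <;> positivity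
  rcases le_total s t with hst | hst
  · rw [abs_sub_comm, abs_of_nonneg (sub_nonneg.2 hst)]
    linarith [rpow_add_rpow_mul_sub_le hp hL hs hst]
  · rw [abs_of_nonneg (sub_nonneg.2 hst), add_comm (s ^ _), add_comm s]
    linarith [rpow_add_rpow_mul_sub_le hp hL ht hst]

lemma sub_mul_sub_le_of_le_mul_add_rpow {C a b : ℝ} (hC : 0 ≤ C) (hL : 0 ≤ L)
    (hp : 2 ≤ p) (hs : 0 ≤ s) (ht : 0 ≤ t) (ha : 0 ≤ a) (hb : 0 ≤ b)
    (has : a ≤ C * (s + s ^ (p - 1))) (hbt : b ≤ C * (t + t ^ (p - 1))) :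
    a * (s - t) - b * (s - t) ≤ C * ((1 + L ^ (p - 2)) * ((s + t) * |s - t|) +
      2 * ((if L < s then s ^ p else 0) + if L < t then t ^ p else 0)) := by
  calc a * (s - t) - b * (s - t) ≤ |a - b| * |s - t| := by
        rw [← sub_mul, ← abs_mul]
        exact le_abs_self _
    _ ≤ C * ((s + t) + (s ^ (p - 1) + t ^ (p - 1))) * |s - t| := by
        gcongr
        have : 0 ≤ C * (s + s ^ (p - 1)) := by positivity
        have : 0 ≤ C * (t + t ^ (p - 1)) := by positivity
        exact abs_le.2 ⟨by linarith, by linarith⟩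
    _ = C * ((s + t) * |s - t| + (s ^ (p - 1) + t ^ (p - 1)) * |s - t|) := by ring
    _ ≤ C * ((s + t) * |s - t| + (L ^ (p - 2) * ((s + t) * |s - t|) +
          2 * ((if L < s then s ^ p else 0) + if L < t then t ^ p else 0))) := by
        gcongr
        exact rpow_add_rpow_mul_abs_sub_le hp hL hs ht
    _ = _ := by ring

end Truncation

section EnergyDifference

variable {E : Type*} [NormedAddCommGroup E] [InnerProductSpace ℝ E] [CompleteSpace E]
  [MeasurableSpace E] [BorelSpace E] {μ : Measure E} {O : Set E} {p ν S C L T : ℝ}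
  {g : E → ℝ → ℝ} {u v W : E → ℝ}

lemma energy_sub_eq_energyForm_sub (hW : Continuous W) (hW0 : 0 ≤ W) (hu : MemH1 μ W u)
    (hv : MemH1 μ W v) :
    energy μ W (fun x => u x - v x) = energyForm μ W u (fun x => u x - v x) -
      energyForm μ W v fun x => u x - v x := by
  have hw := hu.sub hW hW0 hv
  rw [← energyForm_self, energyForm, energyForm, energyForm,
    ← integral_sub (hu.integrable_energyForm hW hW0 hw) (hv.integrable_energyForm hW hW0 hw)]
  refine integral_congr_ae (Eventually.of_forall fun x => ?_)
  simp only [gradient_sub (hu.contDiff.differentiable one_ne_zero x)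
    (hv.contDiff.differentiable one_ne_zero x), inner_sub_left]
  ring

lemma integral_mul_le_sqrt_mul_sqrt {α : Type*} [MeasurableSpace α] {μ : Measure α} {f h : α → ℝ}
    (hf0 : 0 ≤ f) (hh0 : 0 ≤ h) (hf : AEStronglyMeasurable f μ) (hh : AEStronglyMeasurable h μ)
    (hf2 : Integrable (fun x => f x ^ 2) μ) (hh2 : Integrable (fun x => h x ^ 2) μ) :
    ∫ x, f x * h x ∂μ ≤ √(∫ x, f x ^ 2 ∂μ) * √(∫ x, h x ^ 2 ∂μ) := by
  have htwo : ENNReal.ofReal 2 = 2 := by simp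
  have hLp {k : α → ℝ} (hk : AEStronglyMeasurable k μ) (hk2 : Integrable (fun x => k x ^ 2) μ) :
      MemLp k (ENNReal.ofReal 2) μ := htwo ▸ (memLp_two_iff_integrable_sq hk).2 hk2
  simpa only [Real.sqrt_eq_rpow, Real.rpow_two] using integral_mul_le_Lp_mul_Lq_of_nonneg
    Real.HolderConjugate.two_two (Eventually.of_forall hf0) (Eventually.of_forall hh0)
    (hLp hf hf2) (hLp hh hh2)

lemma MemH1.integrable_add_mul_abs_sub (hu : MemH1 μ 1 u) (hv : MemH1 μ 1 v) (hu0 : 0 ≤ u)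
    (hv0 : 0 ≤ v) : Integrable (fun x => (u x + v x) * |u x - v x|) μ := by
  have hw := hu.sub continuous_one zero_le_one hv
  refine ((hu.integrable_mul hw).add (hv.integrable_mul hw)).norm.congr
    (Eventually.of_forall fun x => ?_)
  simp only [Pi.add_apply, ← add_mul, norm_mul, Real.norm_eq_abs,
    abs_of_nonneg (add_nonneg (hu0 x) (hv0 x))]

lemma MemH1.integral_add_mul_abs_sub_le (hu : MemH1 μ 1 u) (hv : MemH1 μ 1 v) (hu0 : 0 ≤ u)
    (hv0 : 0 ≤ v) (huT : energy μ 1 u ≤ T) (hvT : energy μ 1 v ≤ T) :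
    ∫ x, (u x + v x) * |u x - v x| ∂μ ≤ √(4 * T) * √(∫ x, (u x - v x) ^ 2 ∂μ) := by
  have hcu := hu.contDiff.continuous
  have hcv := hv.contDiff.continuous
  have hsq := (hu.integrable_sq.add hv.integrable_sq).const_mul 2
  have hadd : Integrable (fun x => (u x + v x) ^ 2) μ :=
    hsq.mono' ((hcu.add hcv).pow 2).aestronglyMeasurable <| Eventually.of_forall fun x => by
      rw [Real.norm_of_nonneg (sq_nonneg _)]
      exact add_sq_le
  have haddT : ∫ x, (u x + v x) ^ 2 ∂μ ≤ 4 * T := by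
    refine (integral_mono hadd hsq fun x => add_sq_le).trans ?_
    simp only [Pi.add_apply]
    rw [integral_const_mul, integral_add hu.integrable_sq hv.integrable_sq]
    linarith [hu.integral_sq_le, hv.integral_sq_le]
  have hCS := integral_mul_le_sqrt_mul_sqrt (f := fun x => u x + v x)
    (h := fun x => |u x - v x|) (fun x => add_nonneg (hu0 x) (hv0 x)) (fun x => abs_nonneg _)
    (hcu.add hcv).aestronglyMeasurable (hcu.sub hcv).abs.aestronglyMeasurable hadd
    (by simpa only [sq_abs] using (hu.sub continuous_one zero_le_one hv).integrable_sq)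
  simp only [sq_abs] at hCS
  exact hCS.trans (by gcongr)

lemma CriticalPenalization.integral_sub_mul_sub_le (hg : CriticalPenalization μ O p ν g)
    (hsob : SobolevInequality μ p S) (hp : 2 ≤ p) (hν : 0 ≤ ν) (hC : 0 ≤ C)
    (hgC : ∀ x t, 0 ≤ t → g x t ≤ C * (t + t ^ (p - 1))) (hu : MemH1 μ 1 u) (hv : MemH1 μ 1 v)
    (hu0 : 0 ≤ u) (hv0 : 0 ≤ v) (hL : 0 ≤ L) :
    ∫ x, (g x (u x) * (u x - v x) - g x (v x) * (u x - v x)) ∂μ ≤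
      C * ((1 + L ^ (p - 2)) * (∫ x, (u x + v x) * |u x - v x| ∂μ) +
        2 * ((∫ x in {x | L < u x}, u x ^ p ∂μ) + ∫ x in {x | L < v x}, v x ^ p ∂μ)) := by
  have hw := hu.sub continuous_one zero_le_one hv
  have habs := hu.integrable_add_mul_abs_sub hv hu0 hv0
  have hmeas {w : E → ℝ} (hw : MemH1 μ 1 w) : MeasurableSet {x | L < w x} :=
    (isOpen_lt continuous_const hw.contDiff.continuous).measurableSet
  have htail {w : E → ℝ} (hw : MemH1 μ 1 w) (hw0 : 0 ≤ w) :
      Integrable ({x | L < w x}.indicator fun x => w x ^ p) μ :=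
    (hsob.integrable_rpow_of_nonneg hw hw0).indicator (hmeas hw)
  have hbound := (habs.const_mul (1 + L ^ (p - 2))).add
    (((htail hu hu0).add (htail hv hv0)).const_mul 2)
  have hmono := integral_mono ((hg.integrable_mul hsob (by linarith) hν hu hu0 hw).sub
    (hg.integrable_mul hsob (by linarith) hν hv hv0 hw)) (hbound.const_mul C) fun x =>
      (sub_mul_sub_le_of_le_mul_add_rpow hC hL hp (hu0 x) (hv0 x) (hg.nonneg (hu0 x))
        (hg.nonneg (hv0 x)) (hgC x _ (hu0 x)) (hgC x _ (hv0 x))).trans_eq (by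
          simp only [Pi.add_apply, Set.indicator_apply, Set.mem_ofPred_eq])
  rwa [integral_const_mul, integral_add' (habs.const_mul _)
      (((htail hu hu0).add (htail hv hv0)).const_mul 2), integral_const_mul, integral_const_mul,
    integral_add' (htail hu hu0) (htail hv hv0), integral_indicator (hmeas hu),
    integral_indicator (hmeas hv)] at hmono

lemma IsAlmostCritical.energy_sub_le {e e' : ℝ} (hu : MemH1 μ W u) (hv : MemH1 μ W v)
    (hcu : IsAlmostCritical μ W g e u) (hcv : IsAlmostCritical μ W g e' v) (hW : Continuous W)
    (hW0 : 0 ≤ W) (hgu : Integrable (fun x => g x (u x) * (u x - v x)) μ)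
    (hgv : Integrable (fun x => g x (v x) * (u x - v x)) μ) :
    energy μ W (fun x => u x - v x) ≤ (e + e') * √(energy μ W fun x => u x - v x) +
      ∫ x, (g x (u x) * (u x - v x) - g x (v x) * (u x - v x)) ∂μ := by
  have hw := hu.sub hW hW0 hv
  have hu' := (abs_le.1 (hcu _ hw)).2
  have hv' := (abs_le.1 (hcv _ hw)).1
  rw [actionDeriv] at hu' hv'
  rw [integral_sub hgu hgv]
  linarith [energy_sub_eq_energyForm_sub hW hW0 hu hv]

lemma IsAlmostCritical.energy_sub_le_of_energy_le {e e' m : ℝ} (he : 0 ≤ e) (he' : 0 ≤ e')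
    (hcu : IsAlmostCritical μ W g e u) (hcv : IsAlmostCritical μ W g e' v)
    (hg : CriticalPenalization μ O p ν g) (hsob : SobolevInequality μ p S) (hp : 2 ≤ p)
    (hν : 0 ≤ ν) (hm : 0 < m) (hWm : ∀ x, m ≤ W x) (hW : Continuous W) (hC : 0 ≤ C)
    (hgC : ∀ x t, 0 ≤ t → g x t ≤ C * (t + t ^ (p - 1))) (hu : MemH1 μ W u) (hv : MemH1 μ W v)
    (hu0 : 0 ≤ u) (hv0 : 0 ≤ v) (huT : energy μ W u ≤ T) (hvT : energy μ W v ≤ T) (hL : 0 ≤ L) :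
    energy μ W (fun x => u x - v x) ≤ (e + e') * √(4 * T) +
      C * ((1 + L ^ (p - 2)) *
          (√(4 * ((1 + m⁻¹) * T)) * √(∫ x, (u x - v x) ^ 2 ∂μ)) +
        2 * ((∫ x in {x | L < u x}, u x ^ p ∂μ) + ∫ x in {x | L < v x}, v x ^ p ∂μ)) := by
  have hW0 : 0 ≤ W := fun x => hm.le.trans (hWm x)
  have hu1 := hu.one hm hWm
  have hv1 := hv.one hm hWm
  have hw1 := hu1.sub continuous_one zero_le_one hv1
  have hbound {w : E → ℝ} (hw : MemH1 μ W w) (hwT : energy μ W w ≤ T) :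
      energy μ 1 w ≤ (1 + m⁻¹) * T := (energy_one_le hm hWm hw).trans (by gcongr)
  calc energy μ W (fun x => u x - v x)
      ≤ (e + e') * √(energy μ W fun x => u x - v x) +
          ∫ x, (g x (u x) * (u x - v x) - g x (v x) * (u x - v x)) ∂μ :=
        IsAlmostCritical.energy_sub_le hu hv hcu hcv hW hW0
          (hg.integrable_mul hsob (by linarith) hν hu1 hu0 hw1)
          (hg.integrable_mul hsob (by linarith) hν hv1 hv0 hw1)
    _ ≤ (e + e') * √(4 * T) + C * ((1 + L ^ (p - 2)) * (∫ x, (u x + v x) * |u x - v x| ∂μ) +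
          2 * ((∫ x in {x | L < u x}, u x ^ p ∂μ) + ∫ x in {x | L < v x}, v x ^ p ∂μ)) := by
        gcongr
        · linarith [_root_.energy_sub_le hW hW0 hu hv]
        · exact hg.integral_sub_mul_sub_le hsob hp hν hC hgC hu1 hv1 hu0 hv0 hL
    _ ≤ _ := by
        gcongr
        exact hu1.integral_add_mul_abs_sub_le hv1 hu0 hv0 (hbound hu huT) (hbound hv hvT)

end EnergyDifference

section PalaisSmale

lemma IsNonnegPalaisSmale.tendsto_energy_sub {E ι : Type*} [NormedAddCommGroup E]
    [InnerProductSpace ℝ E] [CompleteSpace E] [MeasurableSpace E] [BorelSpace E] {μ : Measure E}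
    {O : Set E} {p ν S m θ c T : ℝ} {g G : E → ℝ → ℝ} {W : E → ℝ} {l : Filter ι} {u v : ι → E → ℝ}
    (hu : IsNonnegPalaisSmale μ W g G c l u) (hv : IsNonnegPalaisSmale μ W g G c l v)
    (huT : ∀ i, energy μ W (u i) ≤ T) (hvT : ∀ i, energy μ W (v i) ≤ T)
    (hg : CriticalPenalization μ O p ν g) (hG : AmbrosettiRabinowitz μ O θ g G)
    (hsob : SobolevInequality μ p S) (hp : 2 < p) (hν : 0 ≤ ν) (hθ : 2 < θ)
    (hO : MeasurableSet O) (hm : 0 < m) (hWm : ∀ x, m ≤ W x) (hW : Continuous W) (hS : 0 < S)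
    (hc : c < (1 / 2 - 1 / θ) * S ^ (p / (p - 2)))
    (hsq : Tendsto (fun i => ∫ x, (u i x - v i x) ^ 2 ∂μ) l (𝓝 0)) :
    Tendsto (fun i => energy μ W fun x => u i x - v i x) l (𝓝 0) := by
  obtain ⟨e, he0, he, hcu⟩ := hu.exists_isAlmostCritical
  obtain ⟨e', he'0, he', hcv⟩ := hv.exists_isAlmostCritical
  obtain ⟨C, hC, hgC⟩ := hg.exists_le hν
  refine tendsto_nhds_zero_of_forall_eventually_lt
    (fun i => energy_nonneg (fun x => hm.le.trans (hWm x)) _) fun ε hε => ?_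
  have htail {w : ι → E → ℝ} (hw : IsNonnegPalaisSmale μ W g G c l w)
      (hwT : ∀ i, energy μ W (w i) ≤ T) := hw.eventually_setIntegral_rpow_le hg hG hsob hp
    hν hθ hO hm hWm hwT hS hc hW (show 0 < ε / (8 * (C + 1)) by positivity)
  obtain ⟨L, hL0, hLu, hLv⟩ :=
    ((eventually_ge_atTop 0).and ((htail hu huT).and (htail hv hvT))).exists
  have hlim : Tendsto (fun i => (e i + e' i) * √(4 * T) + C * ((1 + L ^ (p - 2)) *
      (√(4 * ((1 + m⁻¹) * T)) * √(∫ x, (u i x - v i x) ^ 2 ∂μ)))) l (𝓝 0) := by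
    simpa using ((he.add he').mul_const _).add (((hsq.sqrt.const_mul _).const_mul _).const_mul C)
  have hCδ : C * (2 * (ε / (8 * (C + 1)) + ε / (8 * (C + 1)))) ≤ ε / 2 := by
    field_simp
    linarith
  filter_upwards [hLu, hLv, hlim.eventually_lt_const (half_pos hε)] with i hui hvi hi
  have hdiff := IsAlmostCritical.energy_sub_le_of_energy_le (he0 i) (he'0 i) (hcu i) (hcv i) hg hsob
    hp.le hν hm hWm hW hC hgC (hu.memH1 i) (hv.memH1 i) (hu.nonneg i) (hv.nonneg i) (huT i) (hvT i)
    hL0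
  have htails := mul_le_mul_of_nonneg_left
    (mul_le_mul_of_nonneg_left (add_le_add hui hvi) zero_le_two) hC
  linarith

variable {E : Type*} [NormedAddCommGroup E] [InnerProductSpace ℝ E] [FiniteDimensional ℝ E]
  [MeasurableSpace E] [BorelSpace E] {μ : Measure E} {O : Set E} {p ν S m θ c C : ℝ}
  {g G : E → ℝ → ℝ} {W : E → ℝ} {u : ℕ → E → ℝ}

theorem IsNonnegPalaisSmale.exists_subseq_tendsto_energy_sub [IsFiniteMeasureOnCompacts μ]
    (hps : IsNonnegPalaisSmale μ W g G c atTop u) (hg : CriticalPenalization μ O p ν g)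
    (hG : AmbrosettiRabinowitz μ O θ g G) (hsob : SobolevInequality μ p S)
    (hμ : ConfiningMeasure μ C) (hp : 2 < p) (hν : 0 ≤ ν) (hθ : 2 < θ) (hm : 0 < m)
    (hWm : ∀ x, m ≤ W x) (hW : Continuous W) (hO : IsOpen O) (hOn : O.Nonempty) (hOμ : μ O ≠ ⊤)
    (hS : 0 < S) (hc : c < (1 / 2 - 1 / θ) * S ^ (p / (p - 2))) :
    ∃ σ : ℕ → ℕ, StrictMono σ ∧
      Tendsto (fun n : ℕ × ℕ => energy μ W fun x => u (σ n.1) x - u (σ n.2) x) atTop (𝓝 0) := by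
  obtain ⟨T, hT⟩ := hps.bddAbove_energy hg hG hsob hp hν hθ hm hWm hμ hS hW hO hOn hOμ
  replace hT (n : ℕ) : energy μ W (u n) ≤ T := hT ⟨n, rfl⟩
  obtain ⟨σ, hσ, hsq⟩ := hμ.exists_subseq_tendsto_integral_sq_sub
    (fun n => (hps.memH1 n).one hm hWm) (D := (1 + m⁻¹) * T) fun n =>
      (energy_one_le hm hWm (hps.memH1 n)).trans (by gcongr; exact hT n)
  have hfst : Tendsto (fun n : ℕ × ℕ => σ n.1) atTop atTop :=
    hσ.tendsto_atTop.comp (prod_atTop_atTop_eq (α := ℕ) (β := ℕ) ▸ tendsto_fst)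
  have hsnd : Tendsto (fun n : ℕ × ℕ => σ n.2) atTop atTop :=
    hσ.tendsto_atTop.comp (prod_atTop_atTop_eq (α := ℕ) (β := ℕ) ▸ tendsto_snd)
  exact ⟨σ, hσ, (hps.comp hfst).tendsto_energy_sub (hps.comp hsnd) (fun n => hT _) (fun n => hT _)
    hg hG hsob hp hν hθ hO.measurableSet hm hWm hW hS hc hsq⟩

end PalaisSmale

end Compactness

section WeightedVolume

variable {N : ℕ}

lemma continuous_Kw : Continuous (Kw : En N → ℝ) := by
  unfold Kw
  fun_prop

lemma Kw_pos (x : En N) : 0 < Kw x := Real.exp_pos _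

lemma one_le_Kw (x : En N) : 1 ≤ Kw x := Real.one_le_exp (by positivity)

/-- The weighted Lebesgue measure `K dx`. -/
def weightedVolume (N : ℕ) : Measure (En N) :=
  volume.withDensity fun x => ENNReal.ofReal (Kw x)

instance : IsLocallyFiniteMeasure (weightedVolume N) :=
  IsLocallyFiniteMeasure.withDensity_ofReal continuous_Kw

lemma integral_weightedVolume (f : En N → ℝ) :
    ∫ x, f x ∂weightedVolume N = ∫ x, Kw x * f x := by
  rw [weightedVolume, integral_withDensity_eq_integral_toReal_smul
    continuous_Kw.measurable.ennreal_ofReal (by simp)]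
  simp only [ENNReal.toReal_ofReal (Kw_pos _).le, smul_eq_mul]

lemma integrable_weightedVolume_iff {f : En N → ℝ} :
    Integrable f (weightedVolume N) ↔ Integrable fun x => Kw x * f x := by
  rw [weightedVolume, integrable_withDensity_iff_integrable_smul'
    continuous_Kw.measurable.ennreal_ofReal (by simp)]
  simp only [ENNReal.toReal_ofReal (Kw_pos _).le, smul_eq_mul]

lemma volume_le_weightedVolume : (volume : Measure (En N)) ≤ weightedVolume N := by
  conv_lhs => rw [← withDensity_one (μ := (volume : Measure (En N)))]
  exact withDensity_mono (Eventually.of_forall fun x => ENNReal.one_le_ofReal.2 (one_le_Kw x))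

lemma weightedVolume_restrict_closedBall_le (R : ℝ) :
    (weightedVolume N).restrict (Metric.closedBall 0 R) ≤
      Real.toNNReal (Real.exp (R ^ 2 / 4)) • volume := by
  rw [weightedVolume, restrict_withDensity measurableSet_closedBall]
  calc (volume.restrict (Metric.closedBall (0 : En N) R)).withDensity
        (fun x => ENNReal.ofReal (Kw x))
      ≤ (volume.restrict (Metric.closedBall 0 R)).withDensity
          fun _ => ENNReal.ofReal (Real.exp (R ^ 2 / 4)) := by
        refine withDensity_mono ((ae_restrict_iff' measurableSet_closedBall).2
          (Eventually.of_forall fun x hx => ENNReal.ofReal_le_ofReal ?_))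
        have hx' : ‖x‖ ≤ R := mem_closedBall_zero_iff.1 hx
        rw [Kw]
        gcongr
    _ ≤ _ := by
        rw [withDensity_const]
        exact fun s => mul_le_mul_right (Measure.restrict_apply_le _ s) _

end WeightedVolume

section Hardy

variable {N : ℕ} {e : En N} {f w : En N → ℝ}

lemma hasFDerivAt_inner_mul_Kw (e x : En N) :
    HasFDerivAt (fun y : En N => ⟪e, y⟫ * Kw y)
      (⟪e, x⟫ • (Kw x • ((1 / 2 : ℝ) • innerSL ℝ x)) + Kw x • innerSL ℝ e) x := by
  have hKw : HasFDerivAt (Kw : En N → ℝ) (Kw x • ((1 / 2 : ℝ) • innerSL ℝ x)) x := by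
    have hexp := ((hasStrictFDerivAt_norm_sq x).hasFDerivAt.mul_const (4⁻¹ : ℝ)).exp
    simp only [← div_eq_mul_inv] at hexp
    refine hexp.congr_fderiv ?_
    ext y
    simp [Kw]
    ring
  exact ((innerSL ℝ e).hasFDerivAt).mul hKw

lemma hasCompactSupport_inner_gradient (hs : HasCompactSupport f) (e : En N) :
    HasCompactSupport fun x => ⟪gradient f x, e⟫ :=
  (hasCompactSupport_gradient hs).comp_left (g := fun v => ⟪v, e⟫) (inner_zero_left e)

lemma integrable_weighted_divergence (hf : ContDiff ℝ 1 f) (hs : HasCompactSupport f) (e : En N) :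
    Integrable (fun x => (1 + ⟪e, x⟫ ^ 2 / 2) * f x + ⟪e, x⟫ * ⟪gradient f x, e⟫)
      (weightedVolume N) := by
  have hcf := hf.continuous
  have hcg := continuous_gradient hf
  exact Continuous.integrable_of_hasCompactSupport (by fun_prop)
    (hs.mul_left.add (hasCompactSupport_inner_gradient hs e).mul_left)

lemma integral_weighted_divergence (he : ‖e‖ = 1) (hf : ContDiff ℝ 1 f)
    (hs : HasCompactSupport f) :
    ∫ x, ((1 + ⟪e, x⟫ ^ 2 / 2) * f x + ⟪e, x⟫ * ⟪gradient f x, e⟫) ∂weightedVolume N = 0 := by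
  have hderiv (x : En N) :
      fderiv ℝ (fun y : En N => ⟪e, y⟫ * Kw y) x e = Kw x * (1 + ⟪e, x⟫ ^ 2 / 2) := by
    rw [(hasFDerivAt_inner_mul_Kw e x).fderiv]
    simp [real_inner_comm x e, he]
    ring
  have hcf := hf.continuous
  have hcK := continuous_Kw (N := N)
  have hcg := continuous_gradient hf
  have hleft : Integrable fun x => ⟪gradient f x, e⟫ * (⟪e, x⟫ * Kw x) :=
    Continuous.integrable_of_hasCompactSupport (by fun_prop)
      (hasCompactSupport_inner_gradient hs e).mul_right
  have hright : Integrable fun x => f x * (Kw x * (1 + ⟪e, x⟫ ^ 2 / 2)) :=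
    Continuous.integrable_of_hasCompactSupport (by fun_prop) hs.mul_right
  have hparts := integral_mul_fderiv_eq_neg_fderiv_mul_of_integrable
    (μ := (volume : Measure (En N))) (f := f) (g := fun x => ⟪e, x⟫ * Kw x) (v := e)
    (by simpa only [inner_gradient_left] using hleft) (by simpa only [hderiv] using hright)
    (Continuous.integrable_of_hasCompactSupport (by fun_prop) hs.mul_right)
    (fun x _ => hf.differentiable one_ne_zero x)
    (fun x _ => (hasFDerivAt_inner_mul_Kw e x).differentiableAt)
  simp only [← inner_gradient_left, hderiv] at hparts
  rw [integral_weightedVolume, ← add_eq_zero_iff_eq_neg.2 hparts, ← integral_add hright hleft]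
  congr 1 with x
  ring

lemma inner_sq_mul_sq_le {x : En N} (he : ‖e‖ = 1) (hw : DifferentiableAt ℝ w x) :
    ⟪e, x⟫ ^ 2 * w x ^ 2 ≤
      4 * ((1 + ⟪e, x⟫ ^ 2 / 2) * w x ^ 2 + ⟪e, x⟫ * ⟪gradient (fun y => w y ^ 2) x, e⟫) +
        16 * energyDensity 1 w x := by
  have hle : ⟪gradient w x, e⟫ ^ 2 ≤ ‖gradient w x‖ ^ 2 := by
    simpa [he] using sq_le_sq' (neg_le_of_abs_le (abs_real_inner_le_norm (gradient w x) e))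
      (real_inner_le_norm _ _)
  rw [gradient_scomp (ψ := fun t => t ^ 2) (ψ' := 2 * w x) (by simpa using hasDerivAt_pow 2 (w x))
    hw, real_inner_smul_left, energyDensity, Pi.one_apply]
  linarith [sq_nonneg (⟪e, x⟫ * w x + 4 * ⟪gradient w x, e⟫), sq_nonneg (w x)]

lemma integral_inner_sq_mul_sq_le (he : ‖e‖ = 1) (hw : ContDiff ℝ 1 w)
    (hs : HasCompactSupport w) :
    ∫ x, ⟪e, x⟫ ^ 2 * w x ^ 2 ∂weightedVolume N ≤ 16 * energy (weightedVolume N) 1 w := by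
  have hw2 : ContDiff ℝ 1 fun x => w x ^ 2 := hw.pow 2
  have hs2 : HasCompactSupport fun x => w x ^ 2 := hs.comp_left (g := fun t => t ^ 2) (by simp)
  have henergy : Integrable (energyDensity 1 w) (weightedVolume N) :=
    (MemH1.of_hasCompactSupport continuous_one hw hs).integrable
  have hdiv := integrable_weighted_divergence hw2 hs2 e
  have hle := integral_mono_of_nonneg (Eventually.of_forall fun x => by positivity)
    ((hdiv.const_mul 4).add (henergy.const_mul 16)) <|
      Eventually.of_forall fun x => inner_sq_mul_sq_le he (hw.differentiable one_ne_zero x)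
  rwa [integral_add' (hdiv.const_mul 4) (henergy.const_mul 16), integral_const_mul,
    integral_const_mul, integral_weighted_divergence he hw2 hs2, mul_zero, zero_add] at hle

lemma integral_norm_sq_mul_sq_le_of_hasCompactSupport (hw : ContDiff ℝ 1 w)
    (hs : HasCompactSupport w) :
    ∫ x, ‖x‖ ^ 2 * w x ^ 2 ∂weightedVolume N ≤ 16 * N * energy (weightedVolume N) 1 w := by
  have hcw := hw.continuous
  have hs2 : HasCompactSupport fun x => w x ^ 2 := hs.comp_left (g := fun t => t ^ 2) (by simp)
  obtain ⟨b⟩ : Nonempty (OrthonormalBasis (Fin N) ℝ (En N)) := ⟨EuclideanSpace.basisFun _ _⟩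
  have hint (i : Fin N) : Integrable (fun x => ⟪b i, x⟫ ^ 2 * w x ^ 2) (weightedVolume N) :=
    Continuous.integrable_of_hasCompactSupport (by fun_prop) hs2.mul_left
  calc ∫ x, ‖x‖ ^ 2 * w x ^ 2 ∂weightedVolume N
      = ∑ i, ∫ x, ⟪b i, x⟫ ^ 2 * w x ^ 2 ∂weightedVolume N := by
        rw [← integral_finsetSum _ fun i _ => hint i]
        congr 1 with x
        rw [← Finset.sum_mul, b.sum_sq_inner_right]
    _ ≤ ∑ _i : Fin N, 16 * energy (weightedVolume N) 1 w :=
        Finset.sum_le_sum fun i _ => integral_inner_sq_mul_sq_le (b.norm_eq_one i) hw hs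
    _ = 16 * N * energy (weightedVolume N) 1 w := by
        rw [Finset.sum_const, Finset.card_univ, Fintype.card_fin, nsmul_eq_mul]
        ring

lemma confiningMeasure_weightedVolume (N : ℕ) : ConfiningMeasure (weightedVolume N) (16 * N) := by
  have hhardy {u : En N → ℝ} (hu : MemH1 (weightedVolume N) 1 u) :=
    hu.integral_comp_le_of_hasCompactSupport (Ψ := fun x t => ‖x‖ ^ 2 * t ^ 2)
      (θ := fun Q => 16 * N * Q) (by fun_prop) (fun _ _ => by positivity) (by simp)
      (by fun_prop) fun w hw hs => integral_norm_sq_mul_sq_le_of_hasCompactSupport hw hs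
  exact ⟨volume_le_weightedVolume, fun R => ⟨_, weightedVolume_restrict_closedBall_le R⟩,
    fun hu => (hhardy hu).1, fun hu => (hhardy hu).2⟩

end Hardy

section BestConstant

variable {N : ℕ}

lemma two_lt_twoStar (hN : 3 ≤ N) : 2 < twoStar N := by
  have : (3 : ℝ) ≤ N := mod_cast hN
  rw [twoStar, lt_div_iff₀ (by linarith)]
  linarith

lemma twoStar_div_sub_two (hN : 3 ≤ N) : twoStar N / (twoStar N - 2) = N / 2 := by
  have : (3 : ℝ) ≤ N := mod_cast hN
  have h_sub : (N : ℝ) - 2 ≠ 0 := by linarith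
  have h_den : twoStar N - 2 = 4 / (N - 2) := by
    rw [twoStar]
    field_simp
    ring
  rw [h_den, twoStar]
  field_simp
  ring

lemma Sconst_le_energy {v : En N → ℝ} (hv : ContDiff ℝ (⊤ : ℕ∞) v) (hs : HasCompactSupport v)
    (hnorm : ∫ x, |v x| ^ twoStar N ∂weightedVolume N = 1) :
    Sconst N ≤ energy (weightedVolume N) 1 v := by
  refine csInf_le ⟨0, ?_⟩ ⟨v, hv, hs, integral_weightedVolume _ ▸ hnorm, ?_⟩
  · rintro y ⟨u, -, -, -, rfl⟩
    exact integral_nonneg fun x => mul_nonneg (Kw_pos x).le (by positivity)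
  · simp only [energy, energyDensity, integral_weightedVolume, Pi.one_apply, one_mul]

lemma Sconst_mul_rpow_le (hN : 3 ≤ N) {v : En N → ℝ} (hv : ContDiff ℝ (⊤ : ℕ∞) v)
    (hs : HasCompactSupport v) :
    Sconst N * (∫ x, |v x| ^ twoStar N ∂weightedVolume N) ^ (2 / twoStar N) ≤
      energy (weightedVolume N) 1 v := by
  have hp : 0 < twoStar N := by linarith [two_lt_twoStar hN]
  have hI : 0 ≤ ∫ x, |v x| ^ twoStar N ∂weightedVolume N := integral_nonneg fun x => by positivity
  generalize hIdef : ∫ x, |v x| ^ twoStar N ∂weightedVolume N = I at hI ⊢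
  obtain rfl | hI0 := hI.eq_or_lt
  · rw [Real.zero_rpow (by positivity), mul_zero]
    exact energy_nonneg zero_le_one v
  have hnorm : ∫ x, |I ^ (-(1 / twoStar N)) * v x| ^ twoStar N ∂weightedVolume N = 1 := by
    have h_scale (x : En N) : |I ^ (-(1 / twoStar N)) * v x| ^ twoStar N =
        I⁻¹ * |v x| ^ twoStar N := by
      rw [abs_mul, abs_of_pos (by positivity), Real.mul_rpow (by positivity) (abs_nonneg _),
        ← Real.rpow_mul hI, neg_mul, one_div_mul_cancel hp.ne', Real.rpow_neg_one]
    simp only [h_scale]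
    rw [integral_const_mul, hIdef, inv_mul_cancel₀ hI0.ne']
  have h_le := Sconst_le_energy (contDiff_const.mul hv) hs.mul_left hnorm
  rw [energy_const_mul _ _ _ (hv.of_le (mod_cast le_top)), ← Real.rpow_mul_natCast hI,
    show -(1 / twoStar N) * (2 : ℕ) = -(2 / twoStar N) by push_cast; ring, Real.rpow_neg hI] at h_le
  rwa [← le_div_iff₀ (by positivity), div_eq_inv_mul]

lemma sobolevInequality_weightedVolume (hN : 3 ≤ N) (hS : 0 < Sconst N) :
    SobolevInequality (weightedVolume N) (twoStar N) (Sconst N) :=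
  SobolevInequality.of_contDiff_top (by linarith [two_lt_twoStar hN]) hS fun _ hv hs =>
    Sconst_mul_rpow_le hN hv hs

lemma Sconst_nonneg (N : ℕ) : 0 ≤ Sconst N := by
  refine Real.sInf_nonneg ?_
  rintro y ⟨v, -, -, -, rfl⟩
  exact integral_nonneg fun x => mul_nonneg (Kw_pos x).le (by positivity)

lemma Sconst_pos_of_pos_mul_rpow {r s : ℝ} (hs : s ≠ 0) (h : 0 < r * Sconst N ^ s) :
    0 < Sconst N := by
  refine (Sconst_nonneg N).lt_of_ne' fun h_zero => ?_
  rw [h_zero, Real.zero_rpow hs, mul_zero] at h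
  exact h.false

end BestConstant

section ModelNonlinearity

variable {q p β ν₀ ρ t : ℝ}

/-- The quotient `h(t) / t` for `t > 0`; both `h` and its truncation `f` are expressed by it. -/
def hSlope (q p β t : ℝ) : ℝ := β * t ^ (q - 1) + t ^ (p - 2)

lemma continuous_hSlope (hq : 1 ≤ q) (hp : 2 ≤ p) : Continuous (hSlope q p β) :=
  (continuous_const.mul (Real.continuous_rpow_const (by linarith))).add
    (Real.continuous_rpow_const (by linarith))

lemma hSlope_le_hSlope {s : ℝ} (hq : 1 ≤ q) (hp : 2 ≤ p) (hβ : 0 ≤ β) (hs : 0 ≤ s) (hst : s ≤ t) :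
    hSlope q p β s ≤ hSlope q p β t := by
  have h_rpow {r : ℝ} (hr : 0 ≤ r) : s ^ r ≤ t ^ r := Real.rpow_le_rpow hs hst hr
  exact add_le_add (mul_le_mul_of_nonneg_left (h_rpow (by linarith)) hβ) (h_rpow (by linarith))

lemma hSlope_mul_self (ht : 0 < t) : hSlope q p β t * t = β * t ^ q + t ^ (p - 1) := by
  rw [hSlope, add_mul, mul_assoc, ← Real.rpow_add_one ht.ne', ← Real.rpow_add_one ht.ne']
  ring_nf

lemma hfun_eq_hSlope_mul : hfun q p β t = hSlope q p β (max t 0) * max t 0 := by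
  unfold hfun
  split_ifs with ht
  · rw [max_eq_right ht, mul_zero]
  · rw [not_le] at ht
    rw [max_eq_left ht.le, hSlope_mul_self ht]

lemma ffun_eq_hSlope_mul (hρeq : hSlope q p β ρ = ν₀) :
    ffun q p β ν₀ ρ t = hSlope q p β (min (max t 0) ρ) * max t 0 := by
  unfold ffun
  split_ifs with ht htρ
  · rw [max_eq_right ht, mul_zero]
  · rw [not_le] at ht
    rw [max_eq_left ht.le, min_eq_left htρ, hSlope_mul_self ht]
  · rw [not_le] at ht htρ
    rw [max_eq_left ht.le, min_eq_right htρ.le, hρeq]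

lemma continuous_hfun (hq : 1 ≤ q) (hp : 2 ≤ p) : Continuous (hfun q p β) := by
  have := continuous_hSlope (β := β) hq hp
  simp only [funext fun t => hfun_eq_hSlope_mul (q := q) (p := p) (β := β) (t := t)]
  fun_prop

lemma continuous_ffun (hq : 1 ≤ q) (hp : 2 ≤ p) (hρeq : hSlope q p β ρ = ν₀) :
    Continuous (ffun q p β ν₀ ρ) := by
  have := continuous_hSlope (β := β) hq hp
  simp only [funext fun t => ffun_eq_hSlope_mul (t := t) hρeq]
  fun_prop

lemma hfun_nonneg (hβ : 0 ≤ β) (t : ℝ) : 0 ≤ hfun q p β t := by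
  unfold hfun
  split_ifs with ht
  · exact le_rfl
  · rw [not_le] at ht
    positivity

lemma ffun_nonneg (hβ : 0 ≤ β) (hν : 0 ≤ ν₀) (t : ℝ) : 0 ≤ ffun q p β ν₀ ρ t := by
  unfold ffun
  split_ifs with ht htρ
  · exact le_rfl
  all_goals
    rw [not_le] at ht
    positivity

lemma hfun_of_nonneg (hq : q ≠ 0) (hp : p ≠ 1) (ht : 0 ≤ t) :
    hfun q p β t = β * t ^ q + t ^ (p - 1) := by
  unfold hfun
  split_ifs with h_nonpos
  · rw [le_antisymm h_nonpos ht, Real.zero_rpow hq, Real.zero_rpow (sub_ne_zero.2 hp)]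
    ring
  · rfl

lemma ffun_le_mul (hq : 1 ≤ q) (hp : 2 ≤ p) (hβ : 0 ≤ β) (hρ : 0 ≤ ρ)
    (hρeq : hSlope q p β ρ = ν₀) (ht : 0 ≤ t) : ffun q p β ν₀ ρ t ≤ ν₀ * t := by
  rw [ffun_eq_hSlope_mul hρeq, max_eq_left ht, ← hρeq]
  gcongr
  exact hSlope_le_hSlope hq hp hβ (le_min ht hρ) (min_le_right _ _)

lemma exists_mul_rpow_le_add {η r : ℝ} (hq : 1 ≤ q) (hqr : q < r) (hβ : 0 ≤ β) (hη : 0 < η) :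
    ∃ C, 0 ≤ C ∧ ∀ t, 0 ≤ t → β * t ^ q ≤ η * t ^ r + C * t := by
  have hA : 0 ≤ (β / η) ^ (r - q)⁻¹ := by positivity
  have hAr : ((β / η) ^ (r - q)⁻¹) ^ (r - q) = β / η :=
    Real.rpow_inv_rpow (by positivity) (by linarith)
  generalize (β / η) ^ (r - q)⁻¹ = A at hA hAr
  refine ⟨β * A ^ (q - 1), by positivity, fun t ht => ?_⟩
  obtain h_small | h_large := le_total t A
  · have h_split : t ^ q = t ^ (q - 1) * t := by
      rw [← Real.rpow_add_one' ht (by linarith), sub_add_cancel]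
    calc β * t ^ q = β * t ^ (q - 1) * t := by rw [h_split, mul_assoc]
      _ ≤ β * A ^ (q - 1) * t := by gcongr
      _ ≤ η * t ^ r + β * A ^ (q - 1) * t := le_add_of_nonneg_left (by positivity)
  · have h_split : t ^ r = t ^ (r - q) * t ^ q := by
      rw [← Real.rpow_add' ht (by linarith), sub_add_cancel]
    calc β * t ^ q = η * (A ^ (r - q) * t ^ q) := by rw [hAr]; field_simp
      _ ≤ η * t ^ r := by rw [h_split]; gcongr
      _ ≤ η * t ^ r + β * A ^ (q - 1) * t := le_add_of_nonneg_right (by positivity)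

lemma integral_le_of_mul_rpow_le {φ : ℝ → ℝ} {r : ℝ} (hφ : Continuous φ) (hr : 0 ≤ r) (ht : 0 ≤ t)
    (hmono : ∀ s, 0 ≤ s → s ≤ t → φ s * t ^ r ≤ φ t * s ^ r) :
    ∫ s in (0 : ℝ)..t, φ s ≤ 1 / (r + 1) * (φ t * t) := by
  obtain rfl | ht0 := ht.eq_or_lt
  · simp
  have hcont : Continuous fun s : ℝ => φ t / t ^ r * s ^ r :=
    continuous_const.mul (Real.continuous_rpow_const hr)
  calc ∫ s in (0 : ℝ)..t, φ s ≤ ∫ s in (0 : ℝ)..t, φ t / t ^ r * s ^ r := by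
        refine intervalIntegral.integral_mono_on ht (hφ.intervalIntegrable _ _)
          (hcont.intervalIntegrable _ _) fun s hs => ?_
        rw [div_mul_eq_mul_div, le_div_iff₀ (by positivity)]
        exact hmono s hs.1 hs.2
    _ = 1 / (r + 1) * (φ t * t) := by
        rw [intervalIntegral.integral_const_mul, integral_rpow (Or.inl (by linarith)),
          Real.zero_rpow (by linarith), Real.rpow_add_one ht0.ne']
        field_simp
        ring

lemma Hfun_le (hq : 1 ≤ q) (hp : 2 ≤ p) (hqp : q ≤ p - 1) (ht : 0 ≤ t) :
    Hfun q p β t ≤ 1 / (q + 1) * (hfun q p β t * t) := by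
  refine integral_le_of_mul_rpow_le (continuous_hfun hq hp) (by linarith) ht fun s hs hst => ?_
  have h_split {y : ℝ} (hy : 0 ≤ y) : y ^ (p - 1) = y ^ (p - 1 - q) * y ^ q := by
    rw [← Real.rpow_add' hy (by linarith), sub_add_cancel]
  have h_rpow : s ^ (p - 1 - q) ≤ t ^ (p - 1 - q) := Real.rpow_le_rpow hs hst (by linarith)
  rw [hfun_of_nonneg (by linarith) (by linarith) hs, hfun_of_nonneg (by linarith) (by linarith) ht,
    h_split hs, h_split ht]
  linarith [mul_le_mul_of_nonneg_right h_rpow (show 0 ≤ s ^ q * t ^ q by positivity)]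

lemma Ffun_le (hq : 1 ≤ q) (hp : 2 ≤ p) (hβ : 0 ≤ β) (hρ : 0 ≤ ρ) (hρeq : hSlope q p β ρ = ν₀)
    (ht : 0 ≤ t) : Ffun q p β ν₀ ρ t ≤ 1 / 2 * (ffun q p β ν₀ ρ t * t) := by
  rw [← one_add_one_eq_two]
  refine integral_le_of_mul_rpow_le (continuous_ffun hq hp hρeq) zero_le_one ht fun s hs hst => ?_
  have h_slope := hSlope_le_hSlope hq hp hβ (le_min hs hρ) (min_le_min_right ρ hst)
  rw [ffun_eq_hSlope_mul hρeq, ffun_eq_hSlope_mul hρeq, max_eq_left hs, max_eq_left ht,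
    Real.rpow_one, Real.rpow_one]
  linarith [mul_le_mul_of_nonneg_right h_slope (mul_nonneg hs ht)]

end ModelNonlinearity

section Penalization

variable {N : ℕ} {q p β ν₀ ρ : ℝ} {O : Set (En N)}

lemma measurable_gfun_comp {u : En N → ℝ} (hq : 1 ≤ q) (hp : 2 ≤ p)
    (hρeq : hSlope q p β ρ = ν₀) (hO : MeasurableSet O) (hu : Continuous u) :
    Measurable fun x => gfun q p β ν₀ ρ O x (u x) :=
  Measurable.ite hO ((continuous_hfun hq hp).comp hu).measurable
    ((continuous_ffun hq hp hρeq).comp hu).measurable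

lemma measurable_Gfun_comp {u : En N → ℝ} (hq : 1 ≤ q) (hp : 2 ≤ p)
    (hρeq : hSlope q p β ρ = ν₀) (hO : MeasurableSet O) (hu : Continuous u) :
    Measurable fun x => Gfun q p β ν₀ ρ O x (u x) := by
  have hprim {φ : ℝ → ℝ} (hφ : Continuous φ) : Continuous fun t => ∫ τ in (0 : ℝ)..t, φ τ :=
    intervalIntegral.continuous_primitive (fun _ _ => hφ.intervalIntegrable _ _) 0
  exact Measurable.ite hO ((hprim (continuous_hfun hq hp)).comp hu).measurable
    ((hprim (continuous_ffun hq hp hρeq)).comp hu).measurable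

lemma gfun_nonneg (hβ : 0 ≤ β) (hν : 0 ≤ ν₀) (x : En N) (t : ℝ) :
    0 ≤ gfun q p β ν₀ ρ O x t := by
  unfold gfun
  split_ifs
  exacts [hfun_nonneg hβ t, ffun_nonneg hβ hν t]

lemma criticalPenalization_gfun (μ : Measure (En N)) (hq : 1 ≤ q) (hqp : q < p - 1) (hβ : 0 ≤ β)
    (hν : 0 ≤ ν₀) (hρ : 0 ≤ ρ) (hρeq : hSlope q p β ρ = ν₀) (hO : MeasurableSet O) :
    CriticalPenalization μ O p ν₀ (gfun q p β ν₀ ρ O) where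
  nonneg _ := gfun_nonneg hβ hν _ _
  le_mul hx ht := by
    rw [gfun, if_neg hx]
    exact ffun_le_mul hq (by linarith) hβ hρ hρeq ht
  rpow_le hx ht := by
    rw [gfun, if_pos hx, hfun_of_nonneg (by linarith) (by linarith) ht]
    exact le_add_of_nonneg_left (by positivity)
  exists_le_add hη := by
    obtain ⟨C, hC, hle⟩ := exists_mul_rpow_le_add hq hqp hβ hη
    refine ⟨C, hC, fun x hx t ht => ?_⟩
    rw [gfun, if_pos hx, hfun_of_nonneg (by linarith) (by linarith) ht]
    linarith [hle t ht]
  aestronglyMeasurable hu :=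
    (measurable_gfun_comp hq (by linarith) hρeq hO hu).aestronglyMeasurable

lemma Gfun_le_of_mem {x : En N} {t : ℝ} (hq : 1 ≤ q) (hqp : q ≤ p - 1) (hx : x ∈ O)
    (ht : 0 ≤ t) :
    Gfun q p β ν₀ ρ O x t ≤ 1 / (q + 1) * (gfun q p β ν₀ ρ O x t * t) := by
  rw [Gfun, gfun, if_pos hx, if_pos hx]
  exact Hfun_le hq (by linarith) hqp ht

lemma ambrosettiRabinowitz_gfun (μ : Measure (En N)) (hq : 1 ≤ q) (hqp : q ≤ p - 1) (hβ : 0 ≤ β)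
    (hν : 0 ≤ ν₀) (hρ : 0 ≤ ρ) (hρeq : hSlope q p β ρ = ν₀) (hO : MeasurableSet O) :
    AmbrosettiRabinowitz μ O (q + 1) (gfun q p β ν₀ ρ O) (Gfun q p β ν₀ ρ O) where
  primitive_nonneg ht := by
    unfold Gfun
    split_ifs
    exacts [intervalIntegral.integral_nonneg ht fun s _ => hfun_nonneg hβ s,
      intervalIntegral.integral_nonneg ht fun s _ => ffun_nonneg hβ hν s]
  primitive_le {x t} ht := by
    by_cases hx : x ∈ O
    · have := mul_nonneg (gfun_nonneg (q := q) (p := p) (ρ := ρ) (O := O) hβ hν x t) ht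
      refine (Gfun_le_of_mem hq hqp hx ht).trans ?_
      gcongr
      linarith
    · rw [Gfun, gfun, if_neg hx, if_neg hx]
      exact Ffun_le hq (by linarith) hβ hρ hρeq ht
  primitive_le_of_mem hx ht := Gfun_le_of_mem hq hqp hx ht
  aestronglyMeasurable_primitive hu :=
    (measurable_Gfun_comp hq (by linarith) hρeq hO hu).aestronglyMeasurable

end Penalization

section Functional

variable {N : ℕ} {q p β ν₀ ρ lam c : ℝ} {a b : En N → ℝ} {O : Set (En N)}

lemma energy_weightedVolume (lam : ℝ) (a b v : En N → ℝ) :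
    energy (weightedVolume N) (fun x => lam * a x + b x) v = nrmSq lam a b v :=
  integral_weightedVolume _

lemma action_weightedVolume (q p β ν₀ ρ lam : ℝ) (a b : En N → ℝ) (O : Set (En N))
    (v : En N → ℝ) :
    action (weightedVolume N) (fun x => lam * a x + b x) (Gfun q p β ν₀ ρ O) v =
      Phi q p β ν₀ ρ lam a b O v := by
  rw [action, energy_weightedVolume, integral_weightedVolume, Phi]

lemma actionDeriv_weightedVolume (q p β ν₀ ρ lam : ℝ) (a b : En N → ℝ) (O : Set (En N))
    (v φ : En N → ℝ) :
    actionDeriv (weightedVolume N) (fun x => lam * a x + b x) (gfun q p β ν₀ ρ O) v φ =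
      PhiD q p β ν₀ ρ lam a b O v φ := by
  rw [actionDeriv, energyForm, integral_weightedVolume, integral_weightedVolume, PhiD]
  simp only [mul_assoc]

lemma isNonnegPalaisSmale_weightedVolume {u : ℕ → En N → ℝ} {ε : ℕ → ℝ}
    (hu_nonneg : ∀ n x, 0 ≤ u n x) (hu_smooth : ∀ n, ContDiff ℝ 1 (u n))
    (hu_int : ∀ n, Integrable fun x =>
      Kw x * (‖gradient (u n) x‖ ^ 2 + (lam * a x + b x) * u n x ^ 2))
    (hPhi : Tendsto (fun n => Phi q p β ν₀ ρ lam a b O (u n)) atTop (𝓝 c))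
    (hε : Tendsto ε atTop (𝓝 0))
    (hPS : ∀ n, ∀ φ : En N → ℝ, ContDiff ℝ 1 φ →
      Integrable (fun x => Kw x * (‖gradient φ x‖ ^ 2 + (lam * a x + b x) * φ x ^ 2)) →
      |PhiD q p β ν₀ ρ lam a b O (u n) φ| ≤ ε n * √(nrmSq lam a b φ)) :
    IsNonnegPalaisSmale (weightedVolume N) (fun x => lam * a x + b x) (gfun q p β ν₀ ρ O)
      (Gfun q p β ν₀ ρ O) c atTop u where
  memH1 n := ⟨hu_smooth n, integrable_weightedVolume_iff.2 (hu_int n)⟩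
  nonneg := hu_nonneg
  tendsto_action := by simpa only [action_weightedVolume] using hPhi
  exists_isAlmostCritical := by
    refine ⟨fun n => |ε n|, fun n => abs_nonneg _, by simpa using hε.abs, fun n φ hφ => ?_⟩
    rw [actionDeriv_weightedVolume, energy_weightedVolume]
    refine (hPS n φ hφ.contDiff (integrable_weightedVolume_iff.1 hφ.integrable)).trans ?_
    gcongr
    exact le_abs_self _

end Functional


section PalaisSmaleCondition

theorem PS_condition_general {N : ℕ} (hN : 3 ≤ N) {q β ν₀ ρ lam m c : ℝ} (hq1 : 1 < q)
    (hq2 : q < twoStar N - 1) {a b : En N → ℝ} (ha_cont : Continuous a) (hb_cont : Continuous b)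
    (hm : 0 < m) (hab : ∀ x, m ≤ lam * a x + b x) {O : Set (En N)} (hO : IsOpen O)
    (hO_ne : O.Nonempty) (hO_bdd : Bornology.IsBounded O) (hβ : 0 ≤ β) (hρ : 0 ≤ ρ)
    (hρeq : β * ρ ^ (q - 1) + ρ ^ (twoStar N - 2) = ν₀)
    (hc : c ∈ Set.Ioo (0 : ℝ) ((1 / 2 - 1 / (q + 1)) * Sconst N ^ ((N : ℝ) / 2)))
    {u : ℕ → En N → ℝ} (hu_nonneg : ∀ n x, 0 ≤ u n x) (hu_smooth : ∀ n, ContDiff ℝ 1 (u n))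
    (hu_int : ∀ n, Integrable fun x =>
      Kw x * (‖gradient (u n) x‖ ^ 2 + (lam * a x + b x) * u n x ^ 2))
    (hPhi : Tendsto (fun n => Phi q (twoStar N) β ν₀ ρ lam a b O (u n)) atTop (𝓝 c))
    {ε : ℕ → ℝ} (hε : Tendsto ε atTop (𝓝 0))
    (hPS : ∀ n, ∀ φ : En N → ℝ, ContDiff ℝ 1 φ →
      Integrable (fun x => Kw x * (‖gradient φ x‖ ^ 2 + (lam * a x + b x) * φ x ^ 2)) →
      |PhiD q (twoStar N) β ν₀ ρ lam a b O (u n) φ| ≤ ε n * √(nrmSq lam a b φ)) :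
    ∃ σ : ℕ → ℕ, StrictMono σ ∧ ∀ ε' > (0 : ℝ), ∃ M : ℕ, ∀ m ≥ M, ∀ n ≥ M,
      √(nrmSq lam a b fun x => u (σ m) x - u (σ n) x) < ε' := by
  have hp := two_lt_twoStar hN
  have hS : 0 < Sconst N := Sconst_pos_of_pos_mul_rpow (by positivity) (hc.1.trans hc.2)
  have hν : 0 ≤ ν₀ := hρeq ▸ by positivity
  obtain ⟨σ, hσ, hlim⟩ :=
    (isNonnegPalaisSmale_weightedVolume hu_nonneg hu_smooth hu_int hPhi hε
      hPS).exists_subseq_tendsto_energy_sub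
      (criticalPenalization_gfun _ hq1.le hq2 hβ hν hρ hρeq hO.measurableSet)
      (ambrosettiRabinowitz_gfun _ hq1.le hq2.le hβ hν hρ hρeq hO.measurableSet)
      (sobolevInequality_weightedVolume hN hS) (confiningMeasure_weightedVolume N) hp hν
      (by linarith) hm hab (by fun_prop) hO hO_ne hO_bdd.measure_lt_top.ne hS
      (by rw [twoStar_div_sub_two hN]; exact hc.2)
  refine ⟨σ, hσ, fun ε' hε' => ?_⟩
  have h_sqrt := (Real.continuous_sqrt.tendsto' 0 0 Real.sqrt_zero).comp hlim
  simp only [energy_weightedVolume] at h_sqrt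
  obtain ⟨M, hM⟩ := (h_sqrt.eventually_lt_const hε').exists_forall_of_atTop
  exact ⟨M.1 ⊔ M.2, fun m hm n hn => hM (m, n) ⟨le_sup_left.trans hm, le_sup_right.trans hn⟩⟩

end PalaisSmaleCondition

/-- for `λ ≥ 1` and `c ∈ (0, (1/2 − 1/(q+1))S^{N/2})`, every
(PS)_c sequence for `Φ_λ` has a subsequence that is Cauchy in the `‖·‖_{K,λ}` norm,
i.e. converges strongly in `H^1_{K,λ}(ℝ^N)`. -/
theorem PS_condition {N k : ℕ} (hN : 3 ≤ N) (hk : 0 < k)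
    (q : ℝ) (hq1 : 1 < q) (hq2 : q < twoStar N - 1)
    (a b : En N → ℝ)
    (ha_cont : Continuous a) (ha_nonneg : ∀ x, 0 ≤ a x)
    (Ωs : Fin k → Set (En N))
    (hΩ_open : ∀ j, IsOpen (Ωs j))
    (hΩ_ne : ∀ j, (Ωs j).Nonempty)
    (hΩ_conn : ∀ j, IsConnected (Ωs j))
    (hΩ_sep : ∀ i j, i ≠ j → ∃ d > (0:ℝ), ∀ x ∈ Ωs i, ∀ y ∈ Ωs j, d ≤ dist x y)
    (hΩ_int : interior (a ⁻¹' {0}) = ⋃ j, Ωs j)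
    (hΩ_bdd : Bornology.IsBounded (⋃ j, Ωs j))
    (hΩ_cl : a ⁻¹' {0} = closure (⋃ j, Ωs j))
    (hb_cont : Continuous b) (M₁ : ℝ) (hM₁ : 0 < M₁) (hb_bdd : ∀ x, |b x| ≤ M₁)
    (M₀ : ℝ) (hM₀ : 0 < M₀) (hab : ∀ x, M₀ ≤ a x + b x)
    (Ωs' : Fin k → Set (En N))
    (hΩ'_open : ∀ j, IsOpen (Ωs' j))
    (hΩ'_bdd : ∀ j, Bornology.IsBounded (Ωs' j))
    (hΩ'_sub : ∀ j, closure (Ωs j) ⊆ Ωs' j)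
    (hΩ'_disj : ∀ i j, i ≠ j → closure (Ωs' i) ∩ closure (Ωs' j) = ∅)
    (Γ : Finset (Fin k)) (hΓ : Γ.Nonempty)
    (β : ℝ) (hβ : 0 < β) (ν₀ : ℝ) (hν₀ : 0 < ν₀) (ρ : ℝ) (hρ : 0 < ρ)
    (hρeq : β * ρ ^ (q - 1) + ρ ^ (twoStar N - 2) = ν₀)
    (lam : ℝ) (hlam : 1 ≤ lam)
    (c : ℝ) (hc : c ∈ Set.Ioo (0:ℝ) ((1/2 - 1/(q+1)) * Sconst N ^ ((N : ℝ) / 2)))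
    (u : ℕ → En N → ℝ)
    (hu_nonneg : ∀ n x, 0 ≤ u n x)
    (hu_smooth : ∀ n, ContDiff ℝ 1 (u n))
    (hu_int : ∀ n, Integrable (fun x =>
      Kw x * (‖gradient (u n) x‖ ^ 2 + (lam * a x + b x) * u n x ^ 2)))
    (hPhi : Tendsto (fun n => Phi q (twoStar N) β ν₀ ρ lam a b (⋃ j ∈ Γ, Ωs' j) (u n))
      atTop (𝓝 c))
    (ε : ℕ → ℝ) (hε : Tendsto ε atTop (𝓝 0))
    (hPS : ∀ n, ∀ φ : En N → ℝ, ContDiff ℝ 1 φ →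
      Integrable (fun x => Kw x * (‖gradient φ x‖ ^ 2 + (lam * a x + b x) * φ x ^ 2)) →
      |PhiD q (twoStar N) β ν₀ ρ lam a b (⋃ j ∈ Γ, Ωs' j) (u n) φ|
        ≤ ε n * Real.sqrt (nrmSq lam a b φ)) :
    ∃ σ : ℕ → ℕ, StrictMono σ ∧
      ∀ ε' > (0:ℝ), ∃ M : ℕ, ∀ m ≥ M, ∀ n ≥ M,
        Real.sqrt (nrmSq lam a b (fun x => u (σ m) x - u (σ n) x)) < ε' := by
  have hO_open : IsOpen (⋃ j ∈ Γ, Ωs' j) := isOpen_biUnion fun j _ => hΩ'_open j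
  have hO_bdd : Bornology.IsBounded (⋃ j ∈ Γ, Ωs' j) :=
    (Bornology.isBounded_biUnion Γ.finite_toSet).2 fun j _ => hΩ'_bdd j
  have hO_ne : (⋃ j ∈ Γ, Ωs' j).Nonempty :=
    Set.nonempty_biUnion.2 (hΓ.imp fun j hj => ⟨hj, (hΩ_ne j).closure.mono (hΩ'_sub j)⟩)
  have hab_lam (x : En N) : M₀ ≤ lam * a x + b x :=
    (hab x).trans (by gcongr; exact le_mul_of_one_le_left (ha_nonneg x) hlam)
  exact PS_condition_general hN hq1 hq2 ha_cont hb_cont hM₀ hab_lam hO_open hO_ne hO_bdd hβ.le hρ.le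
    hρeq hc hu_nonneg hu_smooth hu_int hPhi hε hPS
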